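/- arXiv:math/0407064 — 5 statements merged into one kernel-verified Lean document; each statement's English description precedes it below -/
import Mathlib

section
/- Let f ∈ ℂ[x₁,…,x_{n+1}] be a strongly tame polynomial of weighted degree d with homogenization F, let the monomials x^β, β ∈ I, be a ℂ-basis of V_g, and let b ∈ ℂ be a regular value of f (b ∉ f(Sing(f))). Then there exists a function β ∈ I ↦ d_β ∈ ℕ ∪ {0} such that the monomials x₀^{β₀}·x^β with β ∈ I and 0 ≤ β₀ ≤ d_β − 1 form a ℂ-basis of the vector space Ṽ := ℂ[x₀,x]/⟨∂F_b/∂x₀, ∂F_b/∂x₁, …, ∂F_b/∂x_{n+1}⟩, where F_b := F − b·x₀^d. -/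
open MvPolynomial

noncomputable section

/-- The homogenization `F = Σ_{i=0}^d fᵢ·x₀^{d-i}` of `f`. -/
def homogenization (n d : ℕ) (α : Fin (n + 1) → ℕ)
    (f : MvPolynomial (Fin (n + 1)) ℂ) : MvPolynomial (Fin (n + 2)) ℂ :=
  ∑ i ∈ Finset.range (d + 1),
    rename Fin.succ (weightedHomogeneousComponent α i f) * X 0 ^ (d - i)

/-- The ideal generated by all partial derivatives `∂F_b/∂x₀, …, ∂F_b/∂x_{n+1}` of
`F_b = F - b·x₀^d`. -/
def fullJacobianIdeal (n d : ℕ) (α : Fin (n + 1) → ℕ)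
    (f : MvPolynomial (Fin (n + 1)) ℂ) (b : ℂ) : Ideal (MvPolynomial (Fin (n + 2)) ℂ) :=
  Ideal.span (Set.range fun i : Fin (n + 2) =>
    pderiv i (homogenization n d α f - C b * X 0 ^ d))


lemma greedy_aux {A ι : Type*} [CommRing A] [Algebra ℂ A] (t : A) (e : ι → A)
    (N : ℕ) (hN : t ^ N = 0) (s : Finset ι) :
    ∃ d : ι → ℕ,
      LinearIndepOn ℂ (fun p : ι × ℕ => t ^ p.2 * e p.1) {p | p.1 ∈ s ∧ p.2 < d p.1} ∧
      ∀ b ∈ s, ∀ k, t ^ k * e b ∈ Submodule.span ℂ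
        ((fun p : ι × ℕ => t ^ p.2 * e p.1) '' {p | p.1 ∈ s ∧ p.2 < d p.1}) := by
  classical
  induction s using Finset.induction_on with
  | empty => exact ⟨fun _ => 0, by simp, by simp⟩
  | insert b s hb ih =>
    obtain ⟨d, hd, hs⟩ := ih
    set v : ι × ℕ → A := fun p => t ^ p.2 * e p.1 with hv
    set P : ℕ → Set (ι × ℕ) := fun k => {p | p.1 ∈ s ∧ p.2 < d p.1} ∪ {p | p.1 = b ∧ p.2 < k} with hP
    have hP0 : P 0 = {p | p.1 ∈ s ∧ p.2 < d p.1} := by simp [hP]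
    have hPs : ∀ k, P (k+1) = insert (b, k) (P k) := by
      intro k; ext ⟨x, y⟩
      simp only [hP, Set.mem_union, Set.mem_ofPred_eq, Set.mem_insert_iff, Prod.mk.injEq,
        Nat.lt_succ_iff_lt_or_eq]
      tauto
    have hmono : ∀ k, Submodule.span ℂ (v '' P 0) ≤ Submodule.span ℂ (v '' P k) := by
      intro k
      apply Submodule.span_mono
      apply Set.image_mono
      rw [hP0]; exact Set.subset_union_left
    have hex : ∃ k, v (b, k) ∈ Submodule.span ℂ (v '' P k) := ⟨N, by simp [hv, hN]⟩
    set m := Nat.find hex with hm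
    have hind : ∀ k ≤ m, LinearIndepOn ℂ v (P k) := by
      intro k
      induction k with
      | zero => intro _; rw [hP0]; exact hd
      | succ k ih =>
        intro hk
        rw [hPs]
        exact (ih (by omega)).insert (Nat.find_min hex (by omega))
    have hset : {p : ι × ℕ | p.1 ∈ insert b s ∧ p.2 < (Function.update d b m) p.1} = P m := by
      ext ⟨x, y⟩
      simp only [hP, Set.mem_union, Set.mem_ofPred_eq, Finset.mem_insert]
      by_cases hx : x = b
      · subst hx; simp [hb]
      · simp [hx]
    have hinv : ∀ a ∈ Submodule.span ℂ (v '' P m), t * a ∈ Submodule.span ℂ (v '' P m) := by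
      intro a ha
      induction ha using Submodule.span_induction with
      | mem x hx =>
        obtain ⟨⟨c, k⟩, hp, rfl⟩ := hx
        have e1 : t * v (c, k) = v (c, k+1) := by simp only [hv]; ring
        rw [e1]
        rcases hp with hp | hp
        · apply hmono m
          rw [hP0]
          exact hs c hp.1 (k+1)
        · obtain ⟨h1, h2⟩ := hp
          simp only at h1 h2
          subst h1
          rcases Nat.lt_or_ge (k+1) m with h | h
          · exact Submodule.subset_span ⟨(c, k+1), Or.inr ⟨rfl, h⟩, rfl⟩
          · have : k + 1 = m := by omega
            rw [this]
            exact Nat.find_spec hex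
      | zero => simp
      | add x y _ _ hx hy => rw [mul_add]; exact add_mem hx hy
      | smul c x _ hx => rw [mul_smul_comm]; exact Submodule.smul_mem _ _ hx
    refine ⟨Function.update d b m, ?_, ?_⟩
    · rw [hset]; exact hind m le_rfl
    · rw [hset]
      intro c hc k
      rcases Finset.mem_insert.1 hc with rfl | hc
      · induction k with
        | zero =>
          rcases Nat.eq_zero_or_pos m with h | h
          · have := Nat.find_spec hex
            rw [← hm, h] at this
            rw [h]
            exact this
          · exact Submodule.subset_span ⟨(c, 0), Or.inr ⟨rfl, h⟩, rfl⟩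
        | succ k ih =>
          have := hinv _ ih
          rwa [← mul_assoc, ← pow_succ'] at this
      · apply hmono m
        rw [hP0]
        exact hs c hc k

lemma greedy {A ι : Type*} [CommRing A] [Algebra ℂ A] (t : A) (e : ι → A)
    (N : ℕ) (hN : t ^ N = 0) (s : Finset ι)
    (hspan : ∀ a : A, ∃ u ∈ Submodule.span ℂ (e '' s), ∃ c, a = u + t * c) :
    ∃ d : ι → ℕ,
      LinearIndependent ℂ (fun p : {p : ι × ℕ // p.1 ∈ s ∧ p.2 < d p.1} =>
        t ^ (p : ι × ℕ).2 * e (p : ι × ℕ).1) ∧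
      Submodule.span ℂ (Set.range fun p : {p : ι × ℕ // p.1 ∈ s ∧ p.2 < d p.1} =>
        t ^ (p : ι × ℕ).2 * e (p : ι × ℕ).1) = ⊤ := by
  obtain ⟨d, hd, hs⟩ := greedy_aux t e N hN s
  refine ⟨d, hd, ?_⟩
  have hr : (Set.range fun p : {p : ι × ℕ // p.1 ∈ s ∧ p.2 < d p.1} =>
        t ^ (p : ι × ℕ).2 * e (p : ι × ℕ).1) =
      ((fun p : ι × ℕ => t ^ p.2 * e p.1) '' {p | p.1 ∈ s ∧ p.2 < d p.1}) := by
    rw [Set.image_eq_range]; rfl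
  rw [hr, eq_top_iff]
  set U := Submodule.span ℂ ((fun p : ι × ℕ => t ^ p.2 * e p.1) '' {p | p.1 ∈ s ∧ p.2 < d p.1})
  have hu : ∀ k, ∀ u ∈ Submodule.span ℂ (e '' s), t ^ k * u ∈ U := by
    intro k u hu
    induction hu using Submodule.span_induction with
    | mem x hx => obtain ⟨b, hb, rfl⟩ := hx; exact hs b hb k
    | zero => simp
    | add x y _ _ hx hy => rw [mul_add]; exact add_mem hx hy
    | smul c x _ hx => rw [mul_smul_comm]; exact Submodule.smul_mem _ _ hx
  have key : ∀ k, ∀ a : A, t ^ (N - k) * a ∈ U := by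
    intro k
    induction k with
    | zero => intro a; simp [hN]
    | succ k ih =>
      intro a
      rcases Nat.lt_or_ge k N with h | h
      · obtain ⟨u, hu', c, rfl⟩ := hspan a
        rw [mul_add, ← mul_assoc, ← pow_succ]
        refine add_mem (hu _ u hu') ?_
        have : N - (k+1) + 1 = N - k := by omega
        rw [this]; exact ih c
      · have : N - (k+1) = N - k := by omega
        rw [this]; exact ih a
  intro a _
  simpa using key N a

lemma sum_comp_range {n d : ℕ} {α : Fin (n + 1) → ℕ} {f : MvPolynomial (Fin (n + 1)) ℂ}
    (hd : weightedTotalDegree α f = d) :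
    ∑ i ∈ Finset.range (d + 1), weightedHomogeneousComponent α i f = f := by
  ext m
  rw [coeff_sum]
  simp_rw [coeff_weightedHomogeneousComponent]
  rw [Finset.sum_ite_eq]
  split_ifs with h
  · rfl
  · by_contra hne
    apply h
    have := le_weightedTotalDegree α (φ := f) (d := m) (mem_support_iff.2 (Ne.symm hne))
    simp; omega

/-- the substitution x₀ ↦ s, x_i ↦ s^{α_i} x_i -/
def subst (n : ℕ) (α : Fin (n + 1) → ℕ) (s : ℂ) :
    MvPolynomial (Fin (n + 2)) ℂ →ₐ[ℂ] MvPolynomial (Fin (n + 1)) ℂ :=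
  aeval (Fin.cons (C s) (fun i => C (s ^ α i) * X i))

lemma subst_rename {n i : ℕ} {α : Fin (n + 1) → ℕ} (s : ℂ) {p : MvPolynomial (Fin (n + 1)) ℂ}
    (hp : p.IsWeightedHomogeneous α i) :
    subst n α s (rename Fin.succ p) = C (s ^ i) * p := by
  induction hp using IsWeightedHomogeneous.induction_on with
  | zero => simp
  | add p q _ _ hp hq => rw [map_add, map_add, hp, hq, mul_add]
  | monomial m r hm =>
    rw [subst, aeval_rename, aeval_monomial]
    subst hm
    rw [monomial_eq, Finsupp.weight_apply]
    simp only [Function.comp_apply, Fin.cons_succ, mul_pow, algebraMap_eq, smul_eq_mul]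
    rw [Finsupp.prod_mul, Finsupp.sum, ← Finset.prod_pow_eq_pow_sum]
    simp only [Finsupp.prod, map_prod, ← map_pow, ← pow_mul]
    simp only [mul_comm (α _)]
    ring

lemma subst_hom {n d : ℕ} {α : Fin (n + 1) → ℕ} {f : MvPolynomial (Fin (n + 1)) ℂ}
    (hd : weightedTotalDegree α f = d) (s b : ℂ) :
    subst n α s (homogenization n d α f - C b * X 0 ^ d) = C (s ^ d) * (f - C b) := by
  have h0 : subst n α s (X 0) = C s := by simp [subst]
  have hC : subst n α s (C b) = C b := by simp [subst]
  rw [map_sub, map_mul, map_pow, h0, hC, homogenization, map_sum]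
  have : ∀ i ∈ Finset.range (d+1), subst n α s
      (rename Fin.succ (weightedHomogeneousComponent α i f) * X 0 ^ (d - i))
      = C (s ^ d) * weightedHomogeneousComponent α i f := by
    intro i hi
    have hi' : i + (d - i) = d := by simp at hi; omega
    rw [map_mul, map_pow, h0, subst_rename s (weightedHomogeneousComponent_isWeightedHomogeneous i f)]
    conv_rhs => rw [← hi', pow_add]
    simp only [map_mul, map_pow]
    ring
  rw [Finset.sum_congr rfl this, ← Finset.mul_sum, sum_comp_range hd, map_pow]
  ring

lemma pderiv_subst {n : ℕ} (α : Fin (n + 1) → ℕ) (s : ℂ) (i : Fin (n + 1))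
    (p : MvPolynomial (Fin (n + 2)) ℂ) :
    pderiv i (subst n α s p) = C (s ^ α i) * subst n α s (pderiv i.succ p) := by
  induction p using MvPolynomial.induction_on with
  | C a => simp [subst]
  | add p q hp hq => simp only [map_add, hp, hq, mul_add]
  | mul_X p j h =>
    have hX : pderiv i (subst n α s (X j)) = C (s ^ α i) * subst n α s (pderiv i.succ (X j)) := by
      refine Fin.cases ?_ (fun k => ?_) j
      · simp [subst, pderiv_X]
      · by_cases hk : k = i
        · subst hk; simp [subst]
        · simp [subst, pderiv_X_of_ne hk, pderiv_X_of_ne (show k.succ ≠ i.succ by simpa using hk)]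
    rw [map_mul, Derivation.leibniz, Derivation.leibniz, h, hX]
    simp only [smul_eq_mul, map_add, map_mul]
    ring

lemma rename_wh {n i : ℕ} {α : Fin (n + 1) → ℕ} {p : MvPolynomial (Fin (n + 1)) ℂ}
    (hp : p.IsWeightedHomogeneous α i) :
    (rename Fin.succ p).IsWeightedHomogeneous (Fin.cons 1 α : Fin (n + 2) → ℕ) i := by
  induction hp using IsWeightedHomogeneous.induction_on with
  | zero => simpa using isWeightedHomogeneous_zero _ _ _
  | add p q _ _ hp hq => rw [map_add]; exact hp.add hq
  | monomial m r hm =>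
    rw [rename_monomial]
    apply isWeightedHomogeneous_monomial
    rw [← hm, Finsupp.weight_apply, Finsupp.weight_apply, Finsupp.sum_mapDomain_index]
    · simp
    · simp
    · intros; simp [add_mul]

lemma hom_wh (n d : ℕ) (α : Fin (n + 1) → ℕ) (f : MvPolynomial (Fin (n + 1)) ℂ) (b : ℂ) :
    (homogenization n d α f - C b * X 0 ^ d).IsWeightedHomogeneous
      (Fin.cons 1 α : Fin (n + 2) → ℕ) d := by
  have hX : ∀ k, ((X 0 : MvPolynomial (Fin (n + 2)) ℂ) ^ k).IsWeightedHomogeneous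
      (Fin.cons 1 α : Fin (n + 2) → ℕ) k := by
    intro k
    simpa using (isWeightedHomogeneous_X ℂ (Fin.cons 1 α : Fin (n + 2) → ℕ) 0).pow k
  refine IsWeightedHomogeneous.sub ?_ ((hX d).C_mul b)
  apply IsWeightedHomogeneous.sum
  intro i hi
  have hi' : i + (d - i) = d := by simp at hi; omega
  have := (rename_wh (weightedHomogeneousComponent_isWeightedHomogeneous i f)).mul (hX (d - i))
  rwa [hi'] at this

lemma zero_locus {n d : ℕ} {α : Fin (n + 1) → ℕ} {f : MvPolynomial (Fin (n + 1)) ℂ}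
    (hd : weightedTotalDegree α f = d) (hd0 : d ≠ 0) (b : ℂ)
    (hb : b ∉ (fun x => eval x f) '' {x : Fin (n + 1) → ℂ | ∀ i, eval x (pderiv i f) = 0})
    (x : Fin (n + 2) → ℂ)
    (hx : ∀ i, eval x (pderiv i (homogenization n d α f - C b * X 0 ^ d)) = 0) :
    x 0 = 0 := by
  by_contra hs
  set s := x 0 with hsdef
  set y : Fin (n + 1) → ℂ := fun i => x i.succ / s ^ α i with hy
  have hev : ∀ p, eval y (subst n α s p) = eval x p := by
    intro p
    induction p using MvPolynomial.induction_on with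
    | C a => simp [subst]
    | add p q hp hq => simp only [map_add, hp, hq]
    | mul_X p j h =>
      rw [map_mul, map_mul, map_mul, h]
      congr 1
      refine Fin.cases ?_ (fun k => ?_) j
      · simp [subst, hsdef]
      · simp only [subst, aeval_X, Fin.cons_succ, map_mul, eval_C, eval_X, hy]
        field_simp
  have hF : eval x (homogenization n d α f - C b * X 0 ^ d) = 0 := by
    have := congrArg (eval x) (hom_wh n d α f b).sum_weight_X_mul_pderiv
    rw [map_sum, map_nsmul, Finset.sum_eq_zero] at this
    · simpa [hd0] using this.symm
    · intro i _
      rw [map_nsmul, map_mul, hx i]; simp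
  apply hb
  refine ⟨y, ?_, ?_⟩
  · intro i
    have h1 := pderiv_subst α s i (homogenization n d α f - C b * X 0 ^ d)
    rw [subst_hom hd] at h1
    have h2 := congrArg (eval y) h1
    rw [map_mul (eval y) (C (s ^ α i)), hev, hx] at h2
    simpa [pderiv_C_mul, hs] using h2
  · have h2 := hev (homogenization n d α f - C b * X 0 ^ d)
    rw [subst_hom hd, hF] at h2
    simp [hs] at h2
    simpa [sub_eq_zero] using h2

lemma X_pow_mem {n d : ℕ} {α : Fin (n + 1) → ℕ} {f : MvPolynomial (Fin (n + 1)) ℂ}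
    (hd : weightedTotalDegree α f = d) (hd0 : d ≠ 0) (b : ℂ)
    (hb : b ∉ (fun x => eval x f) '' {x : Fin (n + 1) → ℂ | ∀ i, eval x (pderiv i f) = 0}) :
    ∃ N : ℕ, (X 0 : MvPolynomial (Fin (n + 2)) ℂ) ^ N ∈ fullJacobianIdeal n d α f b := by
  have : (X 0 : MvPolynomial (Fin (n + 2)) ℂ) ∈ (fullJacobianIdeal n d α f b).radical := by
    rw [← vanishingIdeal_zeroLocus_eq_radical (K := ℂ)]
    rw [mem_vanishingIdeal_iff]
    intro x hx
    rw [aeval_X]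
    refine zero_locus hd hd0 b hb x (fun i => ?_)
    have := hx _ (Ideal.subset_span ⟨i, rfl⟩)
    simpa [aeval_eq_eval] using this
  exact this

lemma exists_low {n : ℕ} (p : MvPolynomial (Fin (n + 2)) ℂ) :
    ∃ q r, p = rename Fin.succ q + X 0 * r := by
  induction p using MvPolynomial.induction_on with
  | C a => exact ⟨C a, 0, by simp⟩
  | add p q hp hq =>
    obtain ⟨q1, r1, h1⟩ := hp
    obtain ⟨q2, r2, h2⟩ := hq
    exact ⟨q1 + q2, r1 + r2, by rw [h1, h2, map_add]; ring⟩
  | mul_X p j h =>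
    obtain ⟨q1, r1, h1⟩ := h
    refine Fin.cases ?_ (fun k => ?_) j
    · exact ⟨0, p, by rw [map_zero]; ring⟩
    · exact ⟨q1 * X k, r1 * X k.succ, by rw [h1, map_mul, rename_X]; ring⟩

lemma hom_low {n d : ℕ} (α : Fin (n + 1) → ℕ) (f : MvPolynomial (Fin (n + 1)) ℂ)
    (hd0 : d ≠ 0) (b : ℂ) :
    ∃ r, homogenization n d α f - C b * X 0 ^ d =
      rename Fin.succ (weightedHomogeneousComponent α d f) + X 0 * r := by
  have h : X 0 ∣ homogenization n d α f - C b * X 0 ^ d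
      - rename Fin.succ (weightedHomogeneousComponent α d f) := by
    rw [homogenization, Finset.sum_range_succ]
    have e : ∀ A B D : MvPolynomial (Fin (n + 2)) ℂ, A + B * X 0 ^ (d - d) - D - B = A - D := by
      intro A B D; simp; ring
    rw [e]
    refine dvd_sub (Finset.dvd_sum fun i hi => ?_) ?_
    · have : d - i ≠ 0 := by simp at hi; omega
      exact (dvd_pow_self _ this).mul_left _
    · exact (dvd_pow_self _ hd0).mul_left _
  obtain ⟨r, hr⟩ := h
  exact ⟨r, by rw [← hr]; ring⟩

lemma pderiv_low {n d : ℕ} (α : Fin (n + 1) → ℕ) (f : MvPolynomial (Fin (n + 1)) ℂ)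
    (hd0 : d ≠ 0) (b : ℂ) (i : Fin (n + 1)) :
    ∃ r, rename Fin.succ (pderiv i (weightedHomogeneousComponent α d f)) - X 0 * r ∈
      fullJacobianIdeal n d α f b := by
  obtain ⟨r, hr⟩ := hom_low α f hd0 b
  refine ⟨-pderiv i.succ r, ?_⟩
  have h : pderiv i.succ (homogenization n d α f - C b * X 0 ^ d) ∈
    fullJacobianIdeal n d α f b := Ideal.subset_span ⟨i.succ, rfl⟩
  have hX : pderiv i.succ (X 0 : MvPolynomial (Fin (n + 2)) ℂ) = 0 :=
    pderiv_X_of_ne (Fin.succ_ne_zero i).symm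
  rw [hr, map_add, Derivation.leibniz, hX, pderiv_rename (Fin.succ_injective _)] at h
  convert h using 1
  simp

lemma ideal_low {n d : ℕ} (α : Fin (n + 1) → ℕ) (f : MvPolynomial (Fin (n + 1)) ℂ)
    (hd0 : d ≠ 0) (b : ℂ) (p : MvPolynomial (Fin (n + 1)) ℂ)
    (hp : p ∈ Ideal.span (Set.range fun i =>
      pderiv i (weightedHomogeneousComponent α d f))) :
    ∃ r, rename Fin.succ p - X 0 * r ∈ fullJacobianIdeal n d α f b := by
  induction hp using Submodule.span_induction with
  | mem x hx => obtain ⟨i, rfl⟩ := hx; exact pderiv_low α f hd0 b i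
  | zero => exact ⟨0, by simp⟩
  | add x y _ _ hx hy =>
    obtain ⟨r1, h1⟩ := hx
    obtain ⟨r2, h2⟩ := hy
    refine ⟨r1 + r2, ?_⟩
    have := add_mem h1 h2
    rw [map_add]
    convert this using 1
    ring
  | smul c x _ hx =>
    obtain ⟨r1, h1⟩ := hx
    refine ⟨rename Fin.succ c * r1, ?_⟩
    have := Ideal.mul_mem_left _ (rename Fin.succ c) h1
    rw [smul_eq_mul, map_mul]
    convert this using 1
    ring

/-- Let `f` be strongly tame of weighted degree `d` with homogenization `F`,
let the monomials `x^β`, `β ∈ I`, be a ℂ-basis of `V_g` and let `b` be a regular value of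
`f`.  Then there is a map `β ↦ d_β ∈ ℕ ∪ {0}` such that the monomials `x₀^{β₀}·x^β` with
`β ∈ I`, `0 ≤ β₀ ≤ d_β - 1`, form a ℂ-basis of
`Ṽ = ℂ[x₀,x]/⟨∂F_b/∂x₀, …, ∂F_b/∂x_{n+1}⟩` where `F_b = F - b·x₀^d`. -/
theorem exists_dbeta_basis
    (n : ℕ) (hn : 1 ≤ n) (α : Fin (n + 1) → ℕ)
    (hαpos : ∀ i, 0 < α i) (hα : Finset.univ.gcd α = 1)
    (f : MvPolynomial (Fin (n + 1)) ℂ) (d : ℕ)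
    (hd : MvPolynomial.weightedTotalDegree α f = d)
    (g : MvPolynomial (Fin (n + 1)) ℂ)
    (hg : g = weightedHomogeneousComponent α d f)
    (hg0 : g ≠ 0)
    (htame : ∀ x : Fin (n + 1) → ℂ, (∀ i, eval x (pderiv i g) = 0) → x = 0)
    (I : Finset (Fin (n + 1) →₀ ℕ))
    (hIindep : LinearIndependent ℂ (fun β : I =>
      Ideal.Quotient.mk (Ideal.span (Set.range fun i => pderiv i g))
        (monomial (β : Fin (n + 1) →₀ ℕ) (1 : ℂ))))
    (hIspan : Submodule.span ℂ (Set.range fun β : I =>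
      Ideal.Quotient.mk (Ideal.span (Set.range fun i => pderiv i g))
        (monomial (β : Fin (n + 1) →₀ ℕ) (1 : ℂ))) = ⊤)
    (b : ℂ)
    (hb : b ∉ (fun x => eval x f) '' {x : Fin (n + 1) → ℂ | ∀ i, eval x (pderiv i f) = 0}) :
    ∃ dβ : (Fin (n + 1) →₀ ℕ) → ℕ,
      LinearIndependent ℂ
        (fun p : {p : (Fin (n + 1) →₀ ℕ) × ℕ // p.1 ∈ I ∧ p.2 < dβ p.1} =>
          Ideal.Quotient.mk (fullJacobianIdeal n d α f b)
            (X 0 ^ (p : (Fin (n + 1) →₀ ℕ) × ℕ).2 *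
              rename Fin.succ (monomial (p : (Fin (n + 1) →₀ ℕ) × ℕ).1 (1 : ℂ)))) ∧
      Submodule.span ℂ
        (Set.range fun p : {p : (Fin (n + 1) →₀ ℕ) × ℕ // p.1 ∈ I ∧ p.2 < dβ p.1} =>
          Ideal.Quotient.mk (fullJacobianIdeal n d α f b)
            (X 0 ^ (p : (Fin (n + 1) →₀ ℕ) × ℕ).2 *
              rename Fin.succ (monomial (p : (Fin (n + 1) →₀ ℕ) × ℕ).1 (1 : ℂ)))) = ⊤ := by
  have hd0 : d ≠ 0 := by
    intro h0
    have hc : g.IsWeightedHomogeneous α 0 := by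
      rw [hg, h0]; exact weightedHomogeneousComponent_isWeightedHomogeneous 0 f
    have hgC : g = C (coeff 0 g) := by
      ext m
      rw [coeff_C]
      split_ifs with hm
      · rw [← hm]
      · by_contra hne
        have hw := hc hne
        rw [Finsupp.weight_apply, Finsupp.sum, Finset.sum_eq_zero_iff] at hw
        apply hm
        symm
        ext i
        by_contra hi
        have := hw i (Finsupp.mem_support_iff.2 hi)
        have := hαpos i
        simp_all
    have h1 := htame (fun _ => 1) (fun i => by rw [hgC]; simp)
    exact one_ne_zero (congrFun h1 0)
  obtain ⟨N, hN⟩ := X_pow_mem (α := α) hd hd0 b hb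
  have := greedy (A := MvPolynomial (Fin (n + 2)) ℂ ⧸ fullJacobianIdeal n d α f b)
    (Ideal.Quotient.mk _ (X 0))
    (fun β : Fin (n + 1) →₀ ℕ => Ideal.Quotient.mk _ (rename Fin.succ (monomial β (1 : ℂ))))
    N (by rw [← map_pow]; exact Ideal.Quotient.eq_zero_iff_mem.2 hN) I ?_
  · simpa only [map_mul, map_pow] using this
  · intro a
    obtain ⟨p, rfl⟩ := Ideal.Quotient.mk_surjective a
    obtain ⟨q, r, rfl⟩ := exists_low p
    have hq : ∃ q' ∈ Submodule.span ℂ ((fun β : Fin (n + 1) →₀ ℕ => monomial β (1 : ℂ)) '' I),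
        q - q' ∈ Ideal.span (Set.range fun i => pderiv i g) := by
      have h1 : Ideal.Quotient.mk (Ideal.span (Set.range fun i => pderiv i g)) q ∈
          Submodule.span ℂ (Set.range fun β : I =>
            Ideal.Quotient.mk (Ideal.span (Set.range fun i => pderiv i g))
              (monomial (β : Fin (n + 1) →₀ ℕ) (1 : ℂ))) := by rw [hIspan]; trivial
      have h2 : (Set.range fun β : I =>
            Ideal.Quotient.mk (Ideal.span (Set.range fun i => pderiv i g))
              (monomial (β : Fin (n + 1) →₀ ℕ) (1 : ℂ))) =
          (Ideal.Quotient.mkₐ ℂ (Ideal.span (Set.range fun i => pderiv i g))).toLinearMap ''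
            ((fun β : Fin (n + 1) →₀ ℕ => monomial β (1 : ℂ)) '' I) := by
        rw [Set.image_image, Set.image_eq_range]; rfl
      rw [h2, ← Submodule.map_span] at h1
      obtain ⟨q', hq', he⟩ := h1
      exact ⟨q', hq', Ideal.Quotient.eq.1 he.symm⟩
    obtain ⟨q', hq', hmem⟩ := hq
    rw [hg] at hmem
    obtain ⟨r', hr'⟩ := ideal_low α f hd0 b _ hmem
    refine ⟨Ideal.Quotient.mk _ (rename Fin.succ q'), ?_, Ideal.Quotient.mk _ (r + r'), ?_⟩
    · have h3 := Submodule.mem_map_of_mem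
        (f := ((Ideal.Quotient.mkₐ ℂ (fullJacobianIdeal n d α f b)).comp
          (rename Fin.succ)).toLinearMap) hq'
      rw [Submodule.map_span, Set.image_image] at h3
      exact h3
    · rw [← map_mul, ← map_add, Ideal.Quotient.eq]
      rw [map_sub] at hr'
      convert hr' using 1
      ring
end
end

section
/- Let f ∈ ℂ[x₁,…,x_{n+1}] be a strongly tame polynomial of weighted degree d with homogenization F, let μ := dim_ℂ V_g, and let b ∈ ℂ be a regular value of f. Then dim_ℂ ℂ[x₀,x]/⟨∂F_b/∂x₀, ∂F_b/∂x₁, …, ∂F_b/∂x_{n+1}⟩ = (d − 1)·μ, where F_b := F − b·x₀^d. Consequently, any function β ↦ d_β such that the monomials x₀^{β₀}x^β, β ∈ I, 0 ≤ β₀ ≤ d_β − 1, form a ℂ-basis of this quotient satisfies Σ_{β∈I} d_β = (d − 1)·μ. -/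
open MvPolynomial

noncomputable section

/-- Koszul syzygies are trivial. -/
def KozP (R : Type) [CommRing R] (M : Type) [AddCommGroup M] [Module R M] (m : ℕ)
    (h : Fin m → R) : Prop :=
  ∀ q : Fin m → M, ∑ i, h i • q i = 0 → ∃ s : Fin m → Fin m → M,
    (∀ i j, s i j = - s j i) ∧ ∀ i, q i = ∑ j, h j • s i j

lemma koz_alt {R : Type} [CommRing R] {M : Type} [AddCommGroup M] [Module R M]
    (half : R) (hh : half * 2 = 1) {m : ℕ} (h : Fin m → R) (s : Fin m → Fin m → M)
    (hs : ∀ i j, s i j = - s j i) : ∑ i, h i • ∑ j, h j • s i j = 0 := by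
  have h1 : ∑ i, h i • ∑ j, h j • s i j = - ∑ i, h i • ∑ j, h j • s i j := by
    conv_lhs => simp only [Finset.smul_sum]; rw [Finset.sum_comm]
    simp only [Finset.smul_sum, ← Finset.sum_neg_distrib]
    refine Finset.sum_congr rfl fun i _ => Finset.sum_congr rfl fun j _ => ?_
    rw [hs j i, smul_neg, smul_neg, smul_comm]
  set x := ∑ i, h i • ∑ j, h j • s i j
  have h2 : (2 : R) • x = 0 := by rw [two_smul]; nth_rewrite 2 [h1]; simp
  calc x = (half * 2) • x := by rw [hh, one_smul]
    _ = 0 := by rw [mul_smul, h2, smul_zero]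

open Pointwise in
lemma koz_of_quot {R : Type} [CommRing R] {M : Type} [AddCommGroup M] [Module R M]
    (half : R) (hh : half * 2 = 1) {m : ℕ} (h : Fin (m + 1) → R) (hr : IsSMulRegular M (h 0))
    (hK : KozP R (QuotSMulTop (h 0) M) m (fun i => h i.succ)) : KozP R M (m + 1) h := by
  intro q hq
  rw [Fin.sum_univ_succ] at hq
  let π : M →ₗ[R] QuotSMulTop (h 0) M := Submodule.mkQ _
  have hπ0 : ∀ x, π (h 0 • x) = 0 := fun x => by
    simp only [π, Submodule.mkQ_apply, Submodule.Quotient.mk_eq_zero]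
    exact Submodule.smul_mem_pointwise_smul _ _ _ trivial
  have hker : ∀ x, π x = 0 → ∃ y, x = h 0 • y := fun x hx => by
    simp only [π, Submodule.mkQ_apply, Submodule.Quotient.mk_eq_zero] at hx
    obtain ⟨y, -, hy⟩ := (Submodule.mem_smul_pointwise_iff_exists _ _ _).mp hx
    exact ⟨y, hy.symm⟩
  have hsurj : Function.Surjective π := Submodule.mkQ_surjective _
  obtain ⟨s, hs, hs'⟩ := hK (fun i => π (q i.succ)) (by
    have := congrArg π hq
    simpa [hπ0] using this)
  choose σ hσ using hsurj
  let s' : Fin m → Fin m → M := fun i j => half • (σ (s i j) - σ (s j i))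
  have hs'1 : ∀ i j, s' i j = - s' j i := fun i j => by
    simp only [s']; rw [← smul_neg, neg_sub]
  have hs'2 : ∀ i j, π (s' i j) = s i j := fun i j => by
    simp only [s', map_smul, map_sub, hσ]
    rw [hs j i, sub_neg_eq_add, ← two_smul R, ← mul_smul, hh, one_smul]
  have h3 : ∀ i, ∃ t, q (Fin.succ i) - ∑ j, h j.succ • s' i j = h 0 • t := fun i =>
    hker _ (by simp only [map_sub, map_sum, map_smul, hs'2]; rw [hs' i, sub_self])
  choose t ht using h3
  have ht' : ∀ i : Fin m, q i.succ = h 0 • t i + ∑ j, h (Fin.succ j) • s' i j := fun i => by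
    rw [← ht i, sub_add_cancel]
  have h4 : q 0 = - ∑ i : Fin m, h i.succ • t i := by
    have e : h 0 • (q 0 + ∑ i : Fin m, h i.succ • t i) = h 0 • 0 := by
      simp only [ht', smul_add, Finset.sum_add_distrib, koz_alt half hh (fun i => h (Fin.succ i)) s' hs'1,
        add_zero] at hq
      rw [smul_zero, smul_add, Finset.smul_sum, ← hq]
      congr 1
      exact Finset.sum_congr rfl fun i _ => smul_comm _ _ _
    exact eq_neg_of_add_eq_zero_left (hr e)
  refine ⟨Fin.cons (Fin.cons 0 fun j => - t j) fun i => Fin.cons (t i) fun j => s' i j, ?_, ?_⟩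
  · intro i j
    refine Fin.cases ?_ (fun i => ?_) i <;> refine Fin.cases ?_ (fun j => ?_) j
    · simp
    · simp
    · simp
    · simpa using hs'1 i j
  · intro i
    refine Fin.cases ?_ (fun i => ?_) i
    · simp [Fin.sum_univ_succ, h4]
    · simp [Fin.sum_univ_succ, ht']

lemma koz_transf {R : Type} [CommRing R] {M : Type} [AddCommGroup M] [Module R M]
    {m : ℕ} (h : Fin (m + 1) → R) (c : Fin m → R)
    (hK : KozP R M (m + 1) (Fin.cons (h 0 + ∑ j, c j * h j.succ) fun i => h i.succ)) :
    KozP R M (m + 1) h := by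
  intro q hq
  rw [Fin.sum_univ_succ] at hq
  obtain ⟨s, hs, hs'⟩ := hK (Fin.cons (q 0) fun j => q j.succ - c j • q 0) (by
    simp only [Fin.sum_univ_succ, Fin.cons_zero, Fin.cons_succ, smul_sub, Finset.sum_sub_distrib,
      add_smul, Finset.sum_smul]
    rw [← hq]
    have : ∀ j, h (Fin.succ j) • c j • q 0 = (c j * h j.succ) • q 0 := fun j => by
      rw [← mul_smul, mul_comm]
    simp only [this]
    abel)
  have hd : s 0 0 = - s 0 0 := hs 0 0
  have h0 : q 0 = (h 0 + ∑ j, c j * h j.succ) • s 0 0 + ∑ k : Fin m, h k.succ • s 0 k.succ := by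
    have := hs' 0
    simpa [Fin.sum_univ_succ] using this
  have h1 : ∀ j : Fin m, q j.succ = c j • q 0 + ((h 0 + ∑ j, c j * h j.succ) • s j.succ 0 +
      ∑ k : Fin m, h k.succ • s j.succ k.succ) := by
    intro j
    have := hs' j.succ
    simp only [Fin.sum_univ_succ, Fin.cons_zero, Fin.cons_succ] at this
    rw [← this]; abel
  refine ⟨Fin.cons (Fin.cons (s 0 0) fun k => s 0 k.succ + c k • s 0 0)
    fun j => Fin.cons (s j.succ 0 + c j • s 0 0) fun k =>
      s j.succ k.succ + c j • s 0 k.succ - c k • s 0 j.succ + (c j * c k) • s 0 0, ?_, ?_⟩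
  · intro i j
    refine Fin.cases ?_ (fun i => ?_) i <;> refine Fin.cases ?_ (fun j => ?_) j
    · exact hd
    · simp only [Fin.cons_zero, Fin.cons_succ]
      rw [hs j.succ 0, neg_add, ← smul_neg, ← hd, neg_neg]
    · simp only [Fin.cons_zero, Fin.cons_succ]
      rw [hs i.succ 0, neg_add, ← smul_neg, ← hd]
    · simp only [Fin.cons_succ]
      rw [hs j.succ i.succ, mul_comm (c i)]
      nth_rewrite 1 [hd]
      rw [smul_neg]; abel
  · intro i
    refine Fin.cases ?_ (fun i => ?_) i
    · simp only [Fin.sum_univ_succ, Fin.cons_zero, Fin.cons_succ]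
      rw [h0, add_smul, Finset.sum_smul]
      simp only [smul_add, Finset.sum_add_distrib, ← mul_smul, mul_comm]
      abel
    · simp only [Fin.sum_univ_succ, Fin.cons_zero, Fin.cons_succ]
      rw [h1, h0]
      simp only [smul_add, smul_sub, add_smul, Finset.sum_smul, Finset.smul_sum, Finset.sum_add_distrib,
        Finset.sum_sub_distrib, ← mul_smul]
      rw [show s (Fin.succ i) 0 = - s 0 (Fin.succ i) from hs _ _]
      simp only [smul_neg, Finset.sum_neg_distrib]
      have e1 : ∀ k, h (Fin.succ k) * c k = c k * h k.succ := fun k => mul_comm _ _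
      have e2 : ∀ k, h (Fin.succ k) * c i = c i * h k.succ := fun k => mul_comm _ _
      have e3 : ∀ k, h (Fin.succ k) * (c i * c k) = c i * (c k * h k.succ) := fun k => by ring
      simp only [e1, e2, e3, mul_comm (h 0) (c i)]
      abel

open CategoryTheory Abelian in
open Pointwise in
lemma koz_of_ext {R : Type} [CommRing R] [Algebra ℂ R] [IsNoetherianRing R] (I : Ideal R) (m : ℕ) :
    ∀ (h : Fin m → R) (M : ModuleCat.{0} R) [Module.Finite R M]
      (_ : I ≤ Module.annihilator R M ⊔ Ideal.span (Set.range h))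
      (_ : ∀ i < m, Subsingleton (Ext (ModuleCat.of R (R ⧸ I)) M i)),
      KozP R M m h := by
  have hh : algebraMap ℂ R (1 / 2) * 2 = 1 := by
    rw [show (2 : R) = algebraMap ℂ R 2 from (map_ofNat _ 2).symm, ← map_mul]; norm_num
  induction m with
  | zero => intro h M _ _ _ q hq; exact ⟨fun i => i.elim0, fun i => i.elim0, fun i => i.elim0⟩
  | succ m ih =>
    intro h M _ hI hE
    have h1 : Subsingleton (ModuleCat.of R (R ⧸ I) ⟶ M) :=
      Ext.addEquiv₀.subsingleton_congr.mp (hE 0 m.zero_lt_succ)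
    have h2 : Subsingleton ((R ⧸ I) →ₗ[R] M) :=
      (ModuleCat.homAddEquiv (M := ModuleCat.of R (R ⧸ I)) (N := M)).symm.subsingleton
    obtain ⟨x, hxI, hx⟩ := IsSMulRegular.subsingleton_linearMap_iff.mp h2
    rw [Ideal.annihilator_quotient] at hxI
    -- not contained in associated primes
    have h3 : ∀ P ∈ associatedPrimes R M, ¬ (Ideal.span (Set.range h) ≤ P) := by
      intro P hP hle
      have hPa : Module.annihilator R M ≤ P := by
        rw [← Submodule.annihilator_top]; exact IsAssociatedPrime.annihilator_le hP
      have hxP : x ∈ P := (hI.trans (sup_le hPa hle)) hxI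
      have hzd := biUnion_associatedPrimes_eq_zero_divisors R M
      have : x ∈ { r : R | ∃ x : M, x ≠ 0 ∧ r • x = 0 } := by
        rw [← hzd]; exact Set.mem_biUnion hP hxP
      obtain ⟨y, hy0, hy⟩ := this
      exact hy0 (hx.right_eq_zero_of_smul hy)
    let φ : (Fin (m + 1) → ℂ) →ₗ[ℂ] R := ∑ j, (LinearMap.toSpanSingleton ℂ R (h j)) ∘ₗ LinearMap.proj j
    have hφ : ∀ c, φ c = ∑ j, algebraMap ℂ R (c j) * h j := by
      intro c; simp [φ, Algebra.smul_def]
    let S : Set (Submodule ℂ (Fin (m + 1) → ℂ)) :=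
      insert (LinearMap.ker (LinearMap.proj 0))
       ((fun P : Ideal R => (P.restrictScalars ℂ).comap φ) '' associatedPrimes R M)
    have hSfin : S.Finite := ((associatedPrimes.finite R M).image _).insert _
    have hStop : ∀ p ∈ S, p ≠ ⊤ := by
      rintro p (rfl | ⟨P, hP, rfl⟩) htop
      · have : (fun _ => 1 : Fin (m + 1) → ℂ) ∈ LinearMap.ker (LinearMap.proj (R := ℂ) (φ := fun _ : Fin (m + 1) => ℂ) 0) := by
          rw [htop]; trivial
        simp at this
      · apply h3 P hP
        rw [Ideal.span_le]
        rintro _ ⟨j, rfl⟩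
        have : Pi.single j 1 ∈ (P.restrictScalars ℂ).comap φ := by
          simp only at htop
          rw [htop]; trivial
        rw [Submodule.mem_comap, hφ] at this
        simpa [Pi.single_apply] using this
    obtain ⟨c, hc⟩ : ∃ c, ∀ p ∈ S, c ∉ p := by
      by_contra hcon
      push Not at hcon
      have := Subspace.biUnion_ne_univ_of_top_notMem (s := hSfin.toFinset) (by
        intro h; exact hStop ⊤ (hSfin.mem_toFinset.mp h) rfl)
      apply this
      refine Set.eq_univ_of_forall fun c => ?_
      obtain ⟨p, hp, hcp⟩ := hcon c
      exact Set.mem_biUnion (hSfin.mem_toFinset.mpr hp) hcp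
    have hc0 : c 0 ≠ 0 := by simpa using hc _ (Set.mem_insert _ _)
    have hcP : IsSMulRegular M (φ c) := by
      have hzd := biUnion_associatedPrimes_eq_zero_divisors R M
      by_contra hnr
      rw [isSMulRegular_iff_right_eq_zero_of_smul] at hnr
      push Not at hnr
      obtain ⟨y, hy, hy0⟩ := hnr
      have : φ c ∈ { r : R | ∃ x : M, x ≠ 0 ∧ r • x = 0 } := ⟨y, hy0, hy⟩
      rw [← hzd] at this
      simp only [Set.mem_iUnion] at this
      obtain ⟨P, hP, hcP⟩ := this
      exact hc _ (Set.mem_insert_of_mem _ ⟨P, hP, rfl⟩) hcP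
    let a := h 0 + ∑ j : Fin m, algebraMap ℂ R ((c 0)⁻¹ * c j.succ) * h j.succ
    have ha : φ c = algebraMap ℂ R (c 0) * a := by
      rw [hφ, Fin.sum_univ_succ]
      simp only [a, mul_add, Finset.mul_sum, ← mul_assoc, ← map_mul, mul_inv_cancel₀ hc0, one_mul]
    have har : IsSMulRegular M a := by
      rw [ha] at hcP
      exact IsSMulRegular.of_mul hcP
    refine koz_transf h (fun j => algebraMap ℂ R ((c 0)⁻¹ * c j.succ)) ?_
    refine koz_of_quot _ hh _ har ?_
    refine ih _ (ModuleCat.of R (QuotSMulTop a M)) ?_ ?_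
    · refine hI.trans (sup_le ?_ ?_)
      · refine le_sup_of_le_left ?_
        exact LinearMap.annihilator_le_of_surjective (Submodule.mkQ _) (Submodule.mkQ_surjective _)
      · rw [Ideal.span_le]
        have hs : ∀ j : Fin m, h j.succ ∈ Ideal.span (Set.range fun i : Fin m =>
            (Fin.cons a (fun i => h i.succ) : Fin (m + 1) → R) i.succ) := fun j =>
          Ideal.subset_span ⟨j, by simp⟩
        rintro _ ⟨j, rfl⟩
        refine Fin.cases ?_ (fun j => ?_) j
        · have : h 0 = a - ∑ j : Fin m, algebraMap ℂ R ((c 0)⁻¹ * c j.succ) * h j.succ := by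
            simp [a]
          rw [SetLike.mem_coe, this]
          refine Ideal.sub_mem _ (Ideal.mem_sup_left ?_) (Ideal.mem_sup_right
            (Ideal.sum_mem _ fun j _ => Ideal.mul_mem_left _ _ (hs j)))
          rw [Module.mem_annihilator]
          intro y
          obtain ⟨y, rfl⟩ := Submodule.mkQ_surjective _ y
          rw [← map_smul, Submodule.mkQ_apply, Submodule.Quotient.mk_eq_zero]
          exact Submodule.smul_mem_pointwise_smul _ _ _ trivial
        · exact Ideal.mem_sup_right (hs j)
    · intro i hi
      have zero1 := AddCommGrpCat.isZero_of_iff_subsingleton.mpr (hE i (by omega))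
      have zero2 := AddCommGrpCat.isZero_of_iff_subsingleton.mpr (hE (i + 1) (by omega))
      exact AddCommGrpCat.subsingleton_of_isZero <| ShortComplex.Exact.isZero_of_both_zeros
        ((Ext.covariant_sequence_exact₃' _ har.smulShortComplex_shortExact) i (i + 1) rfl)
        (zero1.eq_zero_of_src _) (zero2.eq_zero_of_tgt _)

open Pointwise in
lemma regular_X (k : ℕ) : RingTheory.Sequence.IsRegular (MvPolynomial (Fin k) ℂ)
    ((List.finRange k).map (X : Fin k → MvPolynomial (Fin k) ℂ)) := by
  have hof : ∀ i : ℕ, Ideal.ofList (((List.finRange k).map (X : Fin k → MvPolynomial (Fin k) ℂ)).take i)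
      = Ideal.span (X '' {j : Fin k | j.1 < i}) := by
    intro i
    unfold Ideal.ofList
    congr 1
    ext x
    simp only [Set.mem_ofPred_eq, List.mem_take_iff_getElem, Set.mem_image]
    constructor
    · rintro ⟨j, hj, rfl⟩
      simp only [List.length_map, List.length_finRange] at hj
      exact ⟨⟨j, by omega⟩, by simp; omega, by simp⟩
    · rintro ⟨j, hj, rfl⟩
      refine ⟨j.1, by simp; omega, by simp⟩
  refine ⟨(RingTheory.Sequence.isWeaklyRegular_iff_Fin _ _).mpr fun i => ?_, ?_⟩
  · rw [hof, isSMulRegular_iff_right_eq_zero_of_smul]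
    intro p hp
    obtain ⟨p, rfl⟩ := Submodule.mkQ_surjective _ p
    rw [← map_smul] at hp
    simp only [Submodule.mkQ_apply, Submodule.Quotient.mk_eq_zero, smul_eq_mul, Ideal.mul_top,
      MvPolynomial.mem_ideal_span_X_image] at hp ⊢
    intro m hm
    have hi : i.1 < k := by simpa using i.2
    have e : ((List.finRange k).map (X : Fin k → MvPolynomial (Fin k) ℂ))[i] = X ⟨i.1, hi⟩ := by simp
    rw [e] at hp
    obtain ⟨j, hj, hj'⟩ := hp (m + Finsupp.single ⟨i.1, hi⟩ 1) (by
      rw [mem_support_iff, add_comm, coeff_X_mul]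
      exact mem_support_iff.mp hm)
    refine ⟨j, hj, ?_⟩
    have : (⟨i.1, hi⟩ : Fin k) ≠ j := by
      rintro rfl; simp at hj
    simpa [Finsupp.single_apply, this] using hj'
  · intro htop
    have h1 : Ideal.ofList ((List.finRange k).map (X : Fin k → MvPolynomial (Fin k) ℂ)) = ⊤ := by
      simpa using htop.symm
    have h2 := hof k
    rw [List.take_of_length_le (by simp), h1] at h2
    have h3 : (1 : MvPolynomial (Fin k) ℂ) ∈ Ideal.span (X '' {j : Fin k | j.1 < k}) := by
      rw [← h2]; trivial
    rw [MvPolynomial.mem_ideal_span_X_image] at h3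
    obtain ⟨j, hj, hj'⟩ := h3 0 (by simp)
    simp at hj'

lemma X_mem_radical {k : ℕ} (h : Fin k → MvPolynomial (Fin k) ℂ)
    (hz : ∀ x : Fin k → ℂ, (∀ i, eval x (h i) = 0) → x = 0) (j : Fin k) :
    X j ∈ (Ideal.span (Set.range h)).radical := by
  rw [← MvPolynomial.vanishingIdeal_zeroLocus_eq_radical (K := ℂ)]
  rw [MvPolynomial.mem_vanishingIdeal_iff]
  intro x hx
  have : x = 0 := hz x fun i => by
    have := hx (h i) (Ideal.subset_span ⟨i, rfl⟩)
    simpa [MvPolynomial.aeval_eq_eval] using this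
  simp [this]

open CategoryTheory Abelian in
open Pointwise in
lemma koz_poly {k : ℕ} (h : Fin k → MvPolynomial (Fin k) ℂ)
    (hz : ∀ x : Fin k → ℂ, (∀ i, eval x (h i) = 0) → x = 0) :
    KozP (MvPolynomial (Fin k) ℂ) (MvPolynomial (Fin k) ℂ) k h := by
  let T := MvPolynomial (Fin k) ℂ
  let rs := (List.finRange k).map (X : Fin k → T)
  have hreg := regular_X k
  have hx := ModuleCat.subsingleton_ext_of_exists_isRegular (R := T) (Ideal.ofList rs)
    (ModuleCat.of T (T ⧸ Ideal.span (Set.range h))) (by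
      rw [Module.support_eq_zeroLocus, Ideal.annihilator_quotient,
        PrimeSpectrum.zeroLocus_subset_zeroLocus_iff]
      unfold Ideal.ofList
      rw [Ideal.span_le]
      intro r hr
      simp only [rs, Set.mem_ofPred_eq, List.mem_map] at hr
      obtain ⟨j, -, rfl⟩ := hr
      exact X_mem_radical h hz j)
    (ModuleCat.of T T) (lt_top_iff_ne_top.mpr hreg.2.symm) rs (fun r hr => Ideal.subset_span hr) hreg
  refine koz_of_ext (Ideal.span (Set.range h)) k h (ModuleCat.of T T) le_sup_right ?_
  intro i hi
  exact hx i (by simpa [rs] using hi)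

lemma pd_hom {σ : Type} (α : σ → ℕ) (p : MvPolynomial σ ℂ) (e : ℕ)
    (hp : IsWeightedHomogeneous α p e) (i : σ) :
    pderiv i p = 0 ∨ (α i ≤ e ∧ IsWeightedHomogeneous α (pderiv i p) (e - α i)) := by
  by_cases h : α i ≤ e
  · exact Or.inr ⟨h, hp.pderiv (by omega)⟩
  · left
    apply pderiv_eq_zero_of_notMem_vars
    rw [mem_vars_iff_mem_support]
    rintro ⟨m, hm, hi⟩
    have h1 := hp (mem_support_iff.mp hm)
    have h2 := Finsupp.le_weight_of_ne_zero' α (Finsupp.mem_support_iff.mp hi)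
    omega

lemma aeval_hom {σ : Type} {S : Type} [CommRing S] [Algebra ℂ S] (α : σ → ℕ) (p : MvPolynomial σ ℂ)
    (e : ℕ) (hp : IsWeightedHomogeneous α p e) (s : S) (y : σ → S) :
    aeval (fun j => s ^ α j * y j) p = s ^ e * aeval y p := by
  conv_lhs => rw [p.as_sum]
  conv_rhs => rw [p.as_sum]
  rw [map_sum, map_sum, Finset.mul_sum]
  refine Finset.sum_congr rfl fun m hm => ?_
  rw [aeval_monomial, aeval_monomial, ← hp (mem_support_iff.mp hm)]
  rw [Finsupp.weight_apply]
  simp only [Finsupp.prod, Finsupp.sum, mul_pow, Finset.prod_mul_distrib, ← pow_mul, smul_eq_mul]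
  rw [Finset.prod_pow_eq_pow_sum]
  simp only [mul_comm (α _)]
  ring

lemma aeval_pd_hom {σ : Type} {S : Type} [CommRing S] [Algebra ℂ S] (α : σ → ℕ)
    (p : MvPolynomial σ ℂ) (e : ℕ) (hp : IsWeightedHomogeneous α p e) (s : S) (y : σ → S) (i : σ) :
    s ^ α i * aeval (fun j => s ^ α j * y j) (pderiv i p) = s ^ e * aeval y (pderiv i p) := by
  rcases pd_hom α p e hp i with h | ⟨h, h'⟩
  · simp [h]
  · rw [aeval_hom α _ _ h' s y, ← mul_assoc, ← pow_add]
    congr 2; omega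

lemma sum_comp {σ : Type} (α : σ → ℕ) (f : MvPolynomial σ ℂ) (d : ℕ)
    (hd : weightedTotalDegree α f = d) :
    f = ∑ e ∈ Finset.range (d + 1), weightedHomogeneousComponent α e f := by
  classical
  ext m
  rw [coeff_sum]
  simp only [coeff_weightedHomogeneousComponent]
  rw [Finset.sum_ite_eq]
  split_ifs with h
  · rfl
  · by_contra h0
    have := le_weightedTotalDegree α (mem_support_iff.mpr h0)
    rw [hd] at this
    exact h (Finset.mem_range.mpr (by omega))

lemma pderiv_succ_F (n d : ℕ) (α : Fin (n + 1) → ℕ) (f : MvPolynomial (Fin (n + 1)) ℂ) (b : ℂ)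
    (i : Fin (n + 1)) :
    pderiv i.succ (homogenization n d α f - C b * X 0 ^ d) =
      ∑ e ∈ Finset.range (d + 1),
        rename Fin.succ (pderiv i (weightedHomogeneousComponent α e f)) * X 0 ^ (d - e) := by
  have h0 : ∀ k : ℕ, pderiv i.succ (X 0 ^ k : MvPolynomial (Fin (n + 2)) ℂ) = 0 := fun k => by
    rw [pderiv_pow, pderiv_X_of_ne (Fin.succ_ne_zero i).symm, mul_zero]
  rw [homogenization, map_sub, map_sum, pderiv_C_mul, h0, mul_zero, sub_zero]
  refine Finset.sum_congr rfl fun e _ => ?_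
  rw [pderiv_mul, h0, mul_zero, add_zero, pderiv_rename (Fin.succ_injective _)]

lemma pz_h0 (m k : ℕ) : X 0 * pderiv 0 (X 0 ^ k : MvPolynomial (Fin (m + 1)) ℂ) =
    (k : MvPolynomial (Fin (m + 1)) ℂ) * X 0 ^ k := by
  rw [pderiv_pow, pderiv_X_self]
  rcases k with _ | k
  · simp
  · rw [Nat.add_sub_cancel, pow_succ]; ring

lemma pz_h1 (m : ℕ) (p : MvPolynomial (Fin m) ℂ) :
    pderiv 0 (rename Fin.succ p : MvPolynomial (Fin (m + 1)) ℂ) = 0 := by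
  classical
  apply pderiv_eq_zero_of_notMem_vars
  intro h
  have h2 := vars_rename _ _ h
  rw [Finset.mem_image] at h2
  obtain ⟨a, _, ha⟩ := h2
  exact Fin.succ_ne_zero a ha

lemma pderiv_zero_F (n d : ℕ) (α : Fin (n + 1) → ℕ) (f : MvPolynomial (Fin (n + 1)) ℂ) (b : ℂ) :
    X 0 * pderiv 0 (homogenization n d α f - C b * X 0 ^ d) =
      (∑ e ∈ Finset.range (d + 1),
        rename Fin.succ (weightedHomogeneousComponent α e f) * (((d - e : ℕ) : MvPolynomial (Fin (n + 2)) ℂ) * X 0 ^ (d - e)))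
        - C b * ((d : MvPolynomial (Fin (n + 2)) ℂ) * X 0 ^ d) := by
  rw [homogenization, map_sub, map_sum, pderiv_C_mul, mul_sub, Finset.mul_sum]
  refine congrArg₂ _ (Finset.sum_congr rfl fun e _ => ?_) ?_
  · rw [pderiv_mul, pz_h1, zero_mul, zero_add, ← pz_h0, mul_left_comm]
  · rw [← pz_h0, mul_left_comm]

lemma L2 {S : Type} [CommRing S] [Algebra ℂ S] (n d : ℕ) (α : Fin (n + 1) → ℕ)
    (f : MvPolynomial (Fin (n + 1)) ℂ) (hd : weightedTotalDegree α f = d) (b : ℂ)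
    (i : Fin (n + 1)) (s : S) (y : Fin (n + 1) → S) (z : Fin (n + 2) → S)
    (hz0 : z 0 = s) (hz : ∀ j : Fin (n + 1), z j.succ = s ^ α j * y j) :
    s ^ α i * aeval z (pderiv i.succ (homogenization n d α f - C b * X 0 ^ d)) =
      s ^ d * aeval y (pderiv i f) := by
  have hzc : z ∘ Fin.succ = fun j => s ^ α j * y j := funext hz
  conv_rhs => rw [sum_comp α f d hd]
  rw [pderiv_succ_F, map_sum, map_sum, map_sum, Finset.mul_sum, Finset.mul_sum]
  refine Finset.sum_congr rfl fun e he => ?_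
  rw [map_mul, aeval_rename, hzc, ← mul_assoc,
    aeval_pd_hom α _ e (weightedHomogeneousComponent_isWeightedHomogeneous _ _)]
  rw [map_pow, aeval_X, hz0]
  rw [show d = (d - e) + e by have := Finset.mem_range.mp he; omega, pow_add]
  simp only [Nat.add_sub_cancel]
  ring

lemma L3 {S : Type} [CommRing S] [Algebra ℂ S] (n d : ℕ) (α : Fin (n + 1) → ℕ)
    (f : MvPolynomial (Fin (n + 1)) ℂ) (hd : weightedTotalDegree α f = d) (b : ℂ)
    (s : S) (y : Fin (n + 1) → S) (z : Fin (n + 2) → S)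
    (hz0 : z 0 = s) (hz : ∀ j : Fin (n + 1), z j.succ = s ^ α j * y j)
    (hy : ∀ i, aeval y (pderiv i f) = 0) :
    s * aeval z (pderiv 0 (homogenization n d α f - C b * X 0 ^ d)) =
      s ^ d * (d * (aeval y f - algebraMap ℂ S b)) := by
  have hzc : z ∘ Fin.succ = fun j => s ^ α j * y j := funext hz
  have h1 := congrArg (aeval (R := ℂ) z) (pderiv_zero_F n d α f b)
  rw [map_mul, aeval_X, hz0] at h1
  rw [h1]
  have hE : ∑ e ∈ Finset.range (d + 1), (e : S) * aeval y (weightedHomogeneousComponent α e f) = 0 := by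
    have h2 : ∀ e : ℕ, (e : S) * aeval y (weightedHomogeneousComponent α e f) =
        ∑ i, (α i : S) * (y i * aeval y (pderiv i (weightedHomogeneousComponent α e f))) := by
      intro e
      have := congrArg (aeval (R := ℂ) y) (weightedHomogeneousComponent_isWeightedHomogeneous (w := α) e f).sum_weight_X_mul_pderiv
      simp only [map_sum, map_mul, aeval_X, nsmul_eq_mul, map_natCast] at this
      exact this.symm
    simp only [h2]
    rw [Finset.sum_comm]
    refine Finset.sum_eq_zero fun i _ => ?_
    rw [← Finset.mul_sum, ← Finset.mul_sum, ← map_sum, ← map_sum, ← sum_comp α f d hd, hy]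
    simp
  have hf : aeval y f = ∑ e ∈ Finset.range (d + 1), aeval y (weightedHomogeneousComponent α e f) := by
    rw [← map_sum, ← sum_comp α f d hd]
  simp only [map_sub, map_sum, map_mul, map_pow, map_natCast, aeval_X, hz0, aeval_rename, hzc, aeval_C]
  have h3 : ∑ e ∈ Finset.range (d + 1), (aeval fun j => s ^ α j * y j) (weightedHomogeneousComponent α e f) *
      (((d - e : ℕ) : S) * s ^ (d - e)) = ∑ e ∈ Finset.range (d + 1),
      (s ^ d * (d * aeval y (weightedHomogeneousComponent α e f)) -
        s ^ d * ((e : S) * aeval y (weightedHomogeneousComponent α e f))) := by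
    refine Finset.sum_congr rfl fun e he => ?_
    have he : e ≤ d := by have := Finset.mem_range.mp he; omega
    rw [aeval_hom α _ e (weightedHomogeneousComponent_isWeightedHomogeneous _ _), Nat.cast_sub he]
    rw [show s ^ d = s ^ (d - e) * s ^ e by rw [← pow_add]; congr 1; omega]
    ring
  rw [h3, Finset.sum_sub_distrib, ← Finset.mul_sum, ← Finset.mul_sum, ← Finset.mul_sum, hE, ← hf]
  ring

def Js (n d : ℕ) (α : Fin (n + 1) → ℕ)
    (f : MvPolynomial (Fin (n + 1)) ℂ) (b : ℂ) : Ideal (MvPolynomial (Fin (n + 2)) ℂ) :=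
  Ideal.span (Set.range fun i : Fin (n + 1) =>
    pderiv i.succ (homogenization n d α f - C b * X 0 ^ d))

def Jf (n : ℕ) (f : MvPolynomial (Fin (n + 1)) ℂ) : Ideal (MvPolynomial (Fin (n + 1)) ℂ) :=
  Ideal.span (Set.range fun i : Fin (n + 1) => pderiv i f)

lemma x0_nzd (n d : ℕ) (α : Fin (n + 1) → ℕ) (f : MvPolynomial (Fin (n + 1)) ℂ) (b : ℂ)
    (htame : ∀ x : Fin (n + 1) → ℂ,
      (∀ i, eval x (pderiv i (weightedHomogeneousComponent α d f)) = 0) → x = 0)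
    (p : MvPolynomial (Fin (n + 2)) ℂ) (hp : X 0 * p ∈ Js n d α f b) : p ∈ Js n d α f b := by
  set F := homogenization n d α f - C b * X 0 ^ d with hF
  have hk := koz_poly (k := n + 2) (Fin.cons (X 0) (fun i : Fin (n + 1) => pderiv i.succ F)) (by
    intro x hx
    have h0 : x 0 = 0 := by have := hx 0; simpa using this
    have h1 : (fun j : Fin (n + 1) => x j.succ) = 0 := by
      apply htame
      intro i
      have := hx i.succ
      rw [Fin.cons_succ, hF, pderiv_succ_F, map_sum, Finset.sum_range_succ, Finset.sum_eq_zero] at this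
      · simpa [eval_rename, Function.comp_def] using this
      · intro e he
        have : d - e ≠ 0 := by have := Finset.mem_range.mp he; omega
        simp [h0, this]
    funext j
    refine Fin.cases h0 (fun j => ?_) j
    exact congrFun h1 j)
  rw [Js, Ideal.mem_span_range_iff_exists_fun] at hp
  obtain ⟨c, hc⟩ := hp
  obtain ⟨s, hs, hq⟩ := hk (Fin.cons p (fun i => - c i)) (by
    rw [Fin.sum_univ_succ]
    simp only [Fin.cons_zero, Fin.cons_succ, smul_eq_mul]
    rw [← hc, ← Finset.sum_add_distrib]
    refine Finset.sum_eq_zero fun i _ => ?_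
    ring)
  have h00 : s 0 0 = 0 := by
    have h2 : (2 : MvPolynomial (Fin (n + 2)) ℂ) * s 0 0 = 0 := by
      have := hs 0 0
      linear_combination this
    rcases mul_eq_zero.mp h2 with h | h
    · exact absurd h two_ne_zero
    · exact h
  have := hq 0
  rw [Fin.sum_univ_succ] at this
  simp only [Fin.cons_zero, Fin.cons_succ, smul_eq_mul, h00, mul_zero, zero_add] at this
  rw [this]
  refine Ideal.sum_mem _ fun i _ => Ideal.mul_mem_right _ _ (Ideal.subset_span ⟨i, rfl⟩)

/-- the map to polynomials over the Jacobian ring of f -/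
def thT (n : ℕ) (α : Fin (n + 1) → ℕ) (f : MvPolynomial (Fin (n + 1)) ℂ) :
    MvPolynomial (Fin (n + 2)) ℂ →ₐ[ℂ] Polynomial (MvPolynomial (Fin (n + 1)) ℂ ⧸ Jf n f) :=
  aeval (Fin.cons Polynomial.X
    (fun j => Polynomial.X ^ α j * Polynomial.C (Ideal.Quotient.mk (Jf n f) (X j))))

lemma aeval_polyC (n : ℕ) (f p : MvPolynomial (Fin (n + 1)) ℂ) :
    aeval (fun j => Polynomial.C (Ideal.Quotient.mk (Jf n f) (X j))) p =
      Polynomial.C (Ideal.Quotient.mk (Jf n f) p) := by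
  induction p using MvPolynomial.induction_on with
  | C a => rw [aeval_C]; rfl
  | add p q hp hq => simp only [map_add, hp, hq]
  | mul_X p i hp => rw [map_mul, hp, aeval_X, map_mul, map_mul]

lemma aeval_mk (n : ℕ) (f p : MvPolynomial (Fin (n + 1)) ℂ) :
    aeval (fun j => (Ideal.Quotient.mk (Jf n f) (X j))) p =
      (Ideal.Quotient.mk (Jf n f) p) := by
  induction p using MvPolynomial.induction_on with
  | C a => rw [aeval_C]; rfl
  | add p q hp hq => simp only [map_add, hp, hq]
  | mul_X p i hp => rw [map_mul, hp, aeval_X, map_mul]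

lemma thT_Js (n d : ℕ) (α : Fin (n + 1) → ℕ) (f : MvPolynomial (Fin (n + 1)) ℂ) (b : ℂ)
    (hd : weightedTotalDegree α f = d) (i : Fin (n + 1)) :
    thT n α f (pderiv i.succ (homogenization n d α f - C b * X 0 ^ d)) = 0 := by
  have h := L2 n d α f hd b i (Polynomial.X)
    (fun j => Polynomial.C (Ideal.Quotient.mk (Jf n f) (X j))) (Fin.cons Polynomial.X
    (fun j => Polynomial.X ^ α j * Polynomial.C (Ideal.Quotient.mk (Jf n f) (X j)))) rfl
    (fun j => rfl)
  rw [aeval_polyC, Ideal.Quotient.eq_zero_iff_mem.mpr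
    (show pderiv i f ∈ Jf n f from Ideal.subset_span ⟨i, rfl⟩), map_zero, mul_zero] at h
  exact ((Polynomial.isRegular_X_pow (α i)).left.eq_iff (b := 0)).mp (by rw [mul_zero]; exact h)

lemma thT_h (n d : ℕ) (α : Fin (n + 1) → ℕ) (f : MvPolynomial (Fin (n + 1)) ℂ) (b : ℂ)
    (hd : weightedTotalDegree α f = d) (hd1 : 1 ≤ d) :
    thT n α f (pderiv 0 (homogenization n d α f - C b * X 0 ^ d)) =
      Polynomial.X ^ (d - 1) *
        Polynomial.C (Ideal.Quotient.mk (Jf n f) (C (d : ℂ) * (f - C b))) := by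
  have h := L3 n d α f hd b (Polynomial.X)
    (fun j => Polynomial.C (Ideal.Quotient.mk (Jf n f) (X j))) (Fin.cons Polynomial.X
    (fun j => Polynomial.X ^ α j * Polynomial.C (Ideal.Quotient.mk (Jf n f) (X j)))) rfl
    (fun j => rfl) (fun i => by
      rw [aeval_polyC, Ideal.Quotient.eq_zero_iff_mem.mpr
        (show pderiv i f ∈ Jf n f from Ideal.subset_span ⟨i, rfl⟩), map_zero])
  rw [aeval_polyC] at h
  apply (Polynomial.isRegular_X).left
  refine Eq.trans h ?_
  show _ = Polynomial.X * _
  rw [← mul_assoc Polynomial.X (Polynomial.X ^ (d - 1)), ← pow_succ', Nat.sub_add_cancel hd1]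
  congr 1
  rw [map_mul, map_mul, map_sub, map_sub]
  rw [show (C (d : ℂ) : MvPolynomial (Fin (n + 1)) ℂ) = (d : MvPolynomial (Fin (n + 1)) ℂ) by simp,
    map_natCast, map_natCast]
  rfl

lemma thT_ker (n d : ℕ) (α : Fin (n + 1) → ℕ) (f : MvPolynomial (Fin (n + 1)) ℂ) (b : ℂ)
    (hd : weightedTotalDegree α f = d)
    (htame : ∀ x : Fin (n + 1) → ℂ,
      (∀ i, eval x (pderiv i (weightedHomogeneousComponent α d f)) = 0) → x = 0) 
    (p : MvPolynomial (Fin (n + 2)) ℂ) : thT n α f p = 0 ↔ p ∈ Js n d α f b := by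
  constructor
  swap
  · intro hp
    have : Js n d α f b ≤ RingHom.ker (thT n α f) := by
      rw [Js, Ideal.span_le]
      rintro _ ⟨i, rfl⟩
      exact thT_Js n d α f b hd i
    exact this hp
  intro hp
  let A := MvPolynomial (Fin (n + 2)) ℂ ⧸ Js n d α f b
  let x0 : A := Ideal.Quotient.mk _ (X 0)
  let L := Localization.Away x0
  let m : MvPolynomial (Fin (n + 2)) ℂ →ₐ[ℂ] L :=
    (IsScalarTower.toAlgHom ℂ A L).comp (Ideal.Quotient.mkₐ ℂ (Js n d α f b))
  have hinj : Function.Injective (algebraMap A L) := by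
    apply IsLocalization.injective (M := Submonoid.powers x0)
    rw [Submonoid.powers_le]
    rw [mem_nonZeroDivisors_iff_right]
    intro z hz
    obtain ⟨q, rfl⟩ := Ideal.Quotient.mk_surjective z
    rw [← map_mul, Ideal.Quotient.eq_zero_iff_mem, mul_comm] at hz
    exact Ideal.Quotient.eq_zero_iff_mem.mpr (x0_nzd n d α f b htame q hz)
  have hu : IsUnit (m (X 0)) := IsLocalization.Away.algebraMap_isUnit (S := L) x0
  obtain ⟨u, hu⟩ := hu
  have hm : ∀ q, m q = aeval (fun i => m (X i)) q := fun q => by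
    rw [← comp_aeval_apply, aeval_X_left]; rfl
  let y : Fin (n + 1) → L := fun j => ((u⁻¹ ^ α j : Lˣ) : L) * m (X j.succ)
  have hy : ∀ j, m (X (Fin.succ j)) = m (X 0) ^ α j * y j := fun j => by
    simp only [y]
    rw [← hu, ← Units.val_pow_eq_pow_val, ← mul_assoc, ← Units.val_mul, ← mul_pow]
    simp
  have hyJ : ∀ i, aeval y (pderiv i f) = 0 := fun i => by
    have h := L2 n d α f hd b i (m (X 0)) y (fun i => m (X i)) rfl hy
    rw [← hm] at h
    have h0 : m (pderiv i.succ (homogenization n d α f - C b * X 0 ^ d)) = 0 := by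
      show algebraMap A L (Ideal.Quotient.mk _ _) = 0
      rw [Ideal.Quotient.eq_zero_iff_mem.mpr, map_zero]
      exact Ideal.subset_span ⟨i, rfl⟩
    rw [h0, mul_zero, ← hu] at h
    exact ((u.isUnit.pow d).mul_right_eq_zero).mp h.symm
  let ψB : (MvPolynomial (Fin (n + 1)) ℂ ⧸ Jf n f) →ₐ[ℂ] L :=
    Ideal.Quotient.liftₐ (Jf n f) (aeval y) (by
      have : Jf n f ≤ RingHom.ker (aeval (R := ℂ) y) := by
        rw [Jf, Ideal.span_le]
        rintro _ ⟨i, rfl⟩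
        exact hyJ i
      exact fun a ha => this ha)
  let ψ := Polynomial.eval₂RingHom ψB.toRingHom (m (X 0))
  have hψ : ∀ q, ψ (thT n α f q) = m q := by
    have : ψ.comp (thT n α f).toRingHom = m.toRingHom := by
      apply MvPolynomial.ringHom_ext
      · intro r
        simp only [RingHom.comp_apply, AlgHom.toRingHom_eq_coe, RingHom.coe_coe]
        rw [← MvPolynomial.algebraMap_eq, AlgHom.commutes, AlgHom.commutes]
        show Polynomial.eval₂ _ _ (Polynomial.C (algebraMap ℂ _ r)) = _
        rw [Polynomial.eval₂_C]
        exact ψB.commutes r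
      · intro i
        refine Fin.cases ?_ (fun j => ?_) i
        · simp only [RingHom.comp_apply, AlgHom.toRingHom_eq_coe, RingHom.coe_coe, thT, aeval_X, Fin.cons_zero]
          exact Polynomial.eval₂_X _ _
        · simp only [RingHom.comp_apply, AlgHom.toRingHom_eq_coe, RingHom.coe_coe, thT, aeval_X, Fin.cons_succ]
          show Polynomial.eval₂ _ _ _ = _
          rw [Polynomial.eval₂_mul, Polynomial.eval₂_pow, Polynomial.eval₂_X, Polynomial.eval₂_C,
            hy j]
          congr 1
          show aeval y (X j) = _
          rw [aeval_X]
    intro q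
    exact DFunLike.congr_fun this q
  have h1 := hψ p
  rw [hp, map_zero] at h1
  have h2 : algebraMap A L (Ideal.Quotient.mk _ p) = 0 := h1.symm
  rw [← map_zero (algebraMap A L)] at h2
  exact Ideal.Quotient.eq_zero_iff_mem.mp (hinj h2)

lemma span_hom (n d : ℕ) (α : Fin (n + 1) → ℕ) (f : MvPolynomial (Fin (n + 1)) ℂ)
    (hd : weightedTotalDegree α f = d)
    (I : Finset (Fin (n + 1) →₀ ℕ))
    (hIspan : Submodule.span ℂ (Set.range fun β : I =>
      Ideal.Quotient.mk (Jf n (weightedHomogeneousComponent α d f))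
        (monomial (β : Fin (n + 1) →₀ ℕ) (1 : ℂ))) = ⊤) (N : ℕ) :
    ∀ p : MvPolynomial (Fin (n + 1)) ℂ, IsWeightedHomogeneous α p N →
      p ∈ Submodule.span ℂ (Set.range fun β : I => monomial (β : Fin (n + 1) →₀ ℕ) (1 : ℂ)) ⊔
        (Jf n f).restrictScalars ℂ := by
  classical
  set g := weightedHomogeneousComponent α d f with hg
  induction N using Nat.strong_induction_on with
  | _ N ih =>
  intro p hp
  set U := Submodule.span ℂ (Set.range fun β : I => monomial (β : Fin (n + 1) →₀ ℕ) (1 : ℂ)) with hU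
  set W := U ⊔ (Jf n f).restrictScalars ℂ with hW
  have h1 : Ideal.Quotient.mkₐ ℂ (Jf n g) p ∈ U.map (Ideal.Quotient.mkₐ ℂ (Jf n g)).toLinearMap := by
    rw [hU, Submodule.map_span, ← Set.range_comp]
    have : (Ideal.Quotient.mkₐ ℂ (Jf n g)) p ∈ (⊤ : Submodule ℂ _) := trivial
    rw [← hIspan] at this
    exact this
  obtain ⟨u, hu, hup⟩ := h1
  have hv : p - u ∈ Jf n g := by
    rw [← Ideal.Quotient.eq_zero_iff_mem, map_sub, sub_eq_zero]
    exact hup.symm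
  rw [Jf, Ideal.mem_span_range_iff_exists_fun] at hv
  obtain ⟨c, hc⟩ := hv
  have hcN : ∀ (q : MvPolynomial (Fin (n + 1)) ℂ) (i : Fin (n + 1)),
      weightedHomogeneousComponent α N (q * pderiv i g) ∈ W := by
    intro q i
    induction q using MvPolynomial.induction_on' with
    | add q r hq hr => rw [add_mul, map_add]; exact add_mem hq hr
    | monomial γ a =>
      rcases pd_hom α g d (weightedHomogeneousComponent_isWeightedHomogeneous _ _) i with h | ⟨hle, h⟩
      · rw [h, mul_zero, map_zero]; exact zero_mem _
      have hm := (isWeightedHomogeneous_monomial α γ a rfl).mul h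
      rw [weightedHomogeneousComponent_of_mem hm]
      split_ifs with hN
      swap
      · exact zero_mem _
      have h2 : monomial γ a * pderiv i g = monomial γ a * pderiv i f -
          ∑ e ∈ Finset.range d, monomial γ a * pderiv i (weightedHomogeneousComponent α e f) := by
        have h3 : pderiv i f = _ := congrArg (pderiv i) (sum_comp α f d hd)
        rw [map_sum, Finset.sum_range_succ] at h3
        rw [← Finset.mul_sum, ← mul_sub, h3, add_sub_cancel_left]
      rw [h2]
      apply sub_mem
      · exact (le_sup_right : _ ≤ W) (Ideal.mul_mem_left _ _ (Ideal.subset_span ⟨i, rfl⟩))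
      · refine sum_mem fun e he => ?_
        have he := Finset.mem_range.mp he
        rcases pd_hom α (weightedHomogeneousComponent α e f) e
          (weightedHomogeneousComponent_isWeightedHomogeneous _ _) i with h | ⟨hle', h⟩
        · rw [h, mul_zero]; exact zero_mem _
        · exact ih _ (by omega) _ ((isWeightedHomogeneous_monomial α γ a rfl).mul h)
  have hpu : p = weightedHomogeneousComponent α N u + ∑ i, weightedHomogeneousComponent α N (c i * pderiv i g) := by
    rw [← map_sum, hc, ← map_add, add_sub_cancel, weightedHomogeneousComponent_eq_self hp]
  rw [hpu]
  refine add_mem ?_ (sum_mem fun i _ => hcN _ _)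
  refine (le_sup_left : U ≤ W) ?_
  have : U ≤ U.comap (weightedHomogeneousComponent α N) := by
    conv_lhs => rw [hU]
    rw [Submodule.span_le]
    rintro _ ⟨β, rfl⟩
    show weightedHomogeneousComponent α N (monomial (β : Fin (n + 1) →₀ ℕ) (1 : ℂ)) ∈ U
    rw [weightedHomogeneousComponent_of_mem (isWeightedHomogeneous_monomial α _ _ rfl)]
    split_ifs
    · exact Submodule.subset_span ⟨β, rfl⟩
    · exact zero_mem _
  exact this hu

lemma span_B (n d : ℕ) (α : Fin (n + 1) → ℕ) (f : MvPolynomial (Fin (n + 1)) ℂ)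
    (hd : weightedTotalDegree α f = d)
    (I : Finset (Fin (n + 1) →₀ ℕ))
    (hIspan : Submodule.span ℂ (Set.range fun β : I =>
      Ideal.Quotient.mk (Jf n (weightedHomogeneousComponent α d f))
        (monomial (β : Fin (n + 1) →₀ ℕ) (1 : ℂ))) = ⊤) :
    Submodule.span ℂ (Set.range fun β : I =>
      Ideal.Quotient.mk (Jf n f) (monomial (β : Fin (n + 1) →₀ ℕ) (1 : ℂ))) = ⊤ := by
  rw [eq_top_iff]
  intro z _
  obtain ⟨p, rfl⟩ := Ideal.Quotient.mk_surjective z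
  have h : p ∈ Submodule.span ℂ (Set.range fun β : I => monomial (β : Fin (n + 1) →₀ ℕ) (1 : ℂ)) ⊔
        (Jf n f).restrictScalars ℂ := by
    rw [sum_comp α p _ rfl]
    exact sum_mem fun e _ => span_hom n d α f hd I hIspan e _
      (weightedHomogeneousComponent_isWeightedHomogeneous _ _)
  obtain ⟨u, hu, v, hv, huv⟩ := Submodule.mem_sup.mp h
  have h2 : Ideal.Quotient.mk (Jf n f) p = Ideal.Quotient.mkₐ ℂ (Jf n f) u := by
    rw [← huv, map_add, Ideal.Quotient.eq_zero_iff_mem.mpr hv, add_zero]; rfl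
  rw [h2]
  have h3 := Submodule.mem_map_of_mem (f := (Ideal.Quotient.mkₐ ℂ (Jf n f)).toLinearMap) hu
  rw [Submodule.map_span, ← Set.range_comp] at h3
  exact h3

lemma coker_fin (n d : ℕ) (α : Fin (n + 1) → ℕ) (f : MvPolynomial (Fin (n + 1)) ℂ)
    (hd : weightedTotalDegree α f = d)
    (I : Finset (Fin (n + 1) →₀ ℕ))
    (hIspan : Submodule.span ℂ (Set.range fun β : I =>
      Ideal.Quotient.mk (Jf n (weightedHomogeneousComponent α d f))
        (monomial (β : Fin (n + 1) →₀ ℕ) (1 : ℂ))) = ⊤) :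
    Module.Finite ℂ (Polynomial (MvPolynomial (Fin (n + 1)) ℂ ⧸ Jf n f) ⧸
      LinearMap.range (thT n α f).toLinearMap) := by
  classical
  set R := LinearMap.range (thT n α f).toLinearMap with hR
  have hB := span_B n d α f hd I hIspan
  let M := ∑ β ∈ I, Finsupp.weight α β
  let v : (Fin (n + 1) →₀ ℕ) × ℕ → Polynomial (MvPolynomial (Fin (n + 1)) ℂ ⧸ Jf n f) :=
    fun p => Polynomial.monomial p.2 (Ideal.Quotient.mk (Jf n f) (monomial p.1 (1 : ℂ)))
  let S : Finset (Polynomial (MvPolynomial (Fin (n + 1)) ℂ ⧸ Jf n f)) :=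
    (I ×ˢ Finset.range M).image v
  have htop : ∀ q, q ∈ Submodule.span ℂ (S : Set _) ⊔ R := by
    intro q
    induction q using Polynomial.induction_on' with
    | add p q hp hq => exact add_mem hp hq
    | monomial N a =>
      have : (⊤ : Submodule ℂ (MvPolynomial (Fin (n + 1)) ℂ ⧸ Jf n f)) ≤
          (Submodule.span ℂ (S : Set _) ⊔ R).comap ((Polynomial.monomial N).restrictScalars ℂ) := by
        rw [← hB, Submodule.span_le]
        rintro _ ⟨β, rfl⟩
        show Polynomial.monomial N (Ideal.Quotient.mk (Jf n f) (monomial (β : Fin (n + 1) →₀ ℕ) (1 : ℂ))) ∈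
          Submodule.span ℂ (S : Set _) ⊔ R
        by_cases hN : N < M
        · refine (le_sup_left : _ ≤ Submodule.span ℂ (S : Set _) ⊔ R) (Submodule.subset_span ?_)
          exact Finset.mem_coe.mpr (Finset.mem_image.mpr ⟨(β, N), Finset.mem_product.mpr
            ⟨β.2, Finset.mem_range.mpr hN⟩, rfl⟩)
        · refine (le_sup_right : R ≤ Submodule.span ℂ (S : Set _) ⊔ R) ?_
          have hw : Finsupp.weight α (β : Fin (n + 1) →₀ ℕ) ≤ N :=
            le_trans (Finset.single_le_sum (f := fun β => Finsupp.weight α β)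
              (fun _ _ => Nat.zero_le _) β.2) (not_lt.mp hN)
          refine ⟨X 0 ^ (N - Finsupp.weight α (β : Fin (n + 1) →₀ ℕ)) *
            rename Fin.succ (monomial (β : Fin (n + 1) →₀ ℕ) (1 : ℂ)), ?_⟩
          show thT n α f _ = _
          rw [map_mul, map_pow, thT, aeval_rename, aeval_X]
          have := aeval_hom α _ _ (isWeightedHomogeneous_monomial α (β : Fin (n + 1) →₀ ℕ) (1:ℂ) rfl)
            Polynomial.X (fun j => Polynomial.C (Ideal.Quotient.mk (Jf n f) (X j)))
          rw [aeval_polyC] at this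
          refine (congrArg _ this).trans ?_
          rw [Fin.cons_zero, ← mul_assoc, ← pow_add, Nat.sub_add_cancel hw]
          exact (Polynomial.X_pow_mul_C _ _).trans Polynomial.C_mul_X_pow_eq_monomial
      exact this (show a ∈ ⊤ from trivial)
  refine ⟨⟨S.image R.mkQ, ?_⟩⟩
  rw [Finset.coe_image, ← Submodule.map_span, eq_top_iff]
  intro z _
  obtain ⟨q, rfl⟩ := R.mkQ_surjective z
  obtain ⟨u, hu, v, hv, huv⟩ := Submodule.mem_sup.mp (htop q)
  refine ⟨u, hu, ?_⟩
  rw [← huv, map_add, (show R.mkQ v = 0 by simpa using hv), add_zero]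

lemma rank_comp_q {V W Z : Type} [AddCommGroup V] [Module ℂ V] [AddCommGroup W] [Module ℂ W]
    [AddCommGroup Z] [Module ℂ Z] (f : V →ₗ[ℂ] W) (g : W →ₗ[ℂ] Z) (hg : Function.Injective g) :
    Module.rank ℂ (Z ⧸ LinearMap.range (g ∘ₗ f)) =
      Module.rank ℂ (W ⧸ LinearMap.range f) + Module.rank ℂ (Z ⧸ LinearMap.range g) := by
  have hle : LinearMap.range (g ∘ₗ f) ≤ LinearMap.range g := LinearMap.range_comp_le_range _ _
  let φ := Submodule.factor hle
  have hφ : Function.Surjective φ := Submodule.factor_surjective hle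
  have h1 : LinearMap.range f ≤ (LinearMap.range (g ∘ₗ f)).comap g := by
    rintro _ ⟨v, rfl⟩
    exact ⟨v, rfl⟩
  let ψ := Submodule.mapQ _ _ g h1
  have hψ : Function.Injective ψ := by
    rw [injective_iff_map_eq_zero]
    intro a ha
    obtain ⟨w, rfl⟩ := Submodule.Quotient.mk_surjective _ a
    have ha : (Submodule.Quotient.mk (g w) : Z ⧸ LinearMap.range (g ∘ₗ f)) = 0 := ha
    rw [Submodule.Quotient.mk_eq_zero] at ha ⊢
    obtain ⟨v, hv⟩ := ha
    exact ⟨v, hg hv⟩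
  have h2 : LinearMap.ker φ = LinearMap.range ψ := by
    ext a
    obtain ⟨z, rfl⟩ := Submodule.Quotient.mk_surjective _ a
    constructor
    · intro hz
      have hz : (Submodule.Quotient.mk z : Z ⧸ LinearMap.range g) = 0 := hz
      rw [Submodule.Quotient.mk_eq_zero] at hz
      obtain ⟨w, rfl⟩ := hz
      exact ⟨Submodule.Quotient.mk w, rfl⟩
    · rintro ⟨b, hb⟩
      obtain ⟨w, rfl⟩ := Submodule.Quotient.mk_surjective _ b
      rw [← hb]
      show (Submodule.Quotient.mk (g w) : Z ⧸ LinearMap.range g) = 0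
      rw [Submodule.Quotient.mk_eq_zero]
      exact ⟨w, rfl⟩
  rw [LinearMap.rank_eq_of_surjective hφ, h2, rank_range_of_injective ψ hψ, add_comm]

lemma rank_cancel {A P : Type} [AddCommGroup A] [Module ℂ A] [AddCommGroup P] [Module ℂ P]
    (θ : A →ₗ[ℂ] P) (hθ : Function.Injective θ) [Module.Finite ℂ (P ⧸ LinearMap.range θ)]
    (a : A →ₗ[ℂ] A) (a' : P →ₗ[ℂ] P) (ha' : Function.Injective a') (h : θ ∘ₗ a = a' ∘ₗ θ) :
    Module.rank ℂ (A ⧸ LinearMap.range a) = Module.rank ℂ (P ⧸ LinearMap.range a') := by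
  have h1 := rank_comp_q a θ hθ
  have h2 := rank_comp_q θ a' ha'
  rw [h] at h1
  rw [h1, add_comm] at h2
  exact Cardinal.eq_of_add_eq_add_left h2 (Module.rank_lt_aleph0 ℂ _)

lemma qrank {T M : Type} [CommRing T] [Algebra ℂ T] [AddCommGroup M] [Module ℂ M]
    (K : Ideal T) (φ : T →ₗ[ℂ] M) (hφ : Function.Surjective φ) (hK : ∀ t, φ t = 0 ↔ t ∈ K) :
    Module.rank ℂ (T ⧸ K) = Module.rank ℂ M := by
  have h : K.restrictScalars ℂ = LinearMap.ker φ := by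
    ext t; exact (hK t).symm
  exact ((Submodule.Quotient.restrictScalarsEquiv ℂ K).symm ≪≫ₗ Submodule.quotEquivOfEq _ _ h ≪≫ₗ
    φ.quotKerEquivOfSurjective hφ).rank_eq

lemma rank_mulq {T : Type} [CommRing T] [Algebra ℂ T] (J : Ideal T) (a : T) :
    Module.rank ℂ (T ⧸ (J ⊔ Ideal.span {a})) = Module.rank ℂ ((T ⧸ J) ⧸
      LinearMap.range (LinearMap.mulLeft ℂ (Ideal.Quotient.mk J a))) := by
  apply qrank _ ((Submodule.mkQ _).comp (Ideal.Quotient.mkₐ ℂ J).toLinearMap)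
  · exact (Submodule.mkQ_surjective _).comp Ideal.Quotient.mk_surjective
  · intro t
    show Submodule.Quotient.mk (Ideal.Quotient.mk J t) = _ ↔ _
    rw [Submodule.Quotient.mk_eq_zero, Submodule.mem_sup]
    constructor
    · rintro ⟨q, hq⟩
      obtain ⟨q, rfl⟩ := Ideal.Quotient.mk_surjective q
      refine ⟨t - a * q, ?_, a * q, Ideal.mul_mem_right _ _ (Ideal.mem_span_singleton_self a), by ring⟩
      rw [← Ideal.Quotient.eq_zero_iff_mem, map_sub, sub_eq_zero, map_mul]
      exact hq.symm
    · rintro ⟨j, hj, z, hz, rfl⟩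
      obtain ⟨q, rfl⟩ := Ideal.mem_span_singleton'.mp hz
      refine ⟨Ideal.Quotient.mk J q, ?_⟩
      rw [map_add, Ideal.Quotient.eq_zero_iff_mem.mpr hj, zero_add, map_mul, mul_comm]
      rfl

lemma rank_X {B : Type} [CommRing B] [Algebra ℂ B] :
    Module.rank ℂ (Polynomial B ⧸ LinearMap.range (LinearMap.mulLeft ℂ (Polynomial.X : Polynomial B))) =
      Module.rank ℂ B := by
  let φ : Polynomial B →ₗ[ℂ] B := (Polynomial.lcoeff B 0).restrictScalars ℂ
  have hφ : Function.Surjective φ := fun b => ⟨Polynomial.C b, Polynomial.coeff_C_zero⟩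
  have h : LinearMap.range (LinearMap.mulLeft ℂ (Polynomial.X : Polynomial B)) = LinearMap.ker φ := by
    ext t
    rw [LinearMap.mem_ker]
    show _ ↔ t.coeff 0 = 0
    rw [← Polynomial.X_dvd_iff]
    constructor
    · rintro ⟨q, rfl⟩; exact ⟨q, rfl⟩
    · rintro ⟨q, rfl⟩; exact ⟨q, rfl⟩
  exact (Submodule.quotEquivOfEq _ _ h ≪≫ₗ φ.quotKerEquivOfSurjective hφ).rank_eq

lemma rank_X_pow {B : Type} [CommRing B] [Algebra ℂ B] (k : ℕ) :
    Module.rank ℂ (Polynomial B ⧸ LinearMap.range (LinearMap.mulLeft ℂ (Polynomial.X ^ k : Polynomial B))) =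
      k * Module.rank ℂ B := by
  induction k with
  | zero =>
    have : LinearMap.range (LinearMap.mulLeft ℂ (Polynomial.X ^ 0 : Polynomial B)) = ⊤ := by
      rw [eq_top_iff]; intro t _; exact ⟨t, by simp⟩
    rw [this, Nat.cast_zero, zero_mul, rank_subsingleton' ]
  | succ k ih =>
    have : LinearMap.mulLeft ℂ (Polynomial.X ^ (k + 1) : Polynomial B) =
        LinearMap.mulLeft ℂ (Polynomial.X : Polynomial B) ∘ₗ
          LinearMap.mulLeft ℂ (Polynomial.X ^ k : Polynomial B) := by
      rw [pow_succ', LinearMap.mulLeft_mul]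
    rw [this, rank_comp_q _ _ (Polynomial.isRegular_X.left), ih, rank_X]
    push_cast
    rw [add_mul, one_mul]

lemma rank_X_pow_unit {B : Type} [CommRing B] [Algebra ℂ B] (k : ℕ) (u : Polynomial B) (hu : IsUnit u) :
    Module.rank ℂ (Polynomial B ⧸ LinearMap.range (LinearMap.mulLeft ℂ (Polynomial.X ^ k * u : Polynomial B))) =
      k * Module.rank ℂ B := by
  rw [← rank_X_pow]
  have : LinearMap.range (LinearMap.mulLeft ℂ (Polynomial.X ^ k * u : Polynomial B)) =
      LinearMap.range (LinearMap.mulLeft ℂ (Polynomial.X ^ k : Polynomial B)) := by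
    rw [LinearMap.mulLeft_mul, LinearMap.range_comp_of_range_eq_top]
    rw [eq_top_iff]
    intro t _
    obtain ⟨v, hv⟩ := hu.exists_right_inv
    refine ⟨v * t, ?_⟩
    show u * (v * t) = t
    rw [← mul_assoc, hv, one_mul]
  rw [this]

lemma rank_JX (n d : ℕ) (α : Fin (n + 1) → ℕ) (f : MvPolynomial (Fin (n + 1)) ℂ) (b : ℂ) :
    Module.rank ℂ (MvPolynomial (Fin (n + 2)) ℂ ⧸ (Js n d α f b ⊔ Ideal.span {X 0})) =
      Module.rank ℂ (MvPolynomial (Fin (n + 1)) ℂ ⧸ Jf n (weightedHomogeneousComponent α d f)) := by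
  set g := weightedHomogeneousComponent α d f with hg
  let ev : MvPolynomial (Fin (n + 2)) ℂ →ₐ[ℂ] MvPolynomial (Fin (n + 1)) ℂ := aeval (Fin.cons 0 X)
  have hev : ∀ p, ev (rename Fin.succ p) = p := fun p => by
    show aeval _ _ = _
    rw [aeval_rename]
    exact aeval_X_left_apply p
  have hev0 : ev (X 0) = 0 := by show aeval _ _ = _; rw [aeval_X]; rfl
  have hdiff : ∀ t, t - rename Fin.succ (ev t) ∈ Ideal.span {(X 0 : MvPolynomial (Fin (n + 2)) ℂ)} := by
    intro t
    rw [← Ideal.Quotient.mk_eq_mk_iff_sub_mem]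
    induction t using MvPolynomial.induction_on with
    | C a =>
      rw [← MvPolynomial.algebraMap_eq, AlgHom.commutes, AlgHom.commutes]
    | add p q hp hq => simp only [map_add, hp, hq]
    | mul_X p i hp =>
      simp only [map_mul]
      rw [← hp]
      congr 1
      refine Fin.cases ?_ (fun j => ?_) i
      · rw [hev0, map_zero, map_zero, Ideal.Quotient.eq_zero_iff_mem]
        exact Ideal.mem_span_singleton_self _
      · show _ = Ideal.Quotient.mk _ (rename Fin.succ (aeval _ _))
        rw [aeval_X, Fin.cons_succ, rename_X]
  have hF : ∀ i : Fin (n + 1), ev (pderiv i.succ (homogenization n d α f - C b * X 0 ^ d)) = pderiv i g := by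
    intro i
    rw [pderiv_succ_F, map_sum, Finset.sum_range_succ, Finset.sum_eq_zero]
    · rw [map_mul, hev, Nat.sub_self, pow_zero, map_one, mul_one, zero_add]
    · intro e he
      have : d - e ≠ 0 := by have := Finset.mem_range.mp he; omega
      rw [map_mul, map_pow, hev0, zero_pow this, mul_zero]
  apply qrank _ ((Ideal.Quotient.mkₐ ℂ (Jf n g)).toLinearMap ∘ₗ ev.toLinearMap)
  · exact Ideal.Quotient.mk_surjective.comp (fun p => ⟨_, hev p⟩)
  · intro t
    show Ideal.Quotient.mk _ (ev t) = 0 ↔ _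
    rw [Ideal.Quotient.eq_zero_iff_mem]
    constructor
    · intro h
      have h1 : Jf n g ≤ (Js n d α f b ⊔ Ideal.span {X 0}).comap (rename (R := ℂ) Fin.succ) := by
        rw [Jf, Ideal.span_le]
        rintro _ ⟨i, rfl⟩
        show rename Fin.succ (pderiv i g) ∈ Js n d α f b ⊔ Ideal.span {X 0}
        have h2 := hdiff (pderiv i.succ (homogenization n d α f - C b * X 0 ^ d))
        rw [hF] at h2
        have h3 := sub_mem ((le_sup_left : Js n d α f b ≤ Js n d α f b ⊔ Ideal.span {X 0})
          (Ideal.subset_span ⟨i, rfl⟩)) ((le_sup_right : _ ≤ Js n d α f b ⊔ Ideal.span {X 0}) h2)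
        simpa using h3
      have h4 := add_mem ((le_sup_right : _ ≤ Js n d α f b ⊔ Ideal.span {X 0}) (hdiff t)) (h1 h)
      simpa using h4
    · intro h
      have h1 : Js n d α f b ⊔ Ideal.span {X 0} ≤ (Jf n g).comap ev := by
        rw [sup_le_iff, Js, Ideal.span_le, Ideal.span_le]
        constructor
        · rintro _ ⟨i, rfl⟩
          show ev _ ∈ Jf n g
          rw [hF]
          exact Ideal.subset_span ⟨i, rfl⟩
        · rintro _ rfl
          show ev _ ∈ Jf n g
          rw [hev0]
          exact zero_mem _
      exact h1 h

lemma full_eq (n d : ℕ) (α : Fin (n + 1) → ℕ) (f : MvPolynomial (Fin (n + 1)) ℂ) (b : ℂ) :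
    fullJacobianIdeal n d α f b = Js n d α f b ⊔
      Ideal.span {pderiv 0 (homogenization n d α f - C b * X 0 ^ d)} := by
  rw [fullJacobianIdeal, Js, ← Ideal.span_union]
  congr 1
  ext t
  constructor
  · rintro ⟨i, rfl⟩
    refine Fin.cases (Or.inr rfl) (fun j => Or.inl ⟨j, rfl⟩) i
  · rintro (⟨i, rfl⟩ | rfl)
    · exact ⟨i.succ, rfl⟩
    · exact ⟨0, rfl⟩

lemma unit_f (n : ℕ) (f : MvPolynomial (Fin (n + 1)) ℂ) (b : ℂ)
    (hb : b ∉ (fun x => eval x f) '' {x : Fin (n + 1) → ℂ | ∀ i, eval x (pderiv i f) = 0}) :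
    IsUnit (Ideal.Quotient.mk (Jf n f) (f - C b)) := by
  have htop : Jf n f ⊔ Ideal.span {f - C b} = ⊤ := by
    have hz : zeroLocus ℂ (Jf n f ⊔ Ideal.span {f - C b}) = ∅ := by
      rw [Set.eq_empty_iff_forall_notMem]
      intro x hx
      rw [mem_zeroLocus_iff] at hx
      apply hb
      refine ⟨x, fun i => ?_, ?_⟩
      · have := hx (pderiv i f) ((le_sup_left : Jf n f ≤ _) (Ideal.subset_span ⟨i, rfl⟩))
        simpa [aeval_eq_eval] using this
      · have := hx (f - C b) ((le_sup_right : _ ≤ Jf n f ⊔ Ideal.span {f - C b})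
          (Ideal.mem_span_singleton_self _))
        simpa [aeval_eq_eval, sub_eq_zero] using this
    have := vanishingIdeal_zeroLocus_eq_radical (k := ℂ) (K := ℂ) (Jf n f ⊔ Ideal.span {f - C b})
    rw [hz] at this
    rw [← Ideal.radical_eq_top, ← this, vanishingIdeal_empty]
  have h1 : (1 : MvPolynomial (Fin (n + 1)) ℂ) ∈ Jf n f ⊔ Ideal.span {f - C b} := by
    rw [htop]; trivial
  obtain ⟨j, hj, z, hz, h⟩ := Submodule.mem_sup.mp h1
  obtain ⟨q, rfl⟩ := Ideal.mem_span_singleton'.mp hz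
  have h2 := congrArg (Ideal.Quotient.mk (Jf n f)) h
  rw [map_add, Ideal.Quotient.eq_zero_iff_mem.mpr hj, zero_add, map_mul, map_one] at h2
  exact IsUnit.of_mul_eq_one_right _ h2

lemma rank_main (n d : ℕ) (α : Fin (n + 1) → ℕ) (f : MvPolynomial (Fin (n + 1)) ℂ) (b : ℂ)
    (hd : weightedTotalDegree α f = d) (hd1 : 1 ≤ d)
    (htame : ∀ x : Fin (n + 1) → ℂ,
      (∀ i, eval x (pderiv i (weightedHomogeneousComponent α d f)) = 0) → x = 0)
    (I : Finset (Fin (n + 1) →₀ ℕ))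
    (hIspan : Submodule.span ℂ (Set.range fun β : I =>
      Ideal.Quotient.mk (Jf n (weightedHomogeneousComponent α d f))
        (monomial (β : Fin (n + 1) →₀ ℕ) (1 : ℂ))) = ⊤)
    (hb : b ∉ (fun x => eval x f) '' {x : Fin (n + 1) → ℂ | ∀ i, eval x (pderiv i f) = 0}) :
    Module.rank ℂ (MvPolynomial (Fin (n + 2)) ℂ ⧸ fullJacobianIdeal n d α f b) =
      ((d - 1 : ℕ) : Cardinal) * Module.rank ℂ
        (MvPolynomial (Fin (n + 1)) ℂ ⧸ Jf n (weightedHomogeneousComponent α d f)) := by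
  let A := MvPolynomial (Fin (n + 2)) ℂ ⧸ Js n d α f b
  have hk := thT_ker n d α f b hd htame
  let θ : A →ₐ[ℂ] Polynomial (MvPolynomial (Fin (n + 1)) ℂ ⧸ Jf n f) :=
    Ideal.Quotient.liftₐ _ (thT n α f) (fun a ha => (hk a).mpr ha)
  have hθ : Function.Injective θ := by
    rw [injective_iff_map_eq_zero]
    intro a ha
    obtain ⟨q, rfl⟩ := Ideal.Quotient.mk_surjective a
    exact Ideal.Quotient.eq_zero_iff_mem.mpr ((hk q).mp ha)
  have hr : LinearMap.range θ.toLinearMap = LinearMap.range (thT n α f).toLinearMap := by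
    ext z
    constructor
    · rintro ⟨a, rfl⟩
      obtain ⟨q, rfl⟩ := Ideal.Quotient.mk_surjective a
      exact ⟨q, rfl⟩
    · rintro ⟨q, rfl⟩
      exact ⟨Ideal.Quotient.mk _ q, rfl⟩
  have hfin : Module.Finite ℂ (Polynomial (MvPolynomial (Fin (n + 1)) ℂ ⧸ Jf n f) ⧸
      LinearMap.range θ.toLinearMap) := by
    rw [hr]; exact coker_fin n d α f hd I hIspan
  have hcan : ∀ t : MvPolynomial (Fin (n + 2)) ℂ,
      Function.Injective (LinearMap.mulLeft ℂ (thT n α f t)) →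
      Module.rank ℂ (MvPolynomial (Fin (n + 2)) ℂ ⧸ (Js n d α f b ⊔ Ideal.span {t})) =
      Module.rank ℂ (Polynomial (MvPolynomial (Fin (n + 1)) ℂ ⧸ Jf n f) ⧸
        LinearMap.range (LinearMap.mulLeft ℂ (thT n α f t))) := by
    intro t ht
    rw [rank_mulq]
    refine rank_cancel θ.toLinearMap hθ _ _ ht ?_
    refine LinearMap.ext fun a => ?_
    exact map_mul θ (Ideal.Quotient.mk _ t) a
  have hX : thT n α f (X 0) = Polynomial.X := by
    rw [thT, aeval_X, Fin.cons_zero]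
  have h1 := hcan (X 0) (by rw [hX]; exact Polynomial.isRegular_X.left)
  rw [hX, rank_X, rank_JX] at h1
  have hu : IsUnit (Polynomial.C (Ideal.Quotient.mk (Jf n f) (C (d : ℂ) * (f - C b)))) := by
    have hdu : IsUnit (d : ℂ) := isUnit_iff_ne_zero.mpr (Nat.cast_ne_zero.mpr (by omega))
    have h3 := ((hdu.map (C (σ := Fin (n + 1)))).map (Ideal.Quotient.mk (Jf n f))).mul (unit_f n f b hb)
    rw [← map_mul] at h3
    exact h3.map Polynomial.C
  have hh := thT_h n d α f b hd hd1
  have h2 := hcan (pderiv 0 (homogenization n d α f - C b * X 0 ^ d)) (by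
    rw [hh]
    exact ((Polynomial.isRegular_X_pow (d - 1)).left.mul hu.isRegular.left))
  rw [full_eq, h2, hh, rank_X_pow_unit _ _ hu, h1]

lemma d_pos (n d : ℕ) (α : Fin (n + 1) → ℕ) (hαpos : ∀ i, 0 < α i)
    (f : MvPolynomial (Fin (n + 1)) ℂ)
    (htame : ∀ x : Fin (n + 1) → ℂ,
      (∀ i, eval x (pderiv i (weightedHomogeneousComponent α d f)) = 0) → x = 0) : 1 ≤ d := by
  by_contra h
  have h0 : d = 0 := by omega
  subst h0
  have := htame (fun _ => 1) (fun i => by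
    rcases pd_hom α _ 0 (weightedHomogeneousComponent_isWeightedHomogeneous 0 f) i with h | ⟨h, _⟩
    · rw [h, map_zero]
    · exact absurd (hαpos i) (by omega))
  exact one_ne_zero (congrFun this 0)

/-- Let `f` be strongly tame of weighted degree `d` with homogenization `F`,
`μ = dim_ℂ V_g`, and let `b` be a regular value of `f`.  Then
`dim_ℂ ℂ[x₀,x]/⟨∂F_b/∂x₀,…,∂F_b/∂x_{n+1}⟩ = (d-1)·μ`, and consequently every function
`β ↦ d_β` for which the monomials `x₀^{β₀}x^β`, `β ∈ I`, `0 ≤ β₀ ≤ d_β - 1`, form a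
ℂ-basis of this quotient satisfies `Σ_{β∈I} d_β = (d-1)·μ`. -/
theorem dim_full_jacobian_quotient
    (n : ℕ) (hn : 1 ≤ n) (α : Fin (n + 1) → ℕ)
    (hαpos : ∀ i, 0 < α i) (hα : Finset.univ.gcd α = 1)
    (f : MvPolynomial (Fin (n + 1)) ℂ) (d : ℕ)
    (hd : MvPolynomial.weightedTotalDegree α f = d)
    (g : MvPolynomial (Fin (n + 1)) ℂ)
    (hg : g = weightedHomogeneousComponent α d f)
    (hg0 : g ≠ 0)
    (htame : ∀ x : Fin (n + 1) → ℂ, (∀ i, eval x (pderiv i g) = 0) → x = 0)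
    (μ : ℕ)
    (hμ : μ = Module.finrank ℂ
      (MvPolynomial (Fin (n + 1)) ℂ ⧸ Ideal.span (Set.range fun i => pderiv i g)))
    (I : Finset (Fin (n + 1) →₀ ℕ))
    (hIindep : LinearIndependent ℂ (fun β : I =>
      Ideal.Quotient.mk (Ideal.span (Set.range fun i => pderiv i g))
        (monomial (β : Fin (n + 1) →₀ ℕ) (1 : ℂ))))
    (hIspan : Submodule.span ℂ (Set.range fun β : I =>
      Ideal.Quotient.mk (Ideal.span (Set.range fun i => pderiv i g))
        (monomial (β : Fin (n + 1) →₀ ℕ) (1 : ℂ))) = ⊤)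
    (b : ℂ)
    (hb : b ∉ (fun x => eval x f) '' {x : Fin (n + 1) → ℂ | ∀ i, eval x (pderiv i f) = 0}) :
    Module.finrank ℂ
      (MvPolynomial (Fin (n + 2)) ℂ ⧸ fullJacobianIdeal n d α f b) = (d - 1) * μ ∧
    ∀ dβ : (Fin (n + 1) →₀ ℕ) → ℕ,
      (LinearIndependent ℂ
        (fun p : {p : (Fin (n + 1) →₀ ℕ) × ℕ // p.1 ∈ I ∧ p.2 < dβ p.1} =>
          Ideal.Quotient.mk (fullJacobianIdeal n d α f b)
            (X 0 ^ (p : (Fin (n + 1) →₀ ℕ) × ℕ).2 *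
              rename Fin.succ (monomial (p : (Fin (n + 1) →₀ ℕ) × ℕ).1 (1 : ℂ)))) ∧
       Submodule.span ℂ
        (Set.range fun p : {p : (Fin (n + 1) →₀ ℕ) × ℕ // p.1 ∈ I ∧ p.2 < dβ p.1} =>
          Ideal.Quotient.mk (fullJacobianIdeal n d α f b)
            (X 0 ^ (p : (Fin (n + 1) →₀ ℕ) × ℕ).2 *
              rename Fin.succ (monomial (p : (Fin (n + 1) →₀ ℕ) × ℕ).1 (1 : ℂ)))) = ⊤) →
      ∑ β ∈ I, dβ β = (d - 1) * μ := by
  subst hg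
  have hd1 := d_pos n d α hαpos f htame
  have hr := rank_main n d α f b hd hd1 htame I hIspan hb
  have hfr : Module.finrank ℂ
      (MvPolynomial (Fin (n + 2)) ℂ ⧸ fullJacobianIdeal n d α f b) = (d - 1) * μ := by
    rw [hμ, Module.finrank, hr, Cardinal.toNat_mul, Cardinal.toNat_natCast]
    rfl
  refine ⟨hfr, ?_⟩
  rintro dβ ⟨hli, hsp⟩
  have hc := Module.finrank_eq_nat_card_basis (Module.Basis.mk hli hsp.ge)
  rw [← hfr, hc]
  have e : {p : (Fin (n + 1) →₀ ℕ) × ℕ // p.1 ∈ I ∧ p.2 < dβ p.1} ≃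
      (I.sigma fun β => Finset.range (dβ β)) :=
    { toFun := fun p => ⟨⟨p.1.1, p.1.2⟩, by simpa using p.2⟩
      invFun := fun p => ⟨(p.1.1, p.1.2), by
        have := Finset.mem_sigma.mp p.2
        exact ⟨this.1, Finset.mem_range.mp this.2⟩⟩
      left_inv := fun p => rfl
      right_inv := fun p => rfl }
  rw [Nat.card_congr e, Nat.card_eq_fintype_card, Fintype.card_coe, Finset.card_sigma]
  simp
end
end

section
/- Let f ∈ ℂ[x₁,…,x_{n+1}] be a strongly tame polynomial of weighted degree d, b a regular value of f, and β ↦ d_β a function such that the monomials x₀^{β₀}x^β, β ∈ I, 0 ≤ β₀ ≤ d_β − 1, form a ℂ-basis of ℂ[x₀,x]/⟨∂F_b/∂xᵢ : i = 0,…,n+1⟩. Then for every β ∈ I one has d_β < d·(n + 2 − A_β), where A_β := Σᵢ (βᵢ+1)αᵢ/d. Equivalently, every basis monomial x₀^{β₀}x^β satisfies 0 < A_β + (β₀+1)/d < n + 2. -/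
open MvPolynomial

noncomputable section

section RegSeq
open RingTheory.Sequence IsLocalRing CategoryTheory CategoryTheory.Abelian

universe u

lemma aux_avoid {R : Type u} [CommRing R] [IsLocalRing R]
    (S : Set (Ideal R)) (hS : S.Finite) (hp : ∀ Q ∈ S, Q.IsPrime) (hm : ∀ Q ∈ S, Q ≠ maximalIdeal R) :
    ∃ b ∈ maximalIdeal R, ∀ Q ∈ S, b ∉ Q := by
  by_contra! h
  have h1 : ((maximalIdeal R : Ideal R) : Set R) ⊆ ⋃ I ∈ S, (I : Set R) := by
    intro x hx
    obtain ⟨Q, hQ, hxQ⟩ := h x hx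
    exact Set.mem_biUnion hQ hxQ
  rw [Ideal.subset_iUnion_iff_mem_of_isMaximal_of_finite hS ⊥ ⊥ (fun I hI _ _ => hp I hI)] at h1
  · exact hm _ h1 rfl
  · exact bot_ne_top
  · exact bot_ne_top

lemma aux_krull {R : Type u} [CommRing R] [IsLocalRing R] [IsNoetherianRing R]
    (Q Q' : Ideal R) [Q.IsPrime] [Q'.IsPrime] (x : R) (hx : x ∈ maximalIdeal R)
    (hQ : ∀ P : Ideal R, P.IsPrime → Q ≤ P → x ∈ P → P = maximalIdeal R)
    (hlt : Q < Q') : Q' = maximalIdeal R := by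
  have hmin : maximalIdeal R ∈ (Q ⊔ Ideal.span {x}).minimalPrimes := by
    refine ⟨⟨inferInstance, sup_le (le_maximalIdeal Ideal.IsPrime.ne_top')
      ((Ideal.span_singleton_le_iff_mem _).mpr hx)⟩, ?_⟩
    rintro P ⟨hP, hPl⟩ _
    rw [hQ P hP (le_sup_left.trans hPl) ((Ideal.span_singleton_le_iff_mem _).mp (le_sup_right.trans hPl))]
  have hh := Ideal.map_height_le_one_of_mem_minimalPrimes hmin
  by_contra hne
  have hlt2 : Q' < maximalIdeal R := lt_of_le_of_ne (le_maximalIdeal Ideal.IsPrime.ne_top') hne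
  let f := Ideal.Quotient.mk Q
  have hsurj : Function.Surjective f := Ideal.Quotient.mk_surjective
  have hc : ∀ P : Ideal R, Q ≤ P → (P.map f).comap f = P := fun P hP => by
    rw [Ideal.comap_map_of_surjective _ hsurj, ← RingHom.ker_eq_comap_bot, Ideal.mk_ker]
    exact sup_eq_left.mpr hP
  have hmono : ∀ P P' : Ideal R, Q ≤ P → P < P' → P.map f < P'.map f := fun P P' hP h => by
    refine lt_of_le_of_ne (Ideal.map_mono h.le) (fun e => h.ne ?_)
    rw [← hc P hP, e, hc P' (hP.trans h.le)]
  have pr : ∀ P : Ideal R, P.IsPrime → Q ≤ P → (P.map f).IsPrime := fun P hP h =>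
    Ideal.map_isPrime_of_surjective hsurj (by rwa [Ideal.mk_ker])
  have i1 := pr Q inferInstance le_rfl
  have i2 := pr Q' inferInstance hlt.le
  have i3 := pr (maximalIdeal R) inferInstance (hlt.trans hlt2).le
  have l1 := Ideal.height_add_one_le_of_lt_of_isPrime (hmono _ _ le_rfl hlt)
  have l2 := Ideal.height_add_one_le_of_lt_of_isPrime (hmono _ _ hlt.le hlt2)
  have : (1:ℕ∞) + 1 ≤ 1 := by
    calc (1:ℕ∞) + 1 ≤ (Q.map f).height + 1 + 1 := by gcongr; simp
      _ ≤ (Q'.map f).height + 1 := by gcongr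
      _ ≤ _ := l2.trans hh
  norm_num at this

theorem sop_regular {R : Type u} [CommRing R] [IsLocalRing R] [IsNoetherianRing R] (n : ℕ) :
    ∀ (M : ModuleCat.{u} R) [Module.Finite R M],
      (∀ i < n, Subsingleton (Ext (ModuleCat.of R (R ⧸ maximalIdeal R)) M i)) →
      ∀ ps : List R, ps.length = n → (∀ r ∈ ps, r ∈ maximalIdeal R) →
      (∀ Q : Ideal R, Q.IsPrime → Module.annihilator R M ≤ Q → (∀ r ∈ ps, r ∈ Q) →
        Q = maximalIdeal R) → IsWeaklyRegular M ps := by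
  induction n with
  | zero =>
    intro M _ _ ps hps _ _
    rw [List.length_eq_zero_iff] at hps
    subst hps
    exact IsWeaklyRegular.nil R M
  | succ n ih =>
    intro M _ hext ps hlen hmem hQ
    obtain ⟨ps, p, rfl⟩ : ∃ qs q, ps = qs ++ [q] := by
      rcases List.eq_nil_or_concat ps with h | ⟨L, b, h⟩
      · simp [h] at hlen
      · exact ⟨L, b, by simpa using h⟩
    have hlen' : ps.length = n := by simpa using hlen
    -- the regular element
    have h0 : Subsingleton ((R ⧸ maximalIdeal R) →ₗ[R] M) := by
      have : Subsingleton (ModuleCat.of R (R ⧸ maximalIdeal R) ⟶ M) :=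
        Ext.addEquiv₀.subsingleton_congr.mp (hext 0 n.zero_lt_succ)
      exact (ModuleCat.homAddEquiv (M := ModuleCat.of R (R ⧸ maximalIdeal R)) (N := M)).symm.subsingleton
    obtain ⟨x, hxm, hx⟩ := IsSMulRegular.subsingleton_linearMap_iff.mp h0
    rw [Ideal.annihilator_quotient] at hxm
    set A : Ideal R := Module.annihilator R M ⊔ Ideal.ofList ps with hA
    obtain ⟨b, hbm, hb⟩ := aux_avoid (associatedPrimes R M ∪ (A.minimalPrimes \ {maximalIdeal R}))
      ((associatedPrimes.finite R M).union
        ((Ideal.finite_minimalPrimes_of_isNoetherianRing R A).subset Set.sdiff_subset))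
      (by
        rintro Q (h | h)
        · exact IsAssociatedPrime.isPrime h
        · exact h.1.1.1)
      (by
        rintro Q (h | h) rfl
        · have : x ∈ ⋃ p ∈ associatedPrimes R M, (p : Set R) := Set.mem_biUnion h hxm
          rw [biUnion_associatedPrimes_eq_compl_regular R M] at this
          exact this hx
        · exact h.2 rfl)
    have hbreg : IsSMulRegular M b := by
      by_contra hcon
      have : b ∈ ⋃ p ∈ associatedPrimes R M, (p : Set R) := by
        rw [biUnion_associatedPrimes_eq_compl_regular R M]; exact hcon
      obtain ⟨Q, hQ1, hQ2⟩ := Set.mem_iUnion₂.mp this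
      exact hb Q (Or.inl hQ1) hQ2
    have hext' : ∀ i < n, Subsingleton (Ext (ModuleCat.of R (R ⧸ maximalIdeal R))
        (ModuleCat.of R (QuotSMulTop b M)) i) := by
      intro i hi
      have zero1 := AddCommGrpCat.isZero_of_iff_subsingleton.mpr (hext i (by omega))
      have zero2 := AddCommGrpCat.isZero_of_iff_subsingleton.mpr (hext (i + 1) (by omega))
      exact AddCommGrpCat.subsingleton_of_isZero <| ShortComplex.Exact.isZero_of_both_zeros
        ((Ext.covariant_sequence_exact₃' _ hbreg.smulShortComplex_shortExact) i (i + 1) rfl)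
        (zero1.eq_zero_of_src _) (zero2.eq_zero_of_tgt _)
    have hkey : IsWeaklyRegular (QuotSMulTop b M) ps := by
      refine ih (ModuleCat.of R (QuotSMulTop b M)) hext' ps hlen'
        (fun r hr => hmem r (by simp [hr])) ?_
      intro Q' hQ' hann hps
      have hbQ : b ∈ Q' := by
        apply hann
        rw [Module.mem_annihilator]
        intro y
        obtain ⟨y, rfl⟩ := Submodule.mkQ_surjective _ y
        rw [← map_smul, Submodule.mkQ_apply, Submodule.Quotient.mk_eq_zero]
        exact Submodule.smul_mem_pointwise_smul _ _ _ trivial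
      have hannM : Module.annihilator R M ≤ Q' :=
        (LinearMap.annihilator_le_of_surjective _ (Submodule.mkQ_surjective _)).trans hann
      have hAQ : A ≤ Q' := sup_le hannM (Ideal.span_le.mpr hps)
      obtain ⟨Q, hQm, hQQ⟩ := Ideal.exists_minimalPrimes_le hAQ
      have : Q.IsPrime := hQm.1.1
      by_cases hQe : Q = maximalIdeal R
      · subst hQe
        exact le_antisymm (le_maximalIdeal hQ'.ne_top) hQQ
      · have hlt : Q < Q' := lt_of_le_of_ne hQQ (fun e => hb Q (Or.inr ⟨hQm, hQe⟩) (e ▸ hbQ))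
        refine aux_krull Q Q' p (hmem p (by simp)) ?_ hlt
        intro P hP hQP hpP
        refine hQ P hP ((le_sup_left.trans hQm.1.2).trans hQP) ?_
        intro r hr
        simp only [List.mem_append, List.mem_singleton] at hr
        rcases hr with hr | rfl
        · exact hQP (hQm.1.2 (Ideal.mem_sup_right (Ideal.subset_span hr)))
        · exact hpP
    have hcons : IsWeaklyRegular M (b :: ps) := IsWeaklyRegular.cons hbreg hkey
    have hperm : IsWeaklyRegular M (ps ++ [b]) :=
      isWeaklyRegular_of_perm_of_subset_maximalIdeal hcons
        ((List.perm_append_singleton b ps).symm) (by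
          intro r hr
          rcases List.mem_cons.mp hr with rfl | hr
          · exact hbm
          · exact hmem r (by simp [hr]))
    rw [isWeaklyRegular_append_iff, isWeaklyRegular_singleton_iff] at hperm ⊢
    refine ⟨hperm.1, ?_⟩
    have hrad : b ∈ (A ⊔ Ideal.span {p}).radical := by
      rw [Ideal.radical_eq_sInf, Submodule.mem_sInf]
      rintro P ⟨hP, hPp⟩
      rw [hQ P hPp (le_sup_left.trans (le_sup_left.trans hP))]
      · exact hbm
      · intro r hr
        simp only [List.mem_append, List.mem_singleton] at hr
        rcases hr with hr | rfl
        · exact hP (Ideal.mem_sup_left (Ideal.mem_sup_right (Ideal.subset_span hr)))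
        · exact hP (Ideal.mem_sup_right (Ideal.mem_span_singleton_self _))
    obtain ⟨k, hk⟩ := hrad
    obtain ⟨a, ha, c, hc, hac⟩ := Submodule.mem_sup.mp hk
    obtain ⟨c, rfl⟩ := Ideal.mem_span_singleton'.mp hc
    have hreg := hperm.2.pow k
    refine IsSMulRegular.of_mul (a := c) ?_
    intro y z hyz
    apply hreg
    have hz : ∀ y : (M ⧸ (Ideal.ofList ps • ⊤ : Submodule R M)), a • y = 0 := by
      intro y
      obtain ⟨y, rfl⟩ := Submodule.mkQ_surjective _ y
      rw [← map_smul, Submodule.mkQ_apply, Submodule.Quotient.mk_eq_zero]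
      obtain ⟨a1, ha1, a2, ha2, rfl⟩ := Submodule.mem_sup.mp ha
      rw [add_smul, Module.mem_annihilator.mp ha1, zero_add]
      exact Submodule.smul_mem_smul ha2 trivial
    simp only at hyz ⊢
    rw [← hac, add_smul, add_smul, hz, hz, hyz]

end RegSeq
section Hilb
open RingTheory.Sequence

variable {N : ℕ} (w : Fin N → ℕ)

lemma wcomp_mul_left (e D : ℕ) (q y : MvPolynomial (Fin N) ℂ) (hq : IsWeightedHomogeneous w q e) :
    weightedHomogeneousComponent w D (q * y) =
      if e ≤ D then q * weightedHomogeneousComponent w (D - e) y else 0 := by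
  let _ := weightedGradedAlgebra ℂ w
  have key : ∀ (z : MvPolynomial (Fin N) ℂ) (m : ℕ),
      ((DirectSum.decompose (weightedHomogeneousSubmodule ℂ w) z m : MvPolynomial (Fin N) ℂ))
      = weightedHomogeneousComponent w m z := fun z m =>
    weightedDecomposition.decompose'_apply ℂ w z m
  split_ifs with h
  · rw [← key, ← key]
    exact DirectSum.coe_decompose_mul_of_left_mem_of_le _ hq h
  · rw [← key]
    exact DirectSum.coe_decompose_mul_of_left_mem_of_not_le _ hq h

/-- closed under components -/
def HomIdeal (J : Ideal (MvPolynomial (Fin N) ℂ)) : Prop :=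
  ∀ x ∈ J, ∀ D, weightedHomogeneousComponent w D x ∈ J

lemma homIdeal_sup (J : Ideal (MvPolynomial (Fin N) ℂ)) (hJ : HomIdeal w J)
    (q : MvPolynomial (Fin N) ℂ) (e : ℕ) (hq : IsWeightedHomogeneous w q e) :
    HomIdeal w (J ⊔ Ideal.span {q}) := by
  intro x hx D
  obtain ⟨a, ha, c, hc, rfl⟩ := Submodule.mem_sup.mp hx
  obtain ⟨c, rfl⟩ := Ideal.mem_span_singleton'.mp hc
  rw [map_add]
  refine add_mem (Ideal.mem_sup_left (hJ a ha D)) (Ideal.mem_sup_right ?_)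
  rw [mul_comm, wcomp_mul_left w e D q c hq]
  split_ifs
  · exact Ideal.mul_mem_right _ _ (Ideal.mem_span_singleton_self _)
  · exact zero_mem _

lemma homIdeal_bot : HomIdeal w (⊥ : Ideal (MvPolynomial (Fin N) ℂ)) := by
  intro x hx D
  rw [Ideal.mem_bot] at hx
  simp [hx]

def grJ (J : Ideal (MvPolynomial (Fin N) ℂ)) (D : ℕ) : Submodule ℂ (MvPolynomial (Fin N) ℂ) :=
  J.restrictScalars ℂ ⊓ weightedHomogeneousSubmodule ℂ w D

def hilbF (J : Ideal (MvPolynomial (Fin N) ℂ)) (D : ℕ) : ℤ :=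
  (Module.finrank ℂ (weightedHomogeneousSubmodule ℂ w D) : ℤ) - Module.finrank ℂ (grJ w J D)

def hilb (J : Ideal (MvPolynomial (Fin N) ℂ)) : PowerSeries ℤ :=
  PowerSeries.mk (hilbF w J)

lemma hom_fin (hw : ∀ i, 0 < w i) (D : ℕ) :
    Module.Finite ℂ (weightedHomogeneousSubmodule ℂ w D) :=
  Module.Finite.iff_fg.mpr (weightedHomogeneousSubmodule_fg ℂ w (fun i => (hw i).ne') D)

lemma gr_fin (hw : ∀ i, 0 < w i) (J : Ideal (MvPolynomial (Fin N) ℂ)) (D : ℕ) :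
    Module.Finite ℂ (grJ w J D) := by
  have := hom_fin w hw D
  exact Submodule.finiteDimensional_of_le (inf_le_right)

lemma hilbF_step (hw : ∀ i, 0 < w i) (J : Ideal (MvPolynomial (Fin N) ℂ)) (hJ : HomIdeal w J)
    (q : MvPolynomial (Fin N) ℂ) (e : ℕ) (hq : IsWeightedHomogeneous w q e)
    (hreg : ∀ y, q * y ∈ J → y ∈ J) (D : ℕ) :
    hilbF w (J ⊔ Ideal.span {q}) D = hilbF w J D - if e ≤ D then hilbF w J (D - e) else 0 := by
  by_cases hq0 : q = 0
  · subst hq0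
    have hJt : J = ⊤ := (Ideal.eq_top_iff_one J).mpr (hreg 1 (by simp))
    subst hJt
    have : ∀ D, hilbF w ⊤ D = 0 := by
      intro D
      have : grJ w ⊤ D = weightedHomogeneousSubmodule ℂ w D := by
        ext x; simp [grJ]
      rw [hilbF, this, sub_self]
    simp [this]
  · split_ifs with h
    · have := gr_fin w hw J D
      have := hom_fin w hw (D - e)
      let φ := LinearMap.mulLeft ℂ q
      have hinj : Function.Injective φ := fun a b hab => mul_left_cancel₀ hq0 hab
      have h1 : grJ w (J ⊔ Ideal.span {q}) D =
          grJ w J D ⊔ (weightedHomogeneousSubmodule ℂ w (D - e)).map φ := by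
        apply le_antisymm
        · rintro x ⟨hx, hxD⟩
          obtain ⟨a, ha, c, hc, rfl⟩ := Submodule.mem_sup.mp hx
          obtain ⟨c, rfl⟩ := Ideal.mem_span_singleton'.mp hc
          have hh := weightedHomogeneousComponent_eq_self (w := w) hxD
          rw [map_add, mul_comm, wcomp_mul_left w e D q c hq, if_pos h] at hh
          rw [mul_comm, ← hh]
          refine Submodule.add_mem_sup ⟨hJ a ha D, weightedHomogeneousComponent_mem w a D⟩
            ⟨_, weightedHomogeneousComponent_mem w c (D - e), rfl⟩
        · refine sup_le ?_ ?_
          · rintro x ⟨hx, hxD⟩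
            exact ⟨Ideal.mem_sup_left hx, hxD⟩
          · rintro _ ⟨y, hy, rfl⟩
            refine ⟨Ideal.mem_sup_right (Ideal.mul_mem_right _ _ (Ideal.mem_span_singleton_self _)), ?_⟩
            have := hq.mul hy
            rwa [Nat.add_sub_cancel' h] at this
      have h2 : grJ w J D ⊓ (weightedHomogeneousSubmodule ℂ w (D - e)).map φ =
          (grJ w J (D - e)).map φ := by
        apply le_antisymm
        · rintro _ ⟨⟨hx, _⟩, ⟨y, hy, rfl⟩⟩
          exact ⟨y, ⟨hreg y hx, hy⟩, rfl⟩
        · rintro _ ⟨y, ⟨hy1, hy2⟩, rfl⟩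
          have := hq.mul hy2
          rw [Nat.add_sub_cancel' h] at this
          exact ⟨⟨Ideal.mul_mem_left _ _ hy1, this⟩, ⟨y, hy2, rfl⟩⟩
      have h3 := Submodule.finrank_sup_add_finrank_inf_eq (grJ w J D)
        ((weightedHomogeneousSubmodule ℂ w (D - e)).map φ)
      rw [← h1, h2, ← (Submodule.equivMapOfInjective φ hinj _).finrank_eq,
        ← (Submodule.equivMapOfInjective φ hinj _).finrank_eq] at h3
      simp only [hilbF]
      omega
    · have h1 : grJ w (J ⊔ Ideal.span {q}) D = grJ w J D := by
        apply le_antisymm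
        · rintro x ⟨hx, hxD⟩
          obtain ⟨a, ha, c, hc, rfl⟩ := Submodule.mem_sup.mp hx
          obtain ⟨c, rfl⟩ := Ideal.mem_span_singleton'.mp hc
          have hh := weightedHomogeneousComponent_eq_self (w := w) hxD
          rw [map_add, mul_comm, wcomp_mul_left w e D q c hq, if_neg h, add_zero] at hh
          rw [mul_comm, ← hh]
          exact ⟨hJ a ha D, weightedHomogeneousComponent_mem w a D⟩
        · rintro x ⟨hx, hxD⟩
          exact ⟨Ideal.mem_sup_left hx, hxD⟩
      simp only [hilbF, sub_zero]; rw [h1]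

lemma hilb_step (hw : ∀ i, 0 < w i) (J : Ideal (MvPolynomial (Fin N) ℂ)) (hJ : HomIdeal w J)
    (q : MvPolynomial (Fin N) ℂ) (e : ℕ) (hq : IsWeightedHomogeneous w q e)
    (hreg : ∀ y, q * y ∈ J → y ∈ J) :
    hilb w (J ⊔ Ideal.span {q}) = hilb w J * (1 - PowerSeries.X ^ e) := by
  ext D
  rw [mul_sub, mul_one, map_sub, PowerSeries.coeff_mul_X_pow']
  simp only [hilb, PowerSeries.coeff_mk]
  exact hilbF_step w hw J hJ q e hq hreg D

lemma hilb_list (hw : ∀ i, 0 < w i) {ι : Type} (q : ι → MvPolynomial (Fin N) ℂ) (e : ι → ℕ)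
    (hq : ∀ i, IsWeightedHomogeneous w (q i) (e i)) (l : List ι)
    (hreg : IsWeaklyRegular (MvPolynomial (Fin N) ℂ) (l.map q)) :
    HomIdeal w (Ideal.ofList (l.map q)) ∧
    hilb w (Ideal.ofList (l.map q)) =
      hilb w ⊥ * (l.map fun i => (1 - PowerSeries.X ^ (e i) : PowerSeries ℤ)).prod := by
  induction l using List.reverseRecOn with
  | nil => simp [homIdeal_bot]
  | append_singleton l a ih =>
    rw [List.map_append, List.map_singleton, isWeaklyRegular_append_iff,
      isWeaklyRegular_singleton_iff, isSMulRegular_quotient_iff_mem_of_smul_mem] at hreg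
    obtain ⟨i1, i2⟩ := ih hreg.1
    have : Ideal.ofList (List.map q (l ++ [a])) = Ideal.ofList (l.map q) ⊔ Ideal.span {q a} := by
      simp [Ideal.ofList_append]
    rw [this]
    refine ⟨homIdeal_sup w _ i1 _ _ (hq a), ?_⟩
    rw [hilb_step w hw _ i1 (q a) (e a) (hq a) (by simpa using hreg.2), i2]
    simp [mul_assoc]

end Hilb
section Top
open RingTheory.Sequence

variable {N : ℕ} (w : Fin N → ℕ)

lemma homIdeal_list {ι : Type} (q : ι → MvPolynomial (Fin N) ℂ) (e : ι → ℕ)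
    (hq : ∀ i, IsWeightedHomogeneous w (q i) (e i)) (l : List ι) :
    HomIdeal w (Ideal.ofList (l.map q)) := by
  induction l using List.reverseRecOn with
  | nil => simp [homIdeal_bot]
  | append_singleton l a ih =>
    have : Ideal.ofList (List.map q (l ++ [a])) = Ideal.ofList (l.map q) ⊔ Ideal.span {q a} := by
      simp [Ideal.ofList_append]
    rw [this]
    exact homIdeal_sup w _ ih _ _ (hq a)

lemma sum_comp_s9 (x : MvPolynomial (Fin N) ℂ) :
    x = ∑ b ∈ Finset.range (weightedTotalDegree w x + 1), weightedHomogeneousComponent w b x := by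
  classical
  ext d
  rw [coeff_sum]
  simp only [coeff_weightedHomogeneousComponent]
  rw [Finset.sum_ite_eq]
  split_ifs with h
  · rfl
  · by_contra hne
    apply h
    rw [Finset.mem_range, Nat.lt_succ_iff]
    exact le_weightedTotalDegree w (by simpa [mem_support_iff] using hne)

lemma comp_zero_eq (hw : ∀ i, 0 < w i) (s : MvPolynomial (Fin N) ℂ) :
    weightedHomogeneousComponent w 0 s = C (constantCoeff s) :=
  weightedHomogeneousComponent_zero (w := w) s (fun i => (hw i).ne')

lemma contraction (hw : ∀ i, 0 < w i) (J : Ideal (MvPolynomial (Fin N) ℂ)) (hJ : HomIdeal w J)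
    (s x : MvPolynomial (Fin N) ℂ) (hs : constantCoeff s ≠ 0) (hsx : s * x ∈ J) : x ∈ J := by
  have key : ∀ D, weightedHomogeneousComponent w D x ∈ J := by
    intro D
    induction D using Nat.strong_induction_on with
    | _ D ih =>
      have h1 := hJ _ hsx D
      have h2 : ∀ b, weightedHomogeneousComponent w D (s * weightedHomogeneousComponent w b x) =
          if b ≤ D then weightedHomogeneousComponent w b x *
            weightedHomogeneousComponent w (D - b) s else 0 := fun b => by
        rw [mul_comm, wcomp_mul_left w b D _ s (weightedHomogeneousComponent_isWeightedHomogeneous b x)]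
      by_cases hD : D < weightedTotalDegree w x + 1
      · conv at h1 => rw [sum_comp_s9 w x]
        rw [Finset.mul_sum, map_sum, ← Finset.add_sum_erase _ _ (Finset.mem_range.mpr hD)] at h1
        rw [Ideal.add_mem_iff_left] at h1
        · rw [h2, if_pos le_rfl, Nat.sub_self, comp_zero_eq w hw] at h1
          have := J.mul_mem_right (C (constantCoeff s)⁻¹) h1
          rwa [mul_assoc, ← C_mul, mul_inv_cancel₀ hs, C_1, mul_one] at this
        · refine Ideal.sum_mem _ (fun b hb => ?_)
          rw [h2]
          split_ifs with hbD
          · exact Ideal.mul_mem_right _ _ (ih b (lt_of_le_of_ne hbD (Finset.ne_of_mem_erase hb)))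
          · exact zero_mem _
      · rw [weightedHomogeneousComponent_eq_zero]
        · exact zero_mem _
        · omega
  rw [sum_comp_s9 w x]
  exact Ideal.sum_mem _ (fun b _ => key b)

lemma ofList_take (q : Fin N → MvPolynomial (Fin N) ℂ) (k : ℕ) :
    Ideal.ofList (((List.finRange N).map q).take k) =
      Ideal.span (q '' {j | j.val < k}) := by
  unfold Ideal.ofList
  congr 1
  ext y
  simp only [← List.map_take, List.mem_map, Set.mem_ofPred_eq, Set.mem_image, List.mem_take_iff_getElem,
    List.getElem_finRange, List.length_finRange]
  constructor
  · rintro ⟨a, ⟨i, hi, rfl⟩, rfl⟩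
    exact ⟨_, by simpa using (lt_min_iff.mp hi).1, rfl⟩
  · rintro ⟨a, ha, rfl⟩
    exact ⟨a, ⟨a.1, lt_min ha a.2, by simp⟩, rfl⟩

lemma X_regular : IsWeaklyRegular (MvPolynomial (Fin N) ℂ) ((List.finRange N).map (fun i => (X i : MvPolynomial (Fin N) ℂ))) := by
  constructor
  intro i hi
  rw [isSMulRegular_quotient_iff_mem_of_smul_mem]
  intro y hy
  simp only [smul_eq_mul, Ideal.mul_top, ofList_take, mem_ideal_span_X_image] at hy ⊢
  simp only [List.getElem_map, List.getElem_finRange] at hy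
  intro m hm
  have hiN : i < N := by simpa using hi
  obtain ⟨j, hj, hjm⟩ := hy (Finsupp.single ⟨i, hiN⟩ 1 + m) (by
    rw [mem_support_iff] at hm ⊢
    simpa [coeff_X_mul] using hm)
  refine ⟨j, hj, ?_⟩
  have : (⟨i, hiN⟩ : Fin N) ≠ j := by
    rintro rfl
    simp at hj
  simpa [Finsupp.single_apply, this] using hjm

lemma mem_span_X (x : MvPolynomial (Fin N) ℂ) (hx : constantCoeff x = 0) :
    x ∈ Ideal.span (X '' (Set.univ : Set (Fin N))) := by
  rw [mem_ideal_span_X_image]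
  intro m hm
  by_contra! h
  have : m = 0 := by ext i; simpa using h i trivial
  subst this
  rw [mem_support_iff] at hm
  exact hm hx

lemma q_regular (hw : ∀ i, 0 < w i) (q : Fin N → MvPolynomial (Fin N) ℂ) (e : Fin N → ℕ)
    (hq : ∀ i, IsWeightedHomogeneous w (q i) (e i)) (hconst : ∀ i, constantCoeff (q i) = 0)
    (hnil : ∀ i, ∃ k, (X i : MvPolynomial (Fin N) ℂ) ^ k ∈ Ideal.span (Set.range q)) :
    IsWeaklyRegular (MvPolynomial (Fin N) ℂ) ((List.finRange N).map q) := by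
  let m0 : Ideal (MvPolynomial (Fin N) ℂ) := RingHom.ker (constantCoeff (σ := Fin N) (R := ℂ))
  have hm0 : m0.IsPrime := RingHom.ker_isPrime _
  let B := Localization.AtPrime m0
  have hXreg : IsRegular B (((List.finRange N).map (fun i => (X i : MvPolynomial (Fin N) ℂ))).map (algebraMap (MvPolynomial (Fin N) ℂ) B)) := by
    refine IsWeaklyRegular.isRegular_of_isLocalization_of_mem B m0 X_regular ?_
    intro r hr
    obtain ⟨i, _, rfl⟩ := List.mem_map.mp hr
    simp [m0, RingHom.mem_ker]
  have hmemB : ∀ r ∈ m0, algebraMap (MvPolynomial (Fin N) ℂ) B r ∈ IsLocalRing.maximalIdeal B :=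
    fun r hr => (IsLocalization.AtPrime.to_map_mem_maximal_iff B m0 r).mpr hr
  have hext := ModuleCat.subsingleton_ext_of_exists_isRegular (IsLocalRing.maximalIdeal B)
    (ModuleCat.of B (B ⧸ IsLocalRing.maximalIdeal B))
    (by rw [Module.support_eq_zeroLocus, Ideal.annihilator_quotient])
    (ModuleCat.of B B)
    (by
      change IsLocalRing.maximalIdeal B • (⊤ : Ideal B) < ⊤
      rw [smul_eq_mul, Ideal.mul_top]
      exact Ideal.IsPrime.ne_top'.lt_top) _
    (by
      intro r hr
      obtain ⟨r', hr', rfl⟩ := List.mem_map.mp hr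
      obtain ⟨i, _, rfl⟩ := List.mem_map.mp hr'
      exact hmemB _ (by simp [m0, RingHom.mem_ker])) hXreg
  have hreg : IsWeaklyRegular B (((List.finRange N).map q).map (algebraMap (MvPolynomial (Fin N) ℂ) B)) := by
    refine sop_regular _ (ModuleCat.of B B) hext _ (by simp) ?_ ?_
    · intro r hr
      obtain ⟨r', hr', rfl⟩ := List.mem_map.mp hr
      obtain ⟨i, _, rfl⟩ := List.mem_map.mp hr'
      exact hmemB _ (by simp [m0, RingHom.mem_ker, hconst])
    · intro Q hQ _ hmem
      have hle : m0 ≤ Q.comap (algebraMap _ B) := by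
        intro x hx
        refine (Ideal.span_le.mpr ?_) (mem_span_X x hx)
        rintro _ ⟨i, _, rfl⟩
        obtain ⟨k, hk⟩ := hnil i
        have hQ' : (Q.comap (algebraMap (MvPolynomial (Fin N) ℂ) B)).IsPrime := hQ.comap _
        refine hQ'.mem_of_pow_mem k ((Ideal.span_le.mpr ?_) hk)
        rintro _ ⟨j, rfl⟩
        exact hmem _ (List.mem_map_of_mem (List.mem_map_of_mem (List.mem_finRange j)))
      refine le_antisymm (IsLocalRing.le_maximalIdeal hQ.ne_top) ?_
      rw [← Localization.AtPrime.map_eq_maximalIdeal]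
      exact Ideal.map_le_iff_le_comap.mpr hle
  constructor
  intro i hi
  have h1 := hreg.regular_mod_prev i (by simpa using hi)
  rw [isSMulRegular_quotient_iff_mem_of_smul_mem] at h1 ⊢
  intro x hx
  have h2 := h1 (algebraMap _ B x)
  simp only [smul_eq_mul, Ideal.mul_top, ← List.map_take] at h2 hx ⊢
  have hmap : Ideal.ofList (((List.finRange N).take i).map q |>.map (algebraMap (MvPolynomial (Fin N) ℂ) B)) =
      (Ideal.ofList (((List.finRange N).take i).map q)).map (algebraMap _ B) := by
    rw [Ideal.map_ofList]
  rw [hmap, List.getElem_map, ← map_mul] at h2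
  have h3 := h2 (Ideal.mem_map_of_mem _ hx)
  rw [IsLocalization.algebraMap_mem_map_algebraMap_iff m0.primeCompl] at h3
  obtain ⟨s, hs, hsx⟩ := h3
  exact contraction w hw _ (homIdeal_list w q e hq _) s x hs hsx

end Top
section Deg
open RingTheory.Sequence

variable {N : ℕ} (w : Fin N → ℕ)

lemma ofList_range (q : Fin N → MvPolynomial (Fin N) ℂ) :
    Ideal.ofList ((List.finRange N).map q) = Ideal.span (Set.range q) := by
  unfold Ideal.ofList
  congr 1
  ext y
  simp

lemma hilb_X (hw : ∀ i, 0 < w i) :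
    hilb w (Ideal.ofList ((List.finRange N).map (fun i => (X i : MvPolynomial (Fin N) ℂ)))) = 1 := by
  rw [ofList_range]
  have hmem : ∀ x : MvPolynomial (Fin N) ℂ, x ∈ Ideal.span (Set.range fun i => (X i : MvPolynomial (Fin N) ℂ)) ↔
      constantCoeff x = 0 := by
    intro x
    constructor
    · intro hx
      have : Ideal.span (Set.range fun i => (X i : MvPolynomial (Fin N) ℂ)) ≤
        RingHom.ker (constantCoeff (σ := Fin N) (R := ℂ)) := by
        rw [Ideal.span_le]
        rintro _ ⟨i, rfl⟩
        simp [RingHom.mem_ker]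
      exact this hx
    · intro hx
      have := mem_span_X x hx
      rwa [Set.image_univ] at this
  ext D
  simp only [hilb, PowerSeries.coeff_mk, PowerSeries.coeff_one, hilbF]
  split_ifs with h
  · subst h
    have h1 : weightedHomogeneousSubmodule ℂ w 0 = Submodule.span ℂ {1} := by
      apply le_antisymm
      · intro x hx
        have := weightedHomogeneousComponent_eq_self (w := w) hx
        rw [comp_zero_eq w hw] at this
        rw [Submodule.mem_span_singleton, ← this]
        exact ⟨constantCoeff x, by rw [smul_eq_C_mul, mul_one]⟩
      · rw [Submodule.span_singleton_le_iff_mem]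
        exact isWeightedHomogeneous_one ℂ w
    have h2 : grJ w (Ideal.span (Set.range fun i => (X i : MvPolynomial (Fin N) ℂ))) 0 = ⊥ := by
      rw [eq_bot_iff]
      rintro x ⟨hx, hx0⟩
      have := weightedHomogeneousComponent_eq_self (w := w) hx0
      rw [comp_zero_eq w hw, (hmem x).mp hx, C_0] at this
      exact this.symm
    rw [h1, h2, finrank_span_singleton one_ne_zero]
    simp
  · have : grJ w (Ideal.span (Set.range fun i => (X i : MvPolynomial (Fin N) ℂ))) D =
        weightedHomogeneousSubmodule ℂ w D := by
      refine inf_eq_right.mpr ?_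
      intro x hx
      refine (hmem x).mpr ?_
      by_contra hne
      exact h (by simpa using (hx hne).symm)
    rw [this, sub_self]

lemma nil_of_fin (hw : ∀ i, 0 < w i) (J : Ideal (MvPolynomial (Fin N) ℂ)) (hJ : HomIdeal w J)
    (hfin : Module.Finite ℂ (MvPolynomial (Fin N) ℂ ⧸ J)) (i : Fin N) :
    ∃ k, (X i : MvPolynomial (Fin N) ℂ) ^ k ∈ J := by
  obtain ⟨P, hP, hP0⟩ := Algebra.IsIntegral.isIntegral (R := ℂ) (Ideal.Quotient.mk J (X i))
  have h1 : Polynomial.aeval (X i : MvPolynomial (Fin N) ℂ) P ∈ J := by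
    rw [← Ideal.Quotient.eq_zero_iff_mem, ← Ideal.Quotient.mkₐ_eq_mk ℂ, ← Polynomial.aeval_algHom_apply]
    exact hP0
  refine ⟨P.natDegree, ?_⟩
  have h2 := hJ _ h1 (P.natDegree * w i)
  rw [Polynomial.aeval_eq_sum_range, map_sum, Finset.sum_eq_single P.natDegree] at h2
  · rw [weightedHomogeneousComponent_eq_self] at h2
    · simpa [hP.leadingCoeff] using h2
    · rw [← smul_eq_mul, smul_eq_C_mul]
      exact ((isWeightedHomogeneous_X ℂ w i).pow _).C_mul _
  · intro k _ hk
    have : IsWeightedHomogeneous w (P.coeff k • (X i : MvPolynomial (Fin N) ℂ) ^ k) (k * w i) := by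
      rw [← smul_eq_mul, smul_eq_C_mul]
      exact ((isWeightedHomogeneous_X ℂ w i).pow _).C_mul _
    exact this.weightedHomogeneousComponent_ne _ (fun h => hk (Nat.eq_of_mul_eq_mul_right (hw i) h.symm))
  · simp

lemma hilb_fin (hw : ∀ i, 0 < w i) (J : Ideal (MvPolynomial (Fin N) ℂ))
    (hnil : ∀ i, ∃ k, (X i : MvPolynomial (Fin N) ℂ) ^ k ∈ J) :
    ∃ P : Polynomial ℤ, (P : PowerSeries ℤ) = hilb w J := by
  choose k hk using hnil
  refine ⟨PowerSeries.trunc (∑ i, k i * w i + 1) (hilb w J), ?_⟩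
  ext D
  rw [Polynomial.coeff_coe, PowerSeries.coeff_trunc]
  split_ifs with h
  · rfl
  · simp only [hilb, PowerSeries.coeff_mk, hilbF]
    have : grJ w J D = weightedHomogeneousSubmodule ℂ w D := by
      refine inf_eq_right.mpr ?_
      intro x hx
      change x ∈ J
      rw [x.as_sum]
      refine Ideal.sum_mem _ (fun m hm => ?_)
      have hmD : Finsupp.weight w m = D := hx (mem_support_iff.mp hm)
      obtain ⟨i, hi⟩ : ∃ i, k i ≤ m i := by
        by_contra! hc
        apply h
        rw [← hmD, Finsupp.weight_apply, Finsupp.sum_fintype _ _ (by simp), Nat.lt_succ_iff]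
        exact Finset.sum_le_sum (fun i _ => Nat.mul_le_mul_right _ (hc i).le)
      have : monomial m (coeff m x) = monomial (m - Finsupp.single i (k i)) (coeff m x) * X i ^ k i := by
        rw [X_pow_eq_monomial, monomial_mul, mul_one, tsub_add_cancel_of_le]
        simpa using hi
      rw [this]
      exact J.mul_mem_left _ (hk i)
    rw [this, sub_self]

theorem top_degree (hw : ∀ i, 0 < w i) (q : Fin N → MvPolynomial (Fin N) ℂ) (e : Fin N → ℕ)
    (hq : ∀ i, IsWeightedHomogeneous w (q i) (e i))
    (hfin : Module.Finite ℂ (MvPolynomial (Fin N) ℂ ⧸ Ideal.span (Set.range q)))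
    (x : MvPolynomial (Fin N) ℂ) (D : ℕ) (hx : IsWeightedHomogeneous w x D)
    (hxn : x ∉ Ideal.span (Set.range q)) :
    (∀ i, 0 < e i) ∧ D + ∑ i, w i ≤ ∑ i, e i := by
  have hJ : HomIdeal w (Ideal.span (Set.range q)) := by
    rw [← ofList_range]; exact homIdeal_list w q e hq _
  have hconst : ∀ i, constantCoeff (q i) = 0 := by
    intro i
    by_contra hne
    have he : e i = 0 := by simpa using (hq i hne).symm
    have h1 := weightedHomogeneousComponent_eq_self (hq i)
    rw [he, comp_zero_eq w hw] at h1
    apply hxn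
    have : q i ∈ Ideal.span (Set.range q) := Ideal.subset_span ⟨i, rfl⟩
    rw [← h1] at this
    have h2 := Ideal.mul_mem_left _ (x * C (constantCoeff (q i))⁻¹) this
    rwa [mul_assoc, ← C_mul, inv_mul_cancel₀ hne, C_1, mul_one] at h2
  have hnil := nil_of_fin w hw _ hJ hfin
  have h1 := (hilb_list w hw q e hq _ (q_regular w hw q e hq hconst hnil)).2
  have h2 := (hilb_list w hw _ w (fun i => isWeightedHomogeneous_X ℂ w i) _ (X_regular (N := N))).2
  rw [hilb_X w hw] at h2
  rw [ofList_range] at h1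
  obtain ⟨P, hP⟩ := hilb_fin w hw _ hnil
  rw [← List.ofFn_eq_map, List.prod_ofFn] at h1 h2
  have h3 : (P : PowerSeries ℤ) * ∏ i, (1 - PowerSeries.X ^ w i) = ∏ i, (1 - PowerSeries.X ^ e i) := by
    rw [hP, h1, mul_right_comm, ← h2, one_mul]
  have h4 : P * ∏ i, (1 - Polynomial.X ^ w i) = ∏ i, (1 - Polynomial.X ^ e i) := by
    apply Polynomial.coe_injective ℤ
    have hc : ∀ v : Fin N → ℕ, ((∏ i, (1 - Polynomial.X ^ v i) : Polynomial ℤ) : PowerSeries ℤ) =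
        ∏ i, (1 - PowerSeries.X ^ v i) := by
      intro v
      rw [← Polynomial.coeToPowerSeries.ringHom_apply, map_prod]
      simp
    rw [Polynomial.coe_mul, hc, hc, h3]
  have hPD : P.coeff D ≠ 0 := by
    rw [← Polynomial.coeff_coe, hP]
    simp only [hilb, PowerSeries.coeff_mk, hilbF]
    have := hom_fin w hw D
    have hlt : grJ w (Ideal.span (Set.range q)) D < weightedHomogeneousSubmodule ℂ w D := by
      refine lt_of_le_of_ne inf_le_right (fun h => hxn ?_)
      have : x ∈ grJ w (Ideal.span (Set.range q)) D := by rw [h]; exact hx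
      exact this.1
    have := Submodule.finrank_lt_finrank_of_lt hlt
    omega
  have hP0 : P ≠ 0 := by rintro rfl; simp at hPD
  have hf : ∀ a, 0 < a → (1 - Polynomial.X ^ a : Polynomial ℤ).natDegree = a ∧
      (1 - Polynomial.X ^ a : Polynomial ℤ) ≠ 0 := by
    intro a ha
    have : (1 - Polynomial.X ^ a : Polynomial ℤ).natDegree = a := by
      rw [← Polynomial.C_1, Polynomial.natDegree_sub, Polynomial.natDegree_X_pow_sub_C]
    refine ⟨this, ?_⟩
    intro h0
    rw [h0] at this
    simp at this
    omega
  have hne : (∏ i, (1 - Polynomial.X ^ e i) : Polynomial ℤ) ≠ 0 := by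
    rw [← h4]
    exact mul_ne_zero hP0 (Finset.prod_ne_zero_iff.mpr fun i _ => (hf _ (hw i)).2)
  have he : ∀ i, 0 < e i := by
    intro i
    rw [pos_iff_ne_zero]
    intro h0
    rw [Finset.prod_ne_zero_iff] at hne
    exact hne i (Finset.mem_univ _) (by rw [h0]; simp)
  refine ⟨he, ?_⟩
  have h5 := congrArg Polynomial.natDegree h4
  rw [Polynomial.natDegree_mul hP0 (Finset.prod_ne_zero_iff.mpr fun i _ => (hf _ (hw i)).2),
    Polynomial.natDegree_prod _ _ (fun i _ => (hf _ (hw i)).2),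
    Polynomial.natDegree_prod _ _ (fun i _ => (hf _ (he i)).2),
    Finset.sum_congr rfl (fun i _ => (hf _ (hw i)).1),
    Finset.sum_congr rfl (fun i _ => (hf _ (he i)).1)] at h5
  rw [← h5]
  exact Nat.add_le_add_right (Polynomial.le_natDegree_of_ne_zero hPD) _

lemma pderiv_hom (g : MvPolynomial (Fin N) ℂ) (d : ℕ) (hg : IsWeightedHomogeneous w g d) (i : Fin N) :
    IsWeightedHomogeneous w (pderiv i g) (d - w i) := by
  by_cases h : w i ≤ d
  · exact hg.pderiv (by omega)
  · have : pderiv i g = 0 := by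
      rw [g.as_sum, map_sum]
      refine Finset.sum_eq_zero (fun m hm => ?_)
      have hmD : Finsupp.weight w m = d := hg (mem_support_iff.mp hm)
      have : m i = 0 := by
        by_contra hne
        have := Finsupp.le_weight_of_ne_zero' w hne
        omega
      rw [pderiv_monomial, this]
      simp
    rw [this]
    exact isWeightedHomogeneous_zero _ _ _

/-- numeric conclusion from finite dimensionality -/
lemma crit (hw : ∀ i, 0 < w i) (hN : 0 < N) (G : MvPolynomial (Fin N) ℂ) (d : ℕ)
    (hG : IsWeightedHomogeneous w G d)
    (hfin : Module.Finite ℂ (MvPolynomial (Fin N) ℂ ⧸ Ideal.span (Set.range fun i => pderiv i G)))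
    (x : MvPolynomial (Fin N) ℂ) (D : ℕ) (hx : IsWeightedHomogeneous w x D)
    (hxn : x ∉ Ideal.span (Set.range fun i => pderiv i G)) :
    0 < d ∧ D + ∑ i, w i < N * d := by
  obtain ⟨h1, h2⟩ := top_degree w hw _ (fun i => d - w i) (pderiv_hom w G d hG) hfin x D hx hxn
  have h3 := h1 ⟨0, hN⟩
  refine ⟨by omega, lt_of_le_of_lt h2 ?_⟩
  calc ∑ i, (d - w i) < ∑ i : Fin N, d := by
        refine Finset.sum_lt_sum_of_nonempty ⟨⟨0, hN⟩, Finset.mem_univ _⟩ (fun i _ => ?_)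
        have := h1 i
        have := hw i
        omega
    _ = N * d := by simp

end Deg
lemma rename_hom {n : ℕ} (α : Fin (n + 1) → ℕ) (p : MvPolynomial (Fin (n + 1)) ℂ) (k : ℕ)
    (hp : IsWeightedHomogeneous α p k) :
    IsWeightedHomogeneous (Fin.cons 1 α : Fin (n + 2) → ℕ) (rename Fin.succ p) k := by
  intro m hm
  obtain ⟨u, rfl, hu⟩ := coeff_rename_ne_zero _ _ _ hm
  rw [← hp hu, Finsupp.weight_apply, Finsupp.weight_apply,
    Finsupp.sum_mapDomain_index (by simp) (by intros; simp [add_mul])]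
  simp

lemma homog_hom (n d : ℕ) (α : Fin (n + 1) → ℕ) (f : MvPolynomial (Fin (n + 1)) ℂ) (b : ℂ) :
    IsWeightedHomogeneous (Fin.cons 1 α : Fin (n + 2) → ℕ)
      (homogenization n d α f - C b * X 0 ^ d) d := by
  have hX : ∀ k, IsWeightedHomogeneous (Fin.cons 1 α : Fin (n + 2) → ℕ)
      ((X 0 : MvPolynomial (Fin (n + 2)) ℂ) ^ k) k := by
    intro k
    have := (isWeightedHomogeneous_X ℂ (Fin.cons 1 α : Fin (n + 2) → ℕ) 0).pow k
    simpa using this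
  refine IsWeightedHomogeneous.sub ?_ ((hX d).C_mul b)
  refine IsWeightedHomogeneous.sum _ _ _ (fun i hi => ?_)
  have := (rename_hom α _ i (weightedHomogeneousComponent_isWeightedHomogeneous i f)).mul (hX (d - i))
  rwa [Nat.add_sub_cancel' (Nat.lt_succ_iff.mp (Finset.mem_range.mp hi))] at this

/-- Let `f` be strongly tame of weighted degree `d`, `b` a regular value of
`f`, and `β ↦ d_β` a function such that the monomials `x₀^{β₀}x^β`, `β ∈ I`,
`0 ≤ β₀ ≤ d_β - 1`, form a ℂ-basis of `ℂ[x₀,x]/⟨∂F_b/∂xᵢ : i = 0,…,n+1⟩`.  Then for every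
`β ∈ I`, `d_β < d·(n + 2 - A_β)` where `A_β = Σᵢ (βᵢ+1)αᵢ/d`; equivalently every basis
monomial `x₀^{β₀}x^β` satisfies `0 < A_β + (β₀+1)/d < n + 2`. -/
theorem dbeta_bound
    (n : ℕ) (hn : 1 ≤ n) (α : Fin (n + 1) → ℕ)
    (hαpos : ∀ i, 0 < α i) (hα : Finset.univ.gcd α = 1)
    (f : MvPolynomial (Fin (n + 1)) ℂ) (d : ℕ)
    (hd : MvPolynomial.weightedTotalDegree α f = d)
    (g : MvPolynomial (Fin (n + 1)) ℂ)
    (hg : g = weightedHomogeneousComponent α d f)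
    (hg0 : g ≠ 0)
    (htame : ∀ x : Fin (n + 1) → ℂ, (∀ i, eval x (pderiv i g) = 0) → x = 0)
    (I : Finset (Fin (n + 1) →₀ ℕ))
    (hIindep : LinearIndependent ℂ (fun β : I =>
      Ideal.Quotient.mk (Ideal.span (Set.range fun i => pderiv i g))
        (monomial (β : Fin (n + 1) →₀ ℕ) (1 : ℂ))))
    (hIspan : Submodule.span ℂ (Set.range fun β : I =>
      Ideal.Quotient.mk (Ideal.span (Set.range fun i => pderiv i g))
        (monomial (β : Fin (n + 1) →₀ ℕ) (1 : ℂ))) = ⊤)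
    (b : ℂ)
    (hb : b ∉ (fun x => eval x f) '' {x : Fin (n + 1) → ℂ | ∀ i, eval x (pderiv i f) = 0})
    (dβ : (Fin (n + 1) →₀ ℕ) → ℕ)
    (hdβindep : LinearIndependent ℂ
      (fun p : {p : (Fin (n + 1) →₀ ℕ) × ℕ // p.1 ∈ I ∧ p.2 < dβ p.1} =>
        Ideal.Quotient.mk (fullJacobianIdeal n d α f b)
          (X 0 ^ (p : (Fin (n + 1) →₀ ℕ) × ℕ).2 *
            rename Fin.succ (monomial (p : (Fin (n + 1) →₀ ℕ) × ℕ).1 (1 : ℂ)))))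
    (hdβspan : Submodule.span ℂ
      (Set.range fun p : {p : (Fin (n + 1) →₀ ℕ) × ℕ // p.1 ∈ I ∧ p.2 < dβ p.1} =>
        Ideal.Quotient.mk (fullJacobianIdeal n d α f b)
          (X 0 ^ (p : (Fin (n + 1) →₀ ℕ) × ℕ).2 *
            rename Fin.succ (monomial (p : (Fin (n + 1) →₀ ℕ) × ℕ).1 (1 : ℂ)))) = ⊤) :
    ∀ β ∈ I,
      (dβ β : ℚ) < d * ((n : ℚ) + 2 - (∑ i, ((β i : ℚ) + 1) * (α i : ℚ)) / d) ∧
      ∀ β₀ : ℕ, β₀ < dβ β →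
        0 < (∑ i, ((β i : ℚ) + 1) * (α i : ℚ)) / d + ((β₀ : ℚ) + 1) / d ∧
        (∑ i, ((β i : ℚ) + 1) * (α i : ℚ)) / d + ((β₀ : ℚ) + 1) / d < (n : ℚ) + 2 := by
  intro β hβ
  have hw : ∀ i, 0 < (Fin.cons 1 α : Fin (n + 2) → ℕ) i := by
    intro i
    refine Fin.cases ?_ (fun j => ?_) i
    · simp
    · simpa using hαpos j
  have hsum : (∑ i, ((β i : ℚ) + 1) * (α i : ℚ)) = ((∑ i, β i * α i + ∑ i, α i : ℕ) : ℚ) := by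
    push_cast
    rw [← Finset.sum_add_distrib]
    exact Finset.sum_congr rfl (fun i _ => by ring)
  have hmon : IsWeightedHomogeneous α (monomial β (1 : ℂ)) (∑ i, β i * α i) := by
    refine isWeightedHomogeneous_monomial α β 1 ?_
    rw [Finsupp.weight_eq_sum]
    simp
  have hfin1 : Module.Finite ℂ (MvPolynomial (Fin (n + 1)) ℂ ⧸
      Ideal.span (Set.range fun i => pderiv i g)) :=
    ⟨⟨(Set.finite_range _).toFinset, by rw [Set.Finite.coe_toFinset]; exact hIspan⟩⟩
  have c1 := crit α hαpos (by omega) g d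
    (by rw [hg]; exact weightedHomogeneousComponent_isWeightedHomogeneous d f) hfin1 _ _ hmon
    (fun h => hIindep.ne_zero ⟨β, hβ⟩ (Ideal.Quotient.eq_zero_iff_mem.mpr h))
  have hfinset : Finite {p : (Fin (n + 1) →₀ ℕ) × ℕ // p.1 ∈ I ∧ p.2 < dβ p.1} := by
    have : Set.Finite {p : (Fin (n + 1) →₀ ℕ) × ℕ | p.1 ∈ I ∧ p.2 < dβ p.1} := by
      refine ((I : Set (Fin (n + 1) →₀ ℕ)).toFinite.prod
        (Set.finite_Iio (I.sup dβ))).subset ?_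
      rintro ⟨p1, p2⟩ ⟨h1, h2⟩
      exact ⟨h1, lt_of_lt_of_le h2 (Finset.le_sup (f := dβ) h1)⟩
    exact this
  have hfin2 : Module.Finite ℂ (MvPolynomial (Fin (n + 2)) ℂ ⧸ fullJacobianIdeal n d α f b) :=
    ⟨⟨(Set.finite_range _).toFinset, by rw [Set.Finite.coe_toFinset]; exact hdβspan⟩⟩
  have c2 : ∀ β₀ < dβ β, β₀ + 1 + (∑ i, β i * α i + ∑ i, α i) < (n + 2) * d := by
    intro β₀ h0
    have hX := (isWeightedHomogeneous_X ℂ (Fin.cons 1 α : Fin (n + 2) → ℕ) 0).pow β₀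
    have hne := hdβindep.ne_zero ⟨(β, β₀), hβ, h0⟩
    have hnm : X 0 ^ β₀ * rename Fin.succ (monomial β (1 : ℂ)) ∉ Ideal.span (Set.range fun i : Fin (n + 2) =>
        pderiv i (homogenization n d α f - C b * X 0 ^ d)) :=
      fun h => hne (Ideal.Quotient.eq_zero_iff_mem.mpr h)
    have hhom := hX.mul (rename_hom α _ _ hmon)
    have := (crit (Fin.cons 1 α : Fin (n + 2) → ℕ) hw (Nat.succ_pos _)
      (homogenization n d α f - C b * X 0 ^ d) d (homog_hom n d α f b) hfin2
      (X 0 ^ β₀ * rename Fin.succ (monomial β (1 : ℂ))) _ hhom hnm).2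
    have hcs : ∑ i, (Fin.cons 1 α : Fin (n + 2) → ℕ) i = 1 + ∑ i, α i := by
      rw [Fin.sum_univ_succ]
      simp
    rw [hcs] at this
    simp only [Fin.cons_zero, smul_eq_mul, mul_one] at this
    linarith
  obtain ⟨hd0, c1⟩ := c1
  rw [hsum]
  generalize hS : ∑ i, β i * α i + ∑ i, α i = S at *
  have hdq : (0 : ℚ) < d := by exact_mod_cast hd0
  constructor
  · rw [mul_sub, mul_div_cancel₀ _ hdq.ne', lt_sub_iff_add_lt]
    have : dβ β + S < (n + 2) * d := by
      rcases Nat.eq_zero_or_pos (dβ β) with h | h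
      · rw [h, zero_add]
        exact c1.trans_le (Nat.mul_le_mul_right _ (by omega))
      · have := c2 (dβ β - 1) (by omega)
        rwa [Nat.sub_add_cancel h] at this
    rw [mul_comm]
    exact_mod_cast this
  · intro β₀ h0
    have := c2 β₀ h0
    rw [← add_div]
    refine ⟨by positivity, ?_⟩
    rw [div_lt_iff₀ hdq, add_comm]
    exact_mod_cast this
end
end

section
/- Let g ∈ ℂ[x₁,…,x_{n+1}] be quasi-homogeneous of degree d for the weights α = (α₁,…,α_{n+1}), with the origin as its only singularity. Then every monomial x^β whose class in the Milnor algebra V_g is nonzero (equivalently, x^β does not lie in the Jacobian ideal ⟨∂g/∂x₁,…,∂g/∂x_{n+1}⟩) satisfies Σᵢ (βᵢ+1)αᵢ ≤ (n+1)·d − Σᵢ αᵢ; in particular A_β := Σᵢ (βᵢ+1)αᵢ/d satisfies 0 < A_β < n + 1. -/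
open MvPolynomial

namespace QH

section Koszul
variable {A : Type*} [CommRing A]

/-- Koszul differential (contraction with `f`), on functions on subsets. -/
def D : (n : ℕ) → (Fin n → A) → ((Fin n → Bool) → A) → (Fin n → Bool) → A
  | 0, _, _, _ => 0
  | n + 1, f, z, l =>
    if l 0 = true then - D n (Fin.tail f) (fun t => z (Fin.cons true t)) (Fin.tail l)
    else D n (Fin.tail f) (fun t => z (Fin.cons false t)) (Fin.tail l)
      + f 0 * z (Fin.cons true (Fin.tail l))

/-- Exterior multiplication by `∑ c j e_j`. -/
def E : (n : ℕ) → (Fin n → A) → ((Fin n → Bool) → A) → (Fin n → Bool) → A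
  | 0, _, _, _ => 0
  | n + 1, c, z, l =>
    if l 0 = true then c 0 * z (Fin.cons false (Fin.tail l))
      - E n (Fin.tail c) (fun t => z (Fin.cons true t)) (Fin.tail l)
    else E n (Fin.tail c) (fun t => z (Fin.cons false t)) (Fin.tail l)

lemma D_lin (n : ℕ) (f : Fin n → A) (r : A) (z w : (Fin n → Bool) → A) (l) :
    D n f (fun t => z t + r * w t) l = D n f z l + r * D n f w l := by
  induction n with
  | zero => simp [D]
  | succ n ih =>
    simp only [D]
    split_ifs
    · rw [ih]; ring
    · rw [ih]; ring

lemma E_lin (n : ℕ) (f : Fin n → A) (r : A) (z w : (Fin n → Bool) → A) (l) :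
    E n f (fun t => z t + r * w t) l = E n f z l + r * E n f w l := by
  induction n with
  | zero => simp [E]
  | succ n ih =>
    simp only [E]
    split_ifs
    · rw [ih]; ring
    · rw [ih]

lemma D_zero (n : ℕ) (f : Fin n → A) (l) : D n f (fun _ => 0) l = 0 := by
  have := D_lin n f (-1) (fun _ => 0) (fun _ => 0) l
  simpa using this

lemma E_zero (n : ℕ) (f : Fin n → A) (l) : E n f (fun _ => 0) l = 0 := by
  have := E_lin n f (-1) (fun _ => 0) (fun _ => 0) l
  simpa using this

lemma D_neg (n : ℕ) (f : Fin n → A) (z) (l) : D n f (fun t => - z t) l = - D n f z l := by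
  have := D_lin n f (-1) (fun _ => 0) z l
  simpa [D_zero] using this

lemma E_neg (n : ℕ) (f : Fin n → A) (z) (l) : E n f (fun t => - z t) l = - E n f z l := by
  have := E_lin n f (-1) (fun _ => 0) z l
  simpa [E_zero] using this

lemma D_sub (n : ℕ) (f : Fin n → A) (z w) (l) :
    D n f (fun t => z t - w t) l = D n f z l - D n f w l := by
  have := D_lin n f (-1) z w l
  simpa [← sub_eq_add_neg] using this

lemma D_D (n : ℕ) (f : Fin n → A) (z : (Fin n → Bool) → A) (l) :
    D n f (D n f z) l = 0 := by
  induction n with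
  | zero => simp [D]
  | succ n ih =>
    rw [D]
    by_cases h : l 0 = true
    · simp only [h, if_true]
      have : (fun t => D (n+1) f z (Fin.cons true t)) =
        fun t => - D n (Fin.tail f) (fun t => z (Fin.cons true t)) t := by
        funext t; simp [D]
      rw [this, D_neg, ih]; simp
    · simp only [h]
      have : (fun t => D (n+1) f z (Fin.cons false t)) =
        fun t => D n (Fin.tail f) (fun t => z (Fin.cons false t)) t
          + f 0 * z (Fin.cons true t) := by
        funext t; simp [D]
      rw [this, D_lin, ih]; simp [D]

lemma D_E (n : ℕ) (f c : Fin n → A) (z : (Fin n → Bool) → A) (l) :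
    D n f (E n c z) l + E n c (D n f z) l = (∑ j, c j * f j) * z l := by
  induction n with
  | zero => simp [D, E]
  | succ n ih =>
    have h1 : (fun t => E (n+1) c z (Fin.cons true t)) =
        fun t => - E n (Fin.tail c) (fun t => z (Fin.cons true t)) t
          + c 0 * z (Fin.cons false t) := by
        funext t; simp [E]; ring
    have h2 : (fun t => E (n+1) c z (Fin.cons false t)) =
        fun t => E n (Fin.tail c) (fun t => z (Fin.cons false t)) t := by
        funext t; simp [E]
    have h3 : (fun t => D (n+1) f z (Fin.cons true t)) =
        fun t => - D n (Fin.tail f) (fun t => z (Fin.cons true t)) t := by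
        funext t; simp [D]
    have h4 : (fun t => D (n+1) f z (Fin.cons false t)) =
        fun t => D n (Fin.tail f) (fun t => z (Fin.cons false t)) t
          + f 0 * z (Fin.cons true t) := by
        funext t; simp [D]
    have h1' := congrFun h1 (Fin.tail l)
    have h4' := congrFun h4 (Fin.tail l)
    rw [D, E.eq_2 n c (D (n+1) f z) l, h1, h2, h3, h4, D_lin, E_lin, D_neg, E_neg, h1', h4', Fin.sum_univ_succ]
    have i1 := ih (Fin.tail f) (Fin.tail c) (fun t => z (Fin.cons true t)) (Fin.tail l)
    have i2 := ih (Fin.tail f) (Fin.tail c) (fun t => z (Fin.cons false t)) (Fin.tail l)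
    have e : ∑ j, Fin.tail c j * Fin.tail f j = ∑ j : Fin n, c j.succ * f j.succ := rfl
    rw [e] at i1 i2
    by_cases h : l 0 = true
    · have hz : z (Fin.cons true (Fin.tail l)) = z l := by
        rw [← h, Fin.cons_self_tail]
      simp only [h, if_true]
      rw [hz] at i1 ⊢
      linear_combination i1
    · have hz : z (Fin.cons false (Fin.tail l)) = z l := by
        rw [← (by simpa using h : l 0 = false), Fin.cons_self_tail]
      simp only [h]
      rw [hz] at i2 ⊢
      simp only [Bool.false_eq_true, if_false]
      linear_combination i2

lemma D_mem (n : ℕ) (f : Fin n → A) (z : (Fin n → Bool) → A) (l) (S : AddSubgroup A)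
    (h : ∀ j, l j = false → f j * z (Function.update l j true) ∈ S) : D n f z l ∈ S := by
  induction n with
  | zero => simp [D]
  | succ n ih =>
    have key : ∀ b, l 0 = b → D n (Fin.tail f) (fun t => z (Fin.cons b t)) (Fin.tail l) ∈ S := by
      intro b hb
      apply ih
      intro j hj
      have := h j.succ hj
      rw [← hb]
      rw [← Fin.cons_self_tail l, ← Fin.cons_update] at this
      exact this
    rw [D]
    split_ifs with hl
    · exact S.neg_mem (key _ hl)
    · have hl' : l 0 = false := by simpa using hl
      refine S.add_mem (key _ hl') ?_
      have := h 0 hl'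
      rwa [← Fin.cons_self_tail l, Fin.update_cons_zero] at this

lemma E_mem (n : ℕ) (f : Fin n → A) (z : (Fin n → Bool) → A) (l) (S : AddSubgroup A)
    (h : ∀ j, l j = true → f j * z (Function.update l j false) ∈ S) : E n f z l ∈ S := by
  induction n with
  | zero => simp [E]
  | succ n ih =>
    have key : ∀ b, l 0 = b → E n (Fin.tail f) (fun t => z (Fin.cons b t)) (Fin.tail l) ∈ S := by
      intro b hb
      apply ih
      intro j hj
      have := h j.succ hj
      rw [← hb]
      rw [← Fin.cons_self_tail l, ← Fin.cons_update] at this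
      exact this
    rw [E]
    split_ifs with hl
    · refine S.sub_mem ?_ (key _ hl)
      have := h 0 hl
      rwa [← Fin.cons_self_tail l, Fin.update_cons_zero] at this
    · have hl' : l 0 = false := by simpa using hl
      exact key _ hl'

end Koszul

section Laurent
variable {N : ℕ}

/-- Laurent polynomials. -/
abbrev La (N : ℕ) := AddMonoidAlgebra ℂ (Fin N → ℤ)

/-- Laurent polynomials all of whose monomials satisfy `P`. -/
def S (P : (Fin N → ℤ) → Prop) : AddSubgroup (La N) where
  carrier := {p | ∀ a, p.coeff a ≠ 0 → P a}
  zero_mem' := by intro a h; simp at h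
  add_mem' := by
    intro p q hp hq a h
    by_cases h1 : p.coeff a = 0
    · apply hq; intro h2; apply h; simp [h1, h2]
    · exact hp a h1
  neg_mem' := by
    intro p hp a h
    apply hp; simpa using h

lemma S_mono {P Q : (Fin N → ℤ) → Prop} (h : ∀ a, P a → Q a) {p : La N} (hp : p ∈ S P) :
    p ∈ S Q := fun a ha => h a (hp a ha)

lemma S_and {P Q : (Fin N → ℤ) → Prop} {p : La N} (hp : p ∈ S P) (hq : p ∈ S Q) :
    p ∈ S (fun a => P a ∧ Q a) := fun a ha => ⟨hp a ha, hq a ha⟩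

lemma S_single {P : (Fin N → ℤ) → Prop} {a} (c : ℂ) (h : P a) :
    (AddMonoidAlgebra.single a c : La N) ∈ S P := by
  intro b hb
  by_cases e : a = b
  · exact e ▸ h
  · exact absurd (by simp [e]) hb

lemma S_false {P : (Fin N → ℤ) → Prop} (h : ∀ a, ¬ P a) {p : La N} (hp : p ∈ S P) : p = 0 := by
  ext a
  by_contra hc
  exact h a (hp a hc)

lemma as_sum (p : La N) : p = ∑ a ∈ p.coeff.support, AddMonoidAlgebra.single a (p.coeff a) := by
  conv_lhs => rw [← AddMonoidAlgebra.sum_coeff_single p]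
  rfl

lemma S_mul {P Q R : (Fin N → ℤ) → Prop} (h : ∀ a b, P a → Q b → R (a + b)) {p q : La N}
    (hp : p ∈ S P) (hq : q ∈ S Q) : p * q ∈ S R := by
  rw [as_sum p, as_sum q, Finset.sum_mul_sum]
  refine sum_mem fun a ha => sum_mem fun b hb => ?_
  rw [AddMonoidAlgebra.single_mul_single]
  exact S_single _ (h _ _ (hp a (by simpa using ha)) (hq b (by simpa using hb)))

lemma S_split {P Q R : (Fin N → ℤ) → Prop} (h : ∀ a, P a → Q a ∨ R a) {p : La N}
    (hp : p ∈ S P) : ∃ q, q ∈ S Q ∧ p - q ∈ S R := by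
  classical
  refine ⟨∑ a ∈ p.coeff.support with Q a, AddMonoidAlgebra.single a (p.coeff a), ?_, ?_⟩
  · refine sum_mem fun a ha => S_single _ (Finset.mem_filter.1 ha).2
  · conv => enter [2, 1]; rw [as_sum p, ← Finset.sum_filter_add_sum_filter_not _ (fun a => Q a)]
    rw [add_sub_cancel_left]
    refine sum_mem fun a ha => S_single _ ?_
    have := Finset.mem_filter.1 ha
    exact (h a (hp a (by simpa using this.1))).resolve_left this.2

/-- The embedding of polynomials in Laurent polynomials. -/
noncomputable def phi (N : ℕ) : MvPolynomial (Fin N) ℂ →ₐ[ℂ] La N :=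
  MvPolynomial.aeval (fun i => AddMonoidAlgebra.single (Pi.single i 1) 1)

lemma phi_monomial (s : Fin N →₀ ℕ) (c : ℂ) :
    phi N (monomial s c) = AddMonoidAlgebra.single (fun i => (s i : ℤ)) c := by
  rw [phi, aeval_monomial, Finsupp.prod_fintype _ _ (by simp)]
  simp only [AddMonoidAlgebra.single_pow, one_pow]
  have : ∀ t : Finset (Fin N), ∏ i ∈ t, (AddMonoidAlgebra.single (s i • Pi.single i (1:ℤ)) (1:ℂ) : La N)
      = AddMonoidAlgebra.single (∑ i ∈ t, s i • Pi.single i (1:ℤ)) 1 := by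
    intro t
    induction t using Finset.induction_on with
    | empty => simp [AddMonoidAlgebra.one_def]
    | insert a t ha ih => rw [Finset.prod_insert ha, ih, Finset.sum_insert ha,
        AddMonoidAlgebra.single_mul_single, one_mul]
  rw [this, AddMonoidAlgebra.coe_algebraMap]
  simp only [Function.comp, Algebra.algebraMap_self, RingHom.id_apply]
  rw [AddMonoidAlgebra.single_mul_single, mul_one, zero_add]
  congr 1
  funext i
  simp [Finset.sum_apply, Pi.single_apply]

lemma phi_coeff (p : MvPolynomial (Fin N) ℂ) (s : Fin N →₀ ℕ) :
    (phi N p).coeff (fun i => (s i : ℤ)) = p.coeff s := by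
  classical
  induction p using MvPolynomial.induction_on' with
  | monomial u a =>
    rw [phi_monomial, coeff_monomial, AddMonoidAlgebra.coeff_single, Finsupp.single_apply]
    congr 1
    simp [funext_iff, Finsupp.ext_iff]
  | add p q hp hq => simp [hp, hq]

lemma phi_inj : Function.Injective (phi N) := by
  intro p q h
  ext s
  rw [← phi_coeff, ← phi_coeff, h]

lemma phi_surj {p : La N} (hp : p ∈ S (fun a => ∀ i, 0 ≤ a i)) : ∃ q, phi N q = p := by
  refine ⟨∑ a ∈ p.coeff.support,
    monomial (Finsupp.equivFunOnFinite.symm (fun i => (a i).toNat)) (p.coeff a), ?_⟩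
  rw [map_sum]
  conv_rhs => rw [as_sum p]
  refine Finset.sum_congr rfl fun a ha => ?_
  rw [phi_monomial]
  congr 1
  funext i
  simpa using hp a (by simpa using ha) i

lemma phi_mem (p : MvPolynomial (Fin N) ℂ) (P : (Fin N → ℤ) → Prop)
    (h : ∀ s, p.coeff s ≠ 0 → P (fun i => (s i : ℤ))) : phi N p ∈ S P := by
  rw [p.as_sum, map_sum]
  refine sum_mem fun s hs => ?_
  rw [phi_monomial]
  exact S_single _ (h s (by simpa using hs))

end Laurent


section Core
variable {N : ℕ}

/-- Exponents that are nonnegative from index `k` on. -/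
def M (k : ℕ) (a : Fin N → ℤ) : Prop := ∀ i : Fin N, k ≤ i.val → 0 ≤ a i

/-- Some exponent below `k` is nonnegative. -/
def X (k : ℕ) (a : Fin N → ℤ) : Prop := ∃ i : Fin N, i.val < k ∧ 0 ≤ a i

/-- The successive products of the `c i`. -/
noncomputable def v (c : Fin N → Fin N → La N) (u : La N) : ℕ → (Fin N → Bool) → La N
  | 0 => fun l => if l = (fun _ => false) then u else 0
  | k + 1 => if h : k < N then E N (c ⟨k, h⟩) (v c u k) else fun _ => 0

lemma D_v0 {A : Type*} [CommRing A] (n : ℕ) (f : Fin n → A) (u : A) (l) :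
    D n f (fun l => if l = (fun _ => false) then u else 0) l = 0 := by
  have : D n f (fun l => if l = (fun _ => false) then u else 0) l ∈ (⊥ : AddSubgroup A) := by
    apply D_mem
    intro j hj
    rw [if_neg, mul_zero]
    · simp
    · intro h
      have := congrFun h j
      simp at this
  simpa using this

theorem core (f : Fin N → La N) (c : Fin N → Fin N → La N) (e : Fin N → ℤ) (α : Fin N → ℤ)
    (hα : ∀ i, 0 < α i)
    (hf : ∀ j, f j ∈ S (fun a => ∀ i, 0 ≤ a i))
    (hc : ∀ i j, c i j ∈ S (fun a => ∀ k, k ≠ i → 0 ≤ a k))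
    (hcw : ∀ i j, c i j ∈ S (fun a => ∑ k, α k * a k = - e j))
    (hcf : ∀ i, ∑ j, c i j * f j = 1)
    (u : La N) (hu : u ∈ S (fun a => ∀ i, 0 ≤ a i)) (m : ℤ)
    (huw : u ∈ S (fun a => ∑ k, α k * a k = m))
    (hm : ∑ j, e j - ∑ i, α i < m) :
    ∃ r : Fin N → La N, (∀ j, r j ∈ S (fun a => ∀ i, 0 ≤ a i)) ∧ u = ∑ j, f j * r j := by
  classical
  -- membership of `v`
  have vM : ∀ k ≤ N, ∀ l, v c u k l ∈ S (M k) := by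
    intro k
    induction k with
    | zero =>
      intro _ l
      rw [v]
      dsimp only
      split_ifs
      · exact S_mono (fun a h i _ => h i) hu
      · exact zero_mem _
    | succ k ih =>
      intro hk l
      rw [v, dif_pos (show k < N by omega)]
      apply E_mem
      intro j _
      refine S_mul ?_ (hc _ _) (ih (by omega) _)
      intro a b ha hb i hi
      have h1 := ha i (by intro h; rw [h] at hi; simp at hi)
      have h2 := hb i (by omega)
      simpa using add_nonneg h1 h2
  have DvM : ∀ k ≤ N, ∀ l, D N f (v c u k) l ∈ S (fun a => M k a ∧ X k a) := by
    intro k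
    induction k with
    | zero =>
      intro _ l
      have : D N f (v c u 0) l = 0 := D_v0 N f u l
      rw [this]; exact zero_mem _
    | succ k ih =>
      intro hk l
      have hk' : k < N := by omega
      have e1 := D_E N f (c ⟨k, hk'⟩) (v c u k) l
      rw [hcf, one_mul] at e1
      rw [v, dif_pos hk', eq_sub_of_add_eq e1]
      refine sub_mem ?_ ?_
      · refine S_mono ?_ (vM k (by omega) l)
        intro a ha
        exact ⟨fun i hi => ha i (by omega), ⟨k, hk'⟩, by simp, ha _ le_rfl⟩
      · apply E_mem
        intro j _
        refine S_mul ?_ (hc _ _) (ih (by omega) _)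
        rintro a b ha ⟨hb, i0, hi0, hb0⟩
        refine ⟨fun i hi => ?_, i0, by omega, ?_⟩
        · have h1 := ha i (by intro h; rw [h] at hi; simp at hi)
          have h2 := hb i (by omega)
          simpa using add_nonneg h1 h2
        · have h1 := ha i0 (by intro h; rw [h] at hi0; simp at hi0)
          simpa using add_nonneg h1 hb0
  -- homogeneity
  have vH : ∀ k ≤ N, ∀ l, v c u k l ∈ S (fun a => (Finset.univ.filter (fun j => l j = true)).card = k
      ∧ ∑ k, α k * a k + ∑ j ∈ Finset.univ.filter (fun j => l j = true), e j = m) := by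
    intro k
    induction k with
    | zero =>
      intro _ l
      rw [v]
      dsimp only
      split_ifs with h
      · subst h
        simpa using huw
      · exact zero_mem _
    | succ k ih =>
      intro hk l
      rw [v, dif_pos (show k < N by omega)]
      apply E_mem
      intro j hj
      refine S_mul ?_ (hcw _ _) (ih (by omega) _)
      rintro a b ha ⟨hb1, hb2⟩
      have hfil : Finset.univ.filter (fun j => l j = true) =
          insert j (Finset.univ.filter (fun i => Function.update l j false i = true)) := by
        ext i
        by_cases hij : i = j
        · subst hij; simp [hj]
        · simp [hij]
      have hnot : j ∉ Finset.univ.filter (fun i => Function.update l j false i = true) := by simp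
      rw [hfil, Finset.card_insert_of_notMem hnot, Finset.sum_insert hnot, hb1]
      refine ⟨rfl, ?_⟩
      simp only [Pi.add_apply, mul_add, Finset.sum_add_distrib]
      rw [ha]
      linarith
  have DM : ∀ k z, (∀ l, z l ∈ S (M k)) → ∀ l, D N f z l ∈ S (M k) := by
    intro k z hz l
    apply D_mem
    intro j _
    refine S_mul ?_ (hf j) (hz _)
    intro a b ha hb i hi
    simpa using add_nonneg (ha i) (hb i hi)
  have DX : ∀ k z, (∀ l, z l ∈ S (X k)) → ∀ l, D N f z l ∈ S (X k) := by
    intro k z hz l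
    apply D_mem
    intro j _
    refine S_mul ?_ (hf j) (hz _)
    rintro a b ha ⟨i, hi, hb⟩
    exact ⟨i, hi, by simpa using add_nonneg (ha i) hb⟩
  have claim : ∀ t ≤ N, ∃ w : (Fin N → Bool) → La N, (∀ l, w l ∈ S (M (N - t))) ∧
      ∀ l, v c u (N - t) l - D N f w l ∈ S (fun a => M (N - t) a ∧ X (N - t) a) := by
    intro t
    induction t with
    | zero =>
      intro _
      refine ⟨fun _ => 0, fun _ => zero_mem _, fun l => ?_⟩
      rw [D_zero, sub_zero]
      refine S_mono ?_ (vH N le_rfl l)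
      rintro a ⟨h1, h2⟩
      refine ⟨fun i hi => absurd i.isLt (by omega), ?_⟩
      by_contra hX
      have hneg : ∀ i, a i ≤ -1 := by
        intro i
        by_contra hi
        exact hX ⟨i, by simp, by omega⟩
      have huniv : Finset.univ.filter (fun j => l j = true) = Finset.univ := by
        apply Finset.eq_univ_of_card
        simpa using h1
      rw [huniv] at h2
      have : ∑ k, α k * a k ≤ ∑ k, - α k := by
        apply Finset.sum_le_sum
        intro i _
        nlinarith [hneg i, hα i]
      rw [Finset.sum_neg_distrib] at this
      linarith
    | succ t ih =>
      intro ht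
      obtain ⟨w, hw, hvw⟩ := ih (by omega)
      obtain ⟨k, hk⟩ : ∃ k, k = N - (t + 1) := ⟨_, rfl⟩
      have hk1 : N - t = k + 1 := by omega
      have hkN : k < N := by omega
      rw [← hk]
      rw [hk1] at hw hvw
      have hs : ∀ l, ∃ q, q ∈ S (M (N := N) k) ∧
          (v c u (k+1) l - D N f w l) - q ∈ S (X (N := N) k) := by
        intro l
        refine S_split ?_ (hvw l)
        rintro a ⟨h1, i, hi, h2⟩
        by_cases h : i.val < k
        · exact Or.inr ⟨i, h, h2⟩
        · left
          intro i' hi'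
          by_cases h' : i' = i
          · rw [h']; exact h2
          · apply h1
            have : i'.val ≠ i.val := fun h => h' (Fin.ext h)
            omega
      choose y hy1 hy2 using hs
      refine ⟨y, hy1, fun l => ?_⟩
      refine S_and (sub_mem (vM k hkN.le l) (DM k y hy1 l)) ?_
      have e1 := D_E N f (c ⟨k, hkN⟩) (v c u k) l
      rw [hcf, one_mul] at e1
      have e2 : D N f (fun l => (v c u (k+1) l - D N f w l) - y l) l
        = D N f (v c u (k+1)) l - D N f y l := by
        rw [D_sub N f (fun l => v c u (k+1) l - D N f w l) y,
          D_sub N f (v c u (k+1)) (D N f w), D_D, sub_zero]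
      have e3 : v c u (k+1) = E N (c ⟨k, hkN⟩) (v c u k) := by rw [v, dif_pos hkN]
      have e4 : v c u k l - D N f y l = E N (c ⟨k, hkN⟩) (D N f (v c u k)) l
          + D N f (fun l => (v c u (k+1) l - D N f w l) - y l) l := by
        rw [e2, ← e1, e3]; ring
      rw [e4]
      refine add_mem ?_ (DX k _ hy2 l)
      apply E_mem
      intro j _
      refine S_mul ?_ (hc _ _) (DvM k hkN.le _)
      rintro a b ha ⟨hb, i0, hi0, hb0⟩
      refine ⟨i0, hi0, ?_⟩
      have h1 := ha i0 (by intro h; rw [h] at hi0; simp at hi0)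
      simpa using add_nonneg h1 hb0
  obtain ⟨w, hw, hvw⟩ := claim N le_rfl
  rw [Nat.sub_self] at hw hvw
  have h0 := S_false (by rintro a ⟨_, i, hi, _⟩; omega) (hvw (fun _ => false))
  have hu0 : v c u 0 (fun _ => false) = u := by simp [v]
  rw [hu0, sub_eq_zero] at h0
  rw [h0]
  let T : AddSubgroup (La N) :=
    { carrier := {p | ∃ r : Fin N → La N, (∀ j, r j ∈ S (fun a => ∀ i, 0 ≤ a i)) ∧
        p = ∑ j, f j * r j}
      zero_mem' := ⟨fun _ => 0, fun _ => zero_mem _, by simp⟩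
      add_mem' := by
        rintro p q ⟨r, hr, rfl⟩ ⟨s, hs, rfl⟩
        exact ⟨fun j => r j + s j, fun j => add_mem (hr j) (hs j), by
          simp [mul_add, Finset.sum_add_distrib]⟩
      neg_mem' := by
        rintro p ⟨r, hr, rfl⟩
        exact ⟨fun j => - r j, fun j => neg_mem (hr j), by simp⟩ }
  change _ ∈ T
  apply D_mem
  intro j _
  refine ⟨Pi.single j (w (Function.update (fun _ => false) j true)), ?_, ?_⟩
  · intro i
    by_cases h : i = j
    · subst h
      rw [Pi.single_eq_same]
      exact S_mono (fun a h i => h i (Nat.zero_le _)) (hw _)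
    · rw [Pi.single_eq_of_ne h]; exact zero_mem _
  · rw [Finset.sum_eq_single j]
    · simp
    · intro b _ hb; simp [hb]
    · simp

end Core

/-- Weighted degree bound. -/
theorem deg_bound {N : ℕ} (α : Fin N → ℕ) (hα : ∀ i, 0 < α i) (d : ℕ)
    (g : MvPolynomial (Fin N) ℂ) (hgh : g.IsWeightedHomogeneous α d)
    (htame : ∀ x : Fin N → ℂ, (∀ i, eval x (pderiv i g) = 0) → x = 0)
    (β : Fin N →₀ ℕ)
    (hm : ∑ j, ((d : ℤ) - α j) - ∑ i, (α i : ℤ) < ∑ i, (α i : ℤ) * β i) :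
    monomial β (1 : ℂ) ∈ Ideal.span (Set.range fun i => pderiv i g) := by
  classical
  set I := Ideal.span (Set.range fun i => pderiv i g) with hI
  -- Nullstellensatz
  have hrad : ∀ i, ∃ K : ℕ, (MvPolynomial.X i : MvPolynomial (Fin N) ℂ) ^ K ∈ I := by
    intro i
    have : (MvPolynomial.X i : MvPolynomial (Fin N) ℂ) ∈ I.radical := by
      rw [← vanishingIdeal_zeroLocus_eq_radical (K := ℂ), mem_vanishingIdeal_iff]
      intro x hx
      have : x = 0 := by
        apply htame
        intro j
        have := hx (pderiv j g) (Ideal.subset_span ⟨j, rfl⟩)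
        simpa [aeval_eq_eval] using this
      subst this
      simp
    exact this
  choose K hK using hrad
  have hK' : ∀ i, ∃ b : Fin N → MvPolynomial (Fin N) ℂ,
      ∑ j, b j * pderiv j g = MvPolynomial.X i ^ K i := by
    intro i
    exact Ideal.mem_span_range_iff_exists_fun.1 (hK i)
  choose b hb using hK'
  have hfw : ∀ j, phi N (pderiv j g) ∈ S (fun a => ∑ k, (α k : ℤ) * a k = (d : ℤ) - α j) := by
    intro j
    rw [g.as_sum, map_sum, map_sum]
    refine sum_mem fun s hs => ?_
    have hw := hgh (by simpa using hs : g.coeff s ≠ 0)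
    rw [pderiv_monomial, phi_monomial]
    by_cases h0 : s j = 0
    · rw [h0]; simp
    · apply S_single
      rw [Finsupp.weight_apply, Finsupp.sum_fintype _ _ (by simp)] at hw
      rw [← hw]
      rw [Nat.cast_sum]
      have : ∀ k, (α k : ℤ) * (((s - Finsupp.single j 1 : Fin N →₀ ℕ) k : ℕ) : ℤ) =
          ((s k • α k : ℕ) : ℤ) - if k = j then (α j : ℤ) else 0 := by
        intro k
        by_cases hk : k = j
        · subst hk
          obtain ⟨t, ht⟩ := Nat.exists_eq_succ_of_ne_zero h0
          simp [ht]; ring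
        · simp [hk, Finsupp.single_apply, Ne.symm hk]; ring
      rw [Finset.sum_congr rfl (fun k _ => this k), Finset.sum_sub_distrib]
      simp
  have hnn : ∀ p : MvPolynomial (Fin N) ℂ, phi N p ∈ S (fun a => ∀ i, 0 ≤ a i) := by
    intro p
    apply phi_mem
    intro s _ i
    positivity
  -- homogeneous coefficients
  have hcs : ∀ i j, ∃ q, q ∈ S (fun a => (∀ k, 0 ≤ a k) ∧
        ∑ k, (α k : ℤ) * a k = α i * K i - (d - α j)) ∧
      phi N (b i j) - q ∈ S (fun a => ∑ k, (α k : ℤ) * a k ≠ α i * K i - (d - α j)) := by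
    intro i j
    refine S_split ?_ (hnn (b i j))
    intro a ha
    by_cases h : ∑ k, (α k : ℤ) * a k = α i * K i - (d - α j)
    · exact Or.inl ⟨ha, h⟩
    · exact Or.inr h
  choose q hq1 hq2 using hcs
  have hX : ∀ i, phi N (MvPolynomial.X i ^ K i) = AddMonoidAlgebra.single (Pi.single i (K i : ℤ)) 1 := by
    intro i
    rw [X_pow_eq_monomial, phi_monomial]
    congr 1
    funext k
    by_cases h : k = i
    · subst h; simp
    · simp [h, Finsupp.single_apply, Ne.symm h]
  have hwt : ∀ i (t : ℤ), ∑ k, (α k : ℤ) * (Pi.single i t : Fin N → ℤ) k = α i * t := by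
    intro i t
    rw [Finset.sum_eq_single i]
    · simp
    · intro k _ hk; simp [hk]
    · simp
  have hqf : ∀ i, ∑ j, q i j * phi N (pderiv j g) =
      AddMonoidAlgebra.single (Pi.single i (K i : ℤ)) 1 := by
    intro i
    rw [← sub_eq_zero]
    refine S_false (P := fun a => ∑ k, (α k : ℤ) * a k = α i * K i ∧
      ∑ k, (α k : ℤ) * a k ≠ α i * K i) (fun a h => h.2 h.1) (S_and ?_ ?_)
    · refine sub_mem (sum_mem fun j _ => S_mul ?_ (hq1 i j) (hfw j)) (S_single _ (hwt _ _))
      rintro x y ⟨_, hx⟩ hy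
      simp only [Pi.add_apply, mul_add, Finset.sum_add_distrib]
      rw [hx, hy]; ring
    · have : ∑ j, q i j * phi N (pderiv j g) - AddMonoidAlgebra.single (Pi.single i (K i : ℤ)) 1
        = - ∑ j, (phi N (b i j) - q i j) * phi N (pderiv j g) := by
        rw [← hX, ← hb, map_sum, ← Finset.sum_sub_distrib, ← Finset.sum_neg_distrib]
        refine Finset.sum_congr rfl fun j _ => ?_
        rw [map_mul]; ring
      rw [this]
      refine neg_mem (sum_mem fun j _ => S_mul ?_ (hq2 i j) (hfw j))
      intro x y hx hy
      simp only [Pi.add_apply, mul_add, Finset.sum_add_distrib]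
      rw [hy]
      intro h
      apply hx
      linarith
  obtain ⟨r, hr, hru⟩ := core (fun j => phi N (pderiv j g))
    (fun i j => AddMonoidAlgebra.single (Pi.single i (-(K i : ℤ))) 1 * q i j)
    (fun j => (d : ℤ) - α j) (fun i => (α i : ℤ)) (fun i => by exact_mod_cast hα i)
    (fun j => hnn _)
    (by
      intro i j
      refine S_mul (P := fun a => ∀ k, k ≠ i → 0 ≤ a k) ?_ (S_single _ ?_) (hq1 i j)
      · rintro x y hx ⟨hy, _⟩ k hk
        simpa using add_nonneg (hx k hk) (hy k)
      · intro k hk; simp [hk])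
    (by
      intro i j
      refine S_mul (P := fun a => ∑ k, (α k : ℤ) * a k = - (α i * K i)) ?_ (S_single _ ?_) (hq1 i j)
      · rintro x y hx ⟨_, hy⟩
        simp only [Pi.add_apply, mul_add, Finset.sum_add_distrib]
        rw [hx, hy]; ring
      · rw [hwt]; ring)
    (by
      intro i
      simp only [mul_assoc]
      rw [← Finset.mul_sum, hqf, AddMonoidAlgebra.single_mul_single, ← Pi.single_add]
      simp [AddMonoidAlgebra.one_def])
    (phi N (monomial β 1)) (hnn _) (∑ i, (α i : ℤ) * β i)
    (by rw [phi_monomial]; exact S_single _ rfl) hm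
  choose s hs using fun j => phi_surj (hr j)
  have : monomial β (1 : ℂ) = ∑ j, pderiv j g * s j := by
    apply phi_inj
    rw [hru, map_sum]
    refine Finset.sum_congr rfl fun j _ => ?_
    rw [map_mul, hs]
  rw [this]
  exact sum_mem fun j _ => Ideal.mul_mem_right _ _ (Ideal.subset_span ⟨j, rfl⟩)

end QH



/-- Let `g` be quasi-homogeneous of degree `d` for the weights `α`, with
the origin as its only singularity.  Every monomial `x^β` whose class in the Milnor
algebra `V_g` is nonzero (i.e. `x^β` is not in the Jacobian ideal of `g`) satisfies
`Σᵢ (βᵢ+1)αᵢ ≤ (n+1)·d - Σᵢ αᵢ`; in particular `A_β = Σᵢ (βᵢ+1)αᵢ/d` satisfies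
`0 < A_β < n + 1`. -/
theorem monomial_degree_bound_of_not_mem_jacobian
    (n : ℕ) (hn : 1 ≤ n) (α : Fin (n + 1) → ℕ)
    (hαpos : ∀ i, 0 < α i) (hα : Finset.univ.gcd α = 1)
    (d : ℕ)
    (g : MvPolynomial (Fin (n + 1)) ℂ)
    (hgh : g.IsWeightedHomogeneous α d)
    (hg0 : g ≠ 0)
    (htame : ∀ x : Fin (n + 1) → ℂ, (∀ i, eval x (pderiv i g) = 0) → x = 0)
    (β : Fin (n + 1) →₀ ℕ)
    (hβ : monomial β (1 : ℂ) ∉ Ideal.span (Set.range fun i => pderiv i g)) :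
    (∑ i, (β i + 1) * α i) + ∑ i, α i ≤ (n + 1) * d ∧
    0 < (∑ i, ((β i : ℚ) + 1) * (α i : ℚ)) / d ∧
    (∑ i, ((β i : ℚ) + 1) * (α i : ℚ)) / d < (n : ℚ) + 1 := by
  have h1 : (∑ i, (β i + 1) * α i) + ∑ i, α i ≤ (n + 1) * d := by
    by_contra hc
    apply hβ
    apply QH.deg_bound α hαpos d g hgh htame β
    push Not at hc
    zify at hc
    simp only [add_mul, one_mul, Finset.sum_add_distrib, Finset.sum_sub_distrib] at hc ⊢
    simp only [mul_comm, Finset.sum_const, Finset.card_univ, Fintype.card_fin, nsmul_eq_mul] at hc ⊢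
    push_cast
    linarith
  have hs : 0 < ∑ i, α i := Finset.sum_pos (fun i _ => hαpos i) Finset.univ_nonempty
  have hd : 0 < d := by
    rcases Nat.eq_zero_or_pos d with h | h
    · subst h; omega
    · exact h
  have hlt : (∑ i, (β i + 1) * α i) < (n + 1) * d := by omega
  have hle : ∑ i, α i ≤ ∑ i, (β i + 1) * α i :=
    Finset.sum_le_sum fun i _ => Nat.le_mul_of_pos_left _ (Nat.succ_pos _)
  have hcast : (∑ i, ((β i : ℚ) + 1) * (α i : ℚ)) = ((∑ i, (β i + 1) * α i : ℕ) : ℚ) := by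
    push_cast; rfl
  have hdq : (0 : ℚ) < d := by exact_mod_cast hd
  refine ⟨h1, ?_, ?_⟩
  · rw [hcast]
    exact div_pos (by exact_mod_cast lt_of_lt_of_le hs hle) hdq
  · rw [hcast, div_lt_iff₀ hdq]
    exact_mod_cast hlt
end

section
/- Let K := ℂ(t) be the field of rational functions, M a K-vector space, and ∇ : M → M an additive map satisfying the Leibniz rule ∇(p·m) = p·∇(m) + p′·m for every polynomial p ∈ ℂ[t] (viewed in K) and every m ∈ M, where p′ denotes the derivative of p. Fix a nonzero S ∈ ℂ[t] and for each integer k ≥ 0 define ∇_k : M → M by ∇_k(m) := S·∇(m) − k·S′·m. Then for every k ≥ 1 and every m ∈ M one has S^k·∇^k(m) = (∇_{k−1} ∘ ∇_{k−2} ∘ ⋯ ∘ ∇_0)(m), where ∇^k denotes the k-fold iterate of ∇. -/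
open Polynomial

/-- Let `K = ℂ(t)`, `M` a `K`-vector space and `∇ : M → M` an additive map
satisfying the Leibniz rule `∇(p·m) = p·∇(m) + p′·m` for polynomials `p ∈ ℂ[t]`.  Fix
`S ∈ ℂ[t]`, `S ≠ 0`, and set `∇_k(m) = S·∇(m) - k·S′·m`.  Then for every `k ≥ 1`,
`S^k·∇^k(m) = (∇_{k-1} ∘ ⋯ ∘ ∇_0)(m)`. -/
theorem iterated_gauss_manin_formula
    (M : Type*) [AddCommGroup M] [Module (RatFunc ℂ) M]
    (gm : M → M)
    (hadd : ∀ m m' : M, gm (m + m') = gm m + gm m')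
    (hleib : ∀ (p : Polynomial ℂ) (m : M),
      gm ((algebraMap (Polynomial ℂ) (RatFunc ℂ) p) • m) =
        (algebraMap (Polynomial ℂ) (RatFunc ℂ) p) • gm m +
        (algebraMap (Polynomial ℂ) (RatFunc ℂ) (derivative p)) • m)
    (S : Polynomial ℂ) (hS : S ≠ 0)
    (D : ℕ → M → M)
    (hD : ∀ (k : ℕ) (m : M), D k m =
      (algebraMap (Polynomial ℂ) (RatFunc ℂ) S) • gm m -
        (algebraMap (Polynomial ℂ) (RatFunc ℂ)
          ((k : Polynomial ℂ) * derivative S)) • m)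
    (Φ : ℕ → M → M)
    (hΦ0 : ∀ m, Φ 0 m = m)
    (hΦsucc : ∀ (k : ℕ) (m : M), Φ (k + 1) m = D k (Φ k m)) :
    ∀ k : ℕ, 1 ≤ k → ∀ m : M,
      (algebraMap (Polynomial ℂ) (RatFunc ℂ) (S ^ k)) • (gm^[k] m) = Φ k m := by
  have key : ∀ k : ℕ, ∀ m : M,
      (algebraMap (Polynomial ℂ) (RatFunc ℂ) (S ^ k)) • (gm^[k] m) = Φ k m := by
    intro k
    induction k with
    | zero => intro m; simp [hΦ0]
    | succ k ih =>
      intro m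
      have h : S * derivative (S ^ k) = (k : Polynomial ℂ) * derivative S * S ^ k := by
        cases k with
        | zero => simp
        | succ n =>
          rw [derivative_pow_succ]
          simp only [map_add, map_natCast, map_one]
          push_cast
          ring
      rw [hΦsucc, hD, ← ih m, hleib, smul_add, smul_smul, smul_smul, smul_smul,
        ← map_mul, ← map_mul, ← map_mul, h, add_sub_cancel_right, pow_succ',
        Function.iterate_succ_apply']
  exact fun k _ m => key k m
end
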